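/- arXiv:1308.2170 — 2 statements merged into one kernel-verified Lean document; each statement's English description precedes it below -/
import Mathlib

section
/- Let e ≥ 2, let r ≥ 1, let B be a base tuple and let M ∈ M̌(r,e). Then the multipartition Pt(B,M) is Kleshchev with respect to its multicharge if and only if Pt(0,M) is Kleshchev with respect to its multicharge, where 0 denotes the zero base tuple (0,…,0). -/
open scoped Classical

namespace AK
noncomputable section



/-! ### Matrices, order from base tuple, abacus β-sets -/

/-- The order ≺ on columns determined by a base tuple `B`. -/
def prec {e : ℕ} (B : Fin e → ℕ) (i j : Fin e) : Prop :=
  B i < B j ∨ (B i = B j ∧ i < j)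

/-- `rank B i = π(B)⁻¹(i)`, the number of columns ≺-smaller than `i`. -/
def rank {e : ℕ} (B : Fin e → ℕ) (i : Fin e) : Fin e :=
  ⟨(Finset.univ.filter (fun j => prec B j i)).card, by
    have h1 : (Finset.univ.filter (fun j => prec B j i)) ⊆ Finset.univ.erase i := by
      intro j hj
      rw [Finset.mem_filter] at hj
      refine Finset.mem_erase.mpr ⟨?_, Finset.mem_univ j⟩
      rintro rfl
      rcases hj.2 with h | ⟨-, h⟩ <;> exact lt_irrefl _ h
    have h2 := Finset.card_le_card h1
    have h3 : (Finset.univ.erase i).card < Finset.univ.card :=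
      Finset.card_erase_lt_of_mem (Finset.mem_univ i)
    simpa using lt_of_le_of_lt h2 h3⟩

/-- The number of beads on runner `i` of the abacus of component `s` of `Pt(B,M)`. -/
def beads {e r : ℕ} (B : Fin e → ℕ) (M : Fin r → Fin e → Bool) (s : Fin r) (i : Fin e) : ℕ :=
  B i + (if M s (rank B i) then 1 else 0)

/-- The canonical β-set of component `s` of `Pt(B,M)`. -/
def Tset {e r : ℕ} (B : Fin e → ℕ) (M : Fin r → Fin e → Bool) (s : Fin r) : Set ℤ :=
  {z | z < 0 ∨ (0 ≤ z ∧ ∃ h : z.toNat % e < e, z.toNat / e < beads B M s ⟨z.toNat % e, h⟩)}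

/-- `n_s`, the total number of beads of component `s`. -/
def nsum {e r : ℕ} (B : Fin e → ℕ) (M : Fin r → Fin e → Bool) (s : Fin r) : ℕ :=
  ∑ i : Fin e, beads B M s i

/-- Decreasing enumeration of a set of integers: `tEnum T x` is `t_{x+1}`. -/
noncomputable def tEnum (T : Set ℤ) : ℕ → ℤ
  | 0 => sSup T
  | (x + 1) => sSup (T ∩ Set.Iio (tEnum T x))

/-- The multipartition `Pt(B,M)`: component `s`, part `p+1` (0-indexed parts). -/
noncomputable def PtPart {e r : ℕ} (B : Fin e → ℕ) (M : Fin r → Fin e → Bool)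
    (s : Fin r) (p : ℕ) : ℕ :=
  (tEnum (Tset B M s) p + (p + 1) - (nsum B M s : ℤ)).toNat

/-- The multicharge of `Pt(B,M)`. -/
noncomputable def PtCharge {e r : ℕ} (B : Fin e → ℕ) (M : Fin r → Fin e → Bool)
    (s : Fin r) : ZMod e :=
  (nsum B M s : ZMod e)

/-! ### Nodes, good nodes and Kleshchev multipartitions -/

/-- A node `(s, x, y)` (all 0-indexed). -/
abbrev Node (r : ℕ) := Fin r × ℕ × ℕ

/-- `A` is above `B`. -/
def NodeAbove {r : ℕ} (A B : Node r) : Prop :=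
  A.1 < B.1 ∨ (A.1 = B.1 ∧ A.2.1 < B.2.1)

/-- The residue of a node. -/
def res {e r : ℕ} (a : Fin r → ZMod e) (A : Node r) : ZMod e :=
  a A.1 - (A.2.1 : ZMod e) + (A.2.2 : ZMod e)

/-- `A` is a removable node of `lam`. -/
def Removable {r : ℕ} (lam : Fin r → ℕ → ℕ) (A : Node r) : Prop :=
  A.2.2 + 1 = lam A.1 A.2.1 ∧ lam A.1 (A.2.1 + 1) < lam A.1 A.2.1

/-- `A` is an addable node of `lam`. -/
def Addable {r : ℕ} (lam : Fin r → ℕ → ℕ) (A : Node r) : Prop :=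
  A.2.2 = lam A.1 A.2.1 ∧ (A.2.1 = 0 ∨ lam A.1 A.2.1 < lam A.1 (A.2.1 - 1))

/-- `A` is a normal node of `lam`. -/
def Normal {e r : ℕ} (a : Fin r → ZMod e) (lam : Fin r → ℕ → ℕ) (A : Node r) : Prop :=
  Removable lam A ∧
    ∀ B : Node r, Addable lam B → res a B = res a A → NodeAbove A B →
      Set.ncard {C : Node r | Addable lam C ∧ res a C = res a A ∧ NodeAbove A C ∧ NodeAbove C B}
        < Set.ncard {C : Node r | Removable lam C ∧ res a C = res a A ∧ NodeAbove A C ∧ NodeAbove C B}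

/-- `A` is a good node of `lam`: normal, and highest among normal nodes of its residue. -/
def Good {e r : ℕ} (a : Fin r → ZMod e) (lam : Fin r → ℕ → ℕ) (A : Node r) : Prop :=
  Normal a lam A ∧ ∀ B : Node r, Normal a lam B → res a B = res a A → B ≠ A → NodeAbove A B

/-- Remove the node `A` from `lam`. -/
def removeNode {r : ℕ} (lam : Fin r → ℕ → ℕ) (A : Node r) : Fin r → ℕ → ℕ :=
  fun s x => if s = A.1 ∧ x = A.2.1 then lam s x - 1 else lam s x

/-- Kleshchev multipartitions (for the multicharge `a`). -/
inductive IsKleshchev {e r : ℕ} (a : Fin r → ZMod e) : (Fin r → ℕ → ℕ) → Prop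
  | empty : IsKleshchev a (fun _ _ => 0)
  | step (lam : Fin r → ℕ → ℕ) (A : Node r) (hA : Good a lam A)
      (h : IsKleshchev a (removeNode lam A)) : IsKleshchev a lam

/-! ### Weights and bead swaps -/

/-- `δ₊^M(t,s)`. -/
def deltaP {e r : ℕ} (M : Fin r → Fin e → Bool) (t s : Fin r) : ℕ :=
  (Finset.univ.filter (fun i => M t i = true ∧ M s i = false)).card

/-- `wt^M(t,s)`. -/
def wtPair {e r : ℕ} (M : Fin r → Fin e → Bool) (t s : Fin r) : ℕ :=
  min (deltaP M t s) (deltaP M s t)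

/-- `wt(M)`. -/
def wtM {e r : ℕ} (M : Fin r → Fin e → Bool) : ℕ :=
  ∑ t : Fin r, ∑ s ∈ Finset.univ.filter (· < t), wtPair M t s

/-- `M'` is obtained from `M` by a bead swap. -/
def BeadSwap {e r : ℕ} (M M' : Fin r → Fin e → Bool) : Prop :=
  ∃ i j : Fin e, i ≠ j ∧ ∃ s t : Fin r, s ≠ t ∧
    M s i = true ∧ M t j = true ∧ M s j = false ∧ M t i = false ∧
    M' s i = false ∧ M' t j = false ∧ M' s j = true ∧ M' t i = true ∧
    (∀ s' i', (s' ≠ s ∧ s' ≠ t) ∨ (i' ≠ i ∧ i' ≠ j) → M' s' i' = M s' i')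

/-!
Record a multipartition by the word of the residues at the ends of its rows. In the `c`-signature a
letter `c` counts as removable and a letter `c - 1` as addable: where a row is not removable, its
letter cancels against that of the next row, which has the same length and is not addable. The good
`c`-node is therefore the letter at the last minimum of the partial sums of the `c`-signature.
Lowering that letter is a crystal operator on words, and for modulus at least `3` two such operators
satisfy Stembridge's local relations. Replacing every letter `x` by the two letters `x`, `x + e`
doubles the modulus, so `e = 2` is covered as well. Hence paths of good nodes are confluent: whether
a multipartition is Kleshchev can be tested after removing any good node.

On an abacus where no bead can move from runner `j - 1` to runner `j`, there are no addable
`j`-nodes, so the removable `j`-nodes are good when removed one after another from the top. Removing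
them all exchanges the two runners and thus does not affect whether the multipartition is Kleshchev.
Such exchanges decrease the sum of the squares of the first empty positions of the runners, and they
lead to positions forming an interval of `e` consecutive integers. The resulting abacus depends only
on `M`, up to a translation, which adds a constant to the multicharge.
-/

/-! ### Last minima of integer sequences -/

/-- `k` is the last position at which `f` attains its minimum. -/
structure IsLastMin (f : ℕ → ℤ) (k : ℕ) : Prop where
  le : ∀ m, f k ≤ f m
  lt : ∀ m, k < m → f k < f m

/-- The sequence that jumps from `0` to `1` just after position `p`. -/
def stepAt (p : ℕ) : ℕ → ℤ := fun m => if p < m then 1 else 0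

section LastMin

variable {f g : ℕ → ℤ} {k p q p' u : ℕ}

lemma IsLastMin.unique (hp : IsLastMin f p) (hq : IsLastMin f q) : p = q := by
  rcases lt_trichotomy p q with h | h | h
  · exact absurd (hp.lt q h) (hq.le p).not_gt
  · exact h
  · exact absurd (hq.lt p h) (hp.le q).not_gt

lemma IsLastMin.congr (hf : IsLastMin f k) (h : ∀ m, g m = f m) : IsLastMin g k :=
  funext h ▸ hf

lemma exists_isLastMin (h : ∀ m, p < m → f p < f m) : ∃ k, IsLastMin f k := by
  obtain ⟨a, -, ha⟩ := (Finset.range (p + 1)).exists_min_image f ⟨0, by simp⟩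
  have hmin (m : ℕ) : f a ≤ f m := by
    by_cases hm : p < m
    · exact (ha p (by simp)).trans (h m hm).le
    · exact ha m (by simp; omega)
  obtain ⟨k, hk, hgreatest⟩ := BddAbove.exists_isGreatest_of_nonempty (S := {m | f m = f a})
    ⟨p, fun m (hm : f m = f a) => not_lt.1 fun hpm => by linarith [h m hpm, hmin p]⟩ ⟨a, rfl⟩
  change f k = f a at hk
  exact ⟨k, fun m => hk ▸ hmin m, fun m hm => lt_of_le_of_ne (hk ▸ hmin m) fun he =>
    hm.not_ge (hgreatest (he.symm.trans hk))⟩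

lemma IsLastMin.add_stepAt (hf : IsLastMin f p) (hpq : p ≤ q) :
    IsLastMin (fun m => f m + stepAt q m) p := by
  constructor <;> intro m <;> have := hf.le m <;> have := hf.lt m <;> grind [stepAt]

lemma IsLastMin.add_stepAt_of_ne (hg : IsLastMin g q) (hpq : p < q)
    (hne : ∀ m ≤ p, g m ≠ g q) : IsLastMin (fun m => g m + stepAt p m) q := by
  constructor <;> intro m <;> have := hg.le m <;> have := hg.lt m <;> grind [stepAt]

lemma IsLastMin.add_stepAt_of_eq (hg : IsLastMin g q) (hp' : p' ≤ p) (hgp' : g p' = g q)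
    (hg' : ∀ m ≤ p, p' < m → g m ≠ g q) : IsLastMin (fun m => g m + stepAt p m) p' := by
  constructor <;> intro m <;> have := hg.le m <;> have := hg.lt m <;> grind [stepAt]

lemma IsLastMin.add_stepAt_sub (hg : IsLastMin g q) (hpq : p < q) (hp' : p' ≤ p)
    (hg' : ∀ m ≤ p, p' < m → g m ≠ g q) :
    IsLastMin (fun m => g m + stepAt p m - 2 * stepAt p' m) q := by
  constructor <;> intro m <;> have := hg.le m <;> have := hg.lt m <;> grind [stepAt]

lemma IsLastMin.sub_add_add_of_eq (hg : IsLastMin g q) (hp' : p' ≤ p) (hgp' : g p' = g q)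
    (hg' : ∀ m ≤ p, p' < m → g m ≠ g q) (hpu : p < u) (huq : u ≤ q) :
    IsLastMin (fun m => g m - 2 * stepAt q m + stepAt p m + stepAt u m) p' := by
  constructor <;> intro m <;> have := hg.le m <;> have := hg.lt m <;> grind [stepAt]

lemma IsLastMin.sub_add_add (hf : IsLastMin f p) (hp' : p' ≤ p) (hpu : p < u) (huq : u ≤ q)
    (hfu : f u = f p + 1) (hf' : ∀ m ≤ q, u < m → f m ≠ f p + 1) :
    IsLastMin (fun m => f m - 2 * stepAt p m + stepAt p' m + stepAt q m) u := by
  constructor <;> intro m <;> have := hf.le m <;> have := hf.lt m <;> grind [stepAt]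

lemma IsLastMin.sub_add (hf : IsLastMin f p) (hpu : p < u) (huq : u ≤ q)
    (hfu : f u = f p + 1) (hf' : ∀ m ≤ q, u < m → f m ≠ f p + 1) :
    IsLastMin (fun m => f m + stepAt q m - 2 * stepAt p m) u := by
  constructor <;> intro m <;> have := hf.le m <;> have := hf.lt m <;> grind [stepAt]

variable {F : ℕ → ℤ}

lemma IsLastMin.of_interpolation (heven : ∀ l, F (2 * l) = f l)
    (hodd : ∀ l, F (2 * l + 1) = f l ∨ F (2 * l + 1) = f (l + 1)) (hF : IsLastMin F k) :
    IsLastMin f (k / 2) := by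
  have hval : f (k / 2) = F k := by
    rcases Nat.even_or_odd' k with ⟨l, rfl | rfl⟩
    · rw [heven, Nat.mul_div_cancel_left l two_pos]
    · have hlt := hF.lt (2 * (l + 1)) (by omega)
      rw [heven] at hlt
      rw [show (2 * l + 1) / 2 = l by omega]
      exact ((hodd l).resolve_right hlt.ne).symm
  constructor
  · exact fun m => by simpa only [hval, heven] using hF.le (2 * m)
  · exact fun m hm => by simpa only [hval, heven] using hF.lt (2 * m) (by omega)

lemma IsLastMin.two_mul (heven : ∀ l, F (2 * l) = f l)
    (hodd : ∀ l, F (2 * l + 1) = f l ∨ F (2 * l + 1) = f (l + 1)) (hf : IsLastMin f k)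
    (hk : F (2 * k + 1) ≠ f k) : IsLastMin F (2 * k) := by
  constructor <;> intro m <;> rcases Nat.even_or_odd' m with ⟨l, rfl | rfl⟩ <;>
    have := hf.le l <;> have := hf.le (l + 1) <;> have := hf.lt l <;> have := hf.lt (l + 1) <;>
    have := heven l <;> have := hodd l <;> have := heven k <;>
    rcases eq_or_ne l k with rfl | hl <;> omega

lemma IsLastMin.two_mul_add_one (heven : ∀ l, F (2 * l) = f l)
    (hodd : ∀ l, F (2 * l + 1) = f l ∨ F (2 * l + 1) = f (l + 1)) (hf : IsLastMin f k)
    (hk : F (2 * k + 1) = f k) : IsLastMin F (2 * k + 1) := by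
  constructor <;> intro m <;> rcases Nat.even_or_odd' m with ⟨l, rfl | rfl⟩ <;>
    have := hf.le l <;> have := hf.le (l + 1) <;> have := hf.lt l <;> have := hf.lt (l + 1) <;>
    have := heven l <;> have := hodd l <;> have := heven k <;>
    rcases eq_or_ne l k with rfl | hl <;> omega

end LastMin

/-! ### Confluence -/

/-- `ReachesIn r m x y`: there is an `r`-path of length `m` from `x` to `y`. -/
inductive ReachesIn {α : Type*} (r : α → α → Prop) : ℕ → α → α → Prop
  | refl (x : α) : ReachesIn r 0 x x
  | head {m : ℕ} {x y z : α} : r x y → ReachesIn r m y z → ReachesIn r (m + 1) x z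

section ReachesIn

variable {α : Type*} {r : α → α → Prop} {k m : ℕ} {v w w' x y z : α}

lemma ReachesIn.trans (h : ReachesIn r k x y) (h' : ReachesIn r m y z) :
    ReachesIn r (k + m) x z := by
  induction h with
  | refl => simpa using h'
  | @head k _ _ _ hs _ ih => simpa [Nat.add_right_comm k 1 m] using (ih h').head hs

lemma ReachesIn.eq_of_zero (h : ReachesIn r 0 x y) : x = y := by
  cases h
  rfl

lemma ReachesIn.single (h : r x y) : ReachesIn r 1 x y := .head h (.refl y)

theorem ReachesIn.of_step
    (hjoin : ∀ w x y, r w x → r w y → ∃ k z, ReachesIn r k x z ∧ ReachesIn r k y z)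
    (hv : ∀ u, ¬ r v u) (hw : ReachesIn r m w v) (hs : r w w') :
    ∃ l, m = l + 1 ∧ ReachesIn r l w' v := by
  induction m using Nat.strong_induction_on generalizing w w' with
  | _ m ih =>
    have ih_path : ∀ {k j x z}, j < m → ReachesIn r j x v → ReachesIn r k x z →
        ∃ l, j = k + l ∧ ReachesIn r l z v := by
      intro k j x z hj hx hxz
      induction hxz generalizing j with
      | refl => exact ⟨j, by omega, hx⟩
      | head hs _ ih' =>
        obtain ⟨i, rfl, hi⟩ := ih j hj hx hs
        obtain ⟨l, rfl, hl⟩ := ih' (by omega) hi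
        exact ⟨l, by omega, hl⟩
    cases hw with
    | refl => exact absurd hs (hv w')
    | @head j _ u _ hwu hu =>
      obtain ⟨k, z, huz, hwz⟩ := hjoin w u w' hwu hs
      obtain ⟨l, rfl, hl⟩ := ih_path (Nat.lt_succ_self j) hu huz
      exact ⟨k + l, rfl, hwz.trans hl⟩

end ReachesIn

/-! ### Words -/

/-- The positions of a word at which the letter may act as removable, respectively addable, in the
signature rule. -/
structure WordShape where
  removable : ℕ → Prop
  addable : ℕ → Prop
  addable_of_removable : ∀ k, removable k → addable k

/-- The contribution of the letter at position `k` to the `c`-signature of the word `w`. -/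
def signature {n : ℕ} (S : WordShape) (c : ZMod n) (w : ℕ → ℤ) (k : ℕ) : ℤ :=
  (if S.removable k ∧ (w k : ZMod n) = c then 1 else 0) -
    (if S.addable k ∧ (w k : ZMod n) + 1 = c then 1 else 0)

/-- Partial sums of the signature. -/
def height {n : ℕ} (S : WordShape) (c : ZMod n) (w : ℕ → ℤ) (k : ℕ) : ℤ :=
  ∑ m ∈ Finset.range k, signature S c w m

/-- The Cartan matrix of type `A^{(1)}_{n-1}`. -/
def cartan {n : ℕ} (c d : ZMod n) : ℤ :=
  2 * (if c = d then 1 else 0) - (if c = d + 1 then 1 else 0) - (if d = c + 1 then 1 else 0)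

/-- Decrease the letter at position `k` by one. -/
def lower (w : ℕ → ℤ) (k : ℕ) : ℕ → ℤ := w - Pi.single k 1

/-- A crystal operator: lower the letter at the last minimum of some height function. -/
def CrystalStep (n : ℕ) (S : WordShape) (w w' : ℕ → ℤ) : Prop :=
  ∃ (c : ZMod n) (k : ℕ), IsLastMin (height S c w) k ∧ w' = lower w k

lemma cartan_comm {n : ℕ} (c d : ZMod n) : cartan c d = cartan d c := by
  simp only [cartan, eq_comm (a := c) (b := d)]
  ring

lemma intCast_zmod_ne_zero {n : ℕ} {x : ℤ} (h0 : 0 < x) (hn : x < n) : (x : ZMod n) ≠ 0 :=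
  fun h => hn.not_ge (Int.le_of_dvd h0 ((ZMod.intCast_zmod_eq_zero_iff_dvd x n).1 h))

lemma cartan_self {n : ℕ} (c : ZMod n) (hn : 3 ≤ n) : cartan c c = 2 := by
  have h1 : (1 : ZMod n) ≠ 0 := by
    simpa using intCast_zmod_ne_zero (n := n) (x := 1) (by omega) (by omega)
  simp [cartan, h1]

lemma cartan_of_ne {n : ℕ} {c d : ZMod n} (hn : 3 ≤ n) (h : c ≠ d) :
    cartan c d = 0 ∨ cartan c d = -1 := by
  have h2 : (2 : ZMod n) ≠ 0 := by
    simpa using intCast_zmod_ne_zero (n := n) (x := 2) (by omega) (by omega)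
  by_cases h1 : c = d + 1
  · have h3 : d ≠ c + 1 := fun h3 => h2 (by linear_combination -h1 - h3)
    exact .inr (by rw [cartan, if_neg h, if_pos h1, if_neg h3]; norm_num)
  · rw [cartan, if_neg h, if_neg h1]
    split_ifs <;> simp

section Words

variable {n : ℕ} {S : WordShape} {c : ZMod n} {w : ℕ → ℤ} {k p : ℕ}

lemma lower_apply (w : ℕ → ℤ) (k m : ℕ) : lower w k m = w m - if m = k then 1 else 0 := by
  simp [lower, Pi.single_apply]

lemma lower_comm (w : ℕ → ℤ) (p q : ℕ) : lower (lower w p) q = lower (lower w q) p := by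
  unfold lower
  abel

lemma height_zero (S : WordShape) (c : ZMod n) (w : ℕ → ℤ) : height S c w 0 = 0 := by
  simp [height]

lemma height_succ (S : WordShape) (c : ZMod n) (w : ℕ → ℤ) (k : ℕ) :
    height S c w (k + 1) = height S c w k + signature S c w k :=
  Finset.sum_range_succ _ _

lemma removable_of_isLastMin (h : IsLastMin (height S c w) k) :
    S.removable k ∧ (w k : ZMod n) = c := by
  have hlt := h.lt (k + 1) k.lt_succ_self
  rw [height_succ, signature] at hlt
  split_ifs at hlt with h1 <;> first | exact h1 | omega

lemma height_succ_of_isLastMin (h : IsLastMin (height S c w) k) :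
    height S c w (k + 1) = height S c w k + 1 := by
  have hlt := h.lt (k + 1) k.lt_succ_self
  rw [height_succ, signature] at hlt ⊢
  split_ifs at hlt ⊢ <;> omega

lemma signature_lower (hr : S.removable p) (d : ZMod n) (m : ℕ) :
    signature S d (lower w p) m =
      signature S d w m - if m = p then cartan (w p : ZMod n) d else 0 := by
  by_cases hm : m = p
  · subst hm
    have hsub : (w m : ZMod n) - 1 = d ↔ (w m : ZMod n) = d + 1 := sub_eq_iff_eq_add
    simp only [signature, lower_apply, hr, S.addable_of_removable m hr, true_and, if_true,
      Int.cast_sub, Int.cast_one, sub_add_cancel, hsub, cartan, eq_comm (a := d)]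
    ring
  · simp [signature, lower_apply, hm]

lemma height_lower (hp : IsLastMin (height S c w) p) (d : ZMod n) :
    height S d (lower w p) = fun m => height S d w m - cartan c d * stepAt p m := by
  obtain ⟨hr, hc⟩ := removable_of_isLastMin hp
  funext m
  induction m with
  | zero => simp [height_zero, stepAt]
  | succ m ih =>
    rw [height_succ, height_succ, ih, signature_lower hr, hc]
    grind [stepAt]

end Words

section Confluence

variable {n : ℕ} {S : WordShape} {c d : ZMod n} {w x y : ℕ → ℤ} {p q : ℕ}

lemma CrystalStep.of_isLastMin (hp : IsLastMin (height S c w) p) :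
    CrystalStep n S w (lower w p) :=
  ⟨c, p, hp, rfl⟩

lemma exists_reachesIn_of_cartan_eq_zero (hcd : cartan c d = 0)
    (hp : IsLastMin (height S c w) p) (hq : IsLastMin (height S d w) q) :
    ∃ k z, ReachesIn (CrystalStep n S) k (lower w p) z ∧
      ReachesIn (CrystalStep n S) k (lower w q) z := by
  have x₁ : IsLastMin (height S d (lower w p)) q :=
    hq.congr fun m => by simp [height_lower hp, hcd]
  have y₁ : IsLastMin (height S c (lower w q)) p :=
    hp.congr fun m => by simp [height_lower hq, cartan_comm d c, hcd]
  exact ⟨1, _, .single (.of_isLastMin x₁), lower_comm w q p ▸ .single (.of_isLastMin y₁)⟩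

-- The two sides of Stembridge's degree four relation are `e_c e_d e_d e_c` and `e_d e_c e_c e_d`.
lemma exists_reachesIn_of_exists_height_eq (hn : 3 ≤ n) (hcd : cartan c d = -1)
    (hp : IsLastMin (height S c w) p) (hq : IsLastMin (height S d w) q) (hpq : p < q)
    (hex : ∃ m ≤ p, height S d w m = height S d w q) :
    ∃ k z, ReachesIn (CrystalStep n S) k (lower w p) z ∧
      ReachesIn (CrystalStep n S) k (lower w q) z := by
  obtain ⟨p', ⟨hp', hgp'⟩, hmax'⟩ := BddAbove.exists_isGreatest_of_nonempty
    (S := {m | m ≤ p ∧ height S d w m = height S d w q}) ⟨p, fun m hm => hm.1⟩ hex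
  obtain ⟨u, ⟨hpu, huq, hfu⟩, hmax⟩ := BddAbove.exists_isGreatest_of_nonempty
    (S := {m | p < m ∧ m ≤ q ∧ height S c w m = height S c w p + 1}) ⟨q, fun m hm => hm.2.1⟩
    ⟨p + 1, p.lt_succ_self, hpq, height_succ_of_isLastMin hp⟩
  have hg' (m) (hm : m ≤ p) (hlt : p' < m) : height S d w m ≠ height S d w q :=
    fun h => hlt.not_ge (hmax' ⟨hm, h⟩)
  have hf' (m) (hm : m ≤ q) (hlt : u < m) : height S c w m ≠ height S c w p + 1 :=
    fun h => hlt.not_ge (hmax ⟨hpu.trans hlt, hm, h⟩)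
  have hdc : cartan d c = -1 := cartan_comm d c ▸ hcd
  have hcc := cartan_self c hn
  have hdd := cartan_self d hn
  have x₁ : IsLastMin (height S d (lower w p)) p' :=
    (hq.add_stepAt_of_eq hp' hgp' hg').congr fun m => by
      simp only [height_lower hp, hcd]; ring
  have x₂ : IsLastMin (height S d (lower (lower w p) p')) q :=
    (hq.add_stepAt_sub hpq hp' hg').congr fun m => by
      simp only [height_lower x₁, height_lower hp, hcd, hdd]; ring
  have x₃ : IsLastMin (height S c (lower (lower (lower w p) p') q)) u :=
    (hp.sub_add_add hp' hpu huq hfu hf').congr fun m => by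
      simp only [height_lower x₂, height_lower x₁, height_lower hp, hcc, hdc]; ring
  have y₁ : IsLastMin (height S c (lower w q)) p :=
    (hp.add_stepAt hpq.le).congr fun m => by
      simp only [height_lower hq, hdc]; ring
  have y₂ : IsLastMin (height S c (lower (lower w q) p)) u :=
    (hp.sub_add hpu huq hfu hf').congr fun m => by
      simp only [height_lower y₁, height_lower hq, hcc, hdc]; ring
  have y₃ : IsLastMin (height S d (lower (lower (lower w q) p) u)) p' :=
    (hq.sub_add_add_of_eq hp' hgp' hg' hpu huq).congr fun m => by
      simp only [height_lower y₂, height_lower y₁, height_lower hq, hcd, hdd]; ring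
  have hend : lower (lower (lower (lower w q) p) u) p' =
      lower (lower (lower (lower w p) p') q) u := by
    unfold lower
    abel
  exact ⟨3, _, .head (.of_isLastMin x₁) (.head (.of_isLastMin x₂) (.single (.of_isLastMin x₃))),
    hend ▸ .head (.of_isLastMin y₁) (.head (.of_isLastMin y₂) (.single (.of_isLastMin y₃)))⟩

lemma exists_reachesIn_of_cartan_eq_neg_one (hn : 3 ≤ n) (hcd : cartan c d = -1)
    (hp : IsLastMin (height S c w) p) (hq : IsLastMin (height S d w) q) (hpq : p < q) :
    ∃ k z, ReachesIn (CrystalStep n S) k (lower w p) z ∧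
      ReachesIn (CrystalStep n S) k (lower w q) z := by
  by_cases hex : ∃ m ≤ p, height S d w m = height S d w q
  · exact exists_reachesIn_of_exists_height_eq hn hcd hp hq hpq hex
  · push Not at hex
    have x₁ : IsLastMin (height S d (lower w p)) q :=
      (hq.add_stepAt_of_ne hpq hex).congr fun m => by simp only [height_lower hp, hcd]; ring
    have y₁ : IsLastMin (height S c (lower w q)) p :=
      (hp.add_stepAt hpq.le).congr fun m => by
        simp only [height_lower hq, cartan_comm d c, hcd]; ring
    exact ⟨1, _, .single (.of_isLastMin x₁), lower_comm w q p ▸ .single (.of_isLastMin y₁)⟩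

theorem CrystalStep.exists_reachesIn (hn : 3 ≤ n) (hx : CrystalStep n S w x)
    (hy : CrystalStep n S w y) :
    ∃ k z, ReachesIn (CrystalStep n S) k x z ∧ ReachesIn (CrystalStep n S) k y z := by
  obtain ⟨c, p, hp, rfl⟩ := hx
  obtain ⟨d, q, hq, rfl⟩ := hy
  rcases eq_or_ne c d with rfl | hcd
  · exact ⟨0, _, .refl _, hp.unique hq ▸ .refl _⟩
  rcases cartan_of_ne hn hcd with h | h
  · exact exists_reachesIn_of_cartan_eq_zero h hp hq
  rcases lt_trichotomy p q with hpq | rfl | hpq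
  · exact exists_reachesIn_of_cartan_eq_neg_one hn h hp hq hpq
  · exact ⟨0, _, .refl _, .refl _⟩
  · obtain ⟨k, z, hy, hx⟩ :=
      exists_reachesIn_of_cartan_eq_neg_one hn (cartan_comm c d ▸ h) hq hp hpq
    exact ⟨k, z, hx, hy⟩

end Confluence

/-! ### Doubling the modulus -/

/-- The shape in which every position of `S` is replaced by two consecutive positions. -/
def WordShape.double (S : WordShape) : WordShape where
  removable k := S.removable (k / 2)
  addable k := S.addable (k / 2)
  addable_of_removable k := S.addable_of_removable (k / 2)

/-- The word in which every letter `x` of `w` is replaced by the two letters `x`, `x + e`; modulo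
`2 * e` these are the two lifts of the residue of `x` modulo `e`. -/
def doubleWord (e : ℕ) (w : ℕ → ℤ) (k : ℕ) : ℤ := w (k / 2) + if k % 2 = 1 then (e : ℤ) else 0

/-- The reduction of residues modulo `2 * e` to residues modulo `e`. -/
def halveModulus (e : ℕ) : ZMod (2 * e) →+* ZMod e := ZMod.castHom (Dvd.intro_left 2 rfl) (ZMod e)

section Doubling

variable {e : ℕ} {S : WordShape} {w : ℕ → ℤ} {k : ℕ}

lemma doubleWord_two_mul (e : ℕ) (w : ℕ → ℤ) (k : ℕ) : doubleWord e w (2 * k) = w k := by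
  simp [doubleWord]

lemma doubleWord_two_mul_add_one (e : ℕ) (w : ℕ → ℤ) (k : ℕ) :
    doubleWord e w (2 * k + 1) = w k + e := by
  simp [doubleWord, Nat.add_mod, show (2 * k + 1) / 2 = k by omega]

lemma doubleWord_lower (e : ℕ) (w : ℕ → ℤ) (k : ℕ) :
    doubleWord e (lower w k) = lower (lower (doubleWord e w) (2 * k)) (2 * k + 1) := by
  funext m
  rcases Nat.even_or_odd' m with ⟨l, rfl | rfl⟩ <;>
    simp only [doubleWord_two_mul, doubleWord_two_mul_add_one, lower_apply] <;>
    split_ifs <;> omega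

lemma intCast_eq_halveModulus_iff (x : ℤ) (C : ZMod (2 * e)) :
    (x : ZMod e) = halveModulus e C ↔ (x : ZMod (2 * e)) = C ∨ (x : ZMod (2 * e)) + e = C := by
  obtain ⟨y, rfl⟩ := ZMod.intCast_surjective C
  have hcast : (x : ZMod (2 * e)) + e = ((x + e : ℤ) : ZMod (2 * e)) := by push_cast; rfl
  rw [map_intCast, hcast]
  simp only [ZMod.intCast_eq_intCast_iff_dvd_sub, Nat.cast_mul, Nat.cast_ofNat]
  constructor
  · rintro ⟨t, ht⟩
    rcases Int.even_or_odd' t with ⟨u, rfl | rfl⟩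
    · exact .inl ⟨u, by linarith⟩
    · exact .inr ⟨u, by linarith⟩
  · rintro (⟨t, ht⟩ | ⟨t, ht⟩)
    · exact ⟨2 * t, by linarith⟩
    · exact ⟨2 * t + 1, by linarith⟩

lemma natCast_self_ne (he : 2 ≤ e) : (e : ZMod (2 * e)) ≠ 0 ∧ (e : ZMod (2 * e)) ≠ 1 ∧
    (e : ZMod (2 * e)) + 1 ≠ 0 := by
  have h0 := intCast_zmod_ne_zero (n := 2 * e) (x := e) (by omega) (by omega)
  have h1 := intCast_zmod_ne_zero (n := 2 * e) (x := e - 1) (by omega) (by omega)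
  have h2 := intCast_zmod_ne_zero (n := 2 * e) (x := e + 1) (by omega) (by omega)
  push_cast at h0 h1 h2
  exact ⟨h0, sub_ne_zero.1 h1, h2⟩

lemma signature_double_add (he : 2 ≤ e) (S : WordShape) (w : ℕ → ℤ) (C : ZMod (2 * e)) (k : ℕ) :
    signature S.double C (doubleWord e w) (2 * k) +
      signature S.double C (doubleWord e w) (2 * k + 1) = signature S (halveModulus e C) w k ∧
    (signature S.double C (doubleWord e w) (2 * k) = 0 ∨
      signature S.double C (doubleWord e w) (2 * k + 1) = 0) := by
  obtain ⟨h0, h1, h2⟩ := natCast_self_ne he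
  have hremovable := intCast_eq_halveModulus_iff (w k) C
  have haddable := intCast_eq_halveModulus_iff (w k + 1) C
  have hdiv : (2 * k + 1) / 2 = k := by omega
  push_cast at haddable
  simp only [signature, WordShape.double, doubleWord_two_mul, doubleWord_two_mul_add_one, hdiv,
    Nat.mul_div_cancel_left k two_pos, hremovable, haddable, Int.cast_add, Int.cast_natCast]
  generalize (w k : ZMod (2 * e)) = a at *
  have hne_lift : a = C → a + e + 1 ≠ C := fun h h' => h2 (by linear_combination h' - h)
  have hne_shift : a + 1 = C → a + e ≠ C := fun h h' => h1 (by linear_combination h' - h)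
  have hne_lift_shift : a + 1 = C → a + e + 1 ≠ C := fun h h' => h0 (by linear_combination h' - h)
  rw [add_right_comm a 1]
  split_ifs <;> simp_all

lemma height_double_two_mul (he : 2 ≤ e) (S : WordShape) (w : ℕ → ℤ) (C : ZMod (2 * e)) (k : ℕ) :
    height S.double C (doubleWord e w) (2 * k) = height S (halveModulus e C) w k := by
  induction k with
  | zero => simp [height_zero]
  | succ k ih =>
    rw [height_succ, ← (signature_double_add he S w C k).1, ← ih, mul_add, height_succ,
      height_succ, add_assoc]

lemma height_double_two_mul_add_one (he : 2 ≤ e) (S : WordShape) (w : ℕ → ℤ) (C : ZMod (2 * e))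
    (k : ℕ) :
    height S.double C (doubleWord e w) (2 * k + 1) = height S (halveModulus e C) w k ∨
      height S.double C (doubleWord e w) (2 * k + 1) =
        height S (halveModulus e C) w (k + 1) := by
  obtain ⟨hsum, h | h⟩ := signature_double_add he S w C k <;>
    rw [height_succ, height_succ, height_double_two_mul he, ← hsum, h] <;> simp

lemma isLastMin_of_double (he : 2 ≤ e) {C : ZMod (2 * e)}
    (h : IsLastMin (height S.double C (doubleWord e w)) k) :
    IsLastMin (height S (halveModulus e C) w) (k / 2) :=
  h.of_interpolation (height_double_two_mul he S w C) (height_double_two_mul_add_one he S w C)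

lemma reachesIn_doubleWord_lower (he : 2 ≤ e) {c : ZMod e} (h : IsLastMin (height S c w) k) :
    ReachesIn (CrystalStep (2 * e) S.double) 2 (doubleWord e w) (doubleWord e (lower w k)) := by
  obtain ⟨h0, h1, h2⟩ := natCast_self_ne he
  have := nontrivial_of_ne _ _ h0
  obtain ⟨hr, hc⟩ := removable_of_isLastMin h
  set a : ZMod (2 * e) := (w k : ZMod (2 * e)) with ha
  set b : ZMod (2 * e) := a + (e : ZMod (2 * e)) with hb
  have hhalf : halveModulus e a = c := by rw [ha, map_intCast, hc]
  have hhalf' : halveModulus e b = c := by simp [hb, hhalf]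
  have hdr : S.double.removable (2 * k) := by simpa [WordShape.double] using hr
  have hsig : signature S.double a (doubleWord e w) (2 * k) ≠ 0 := by
    simp [signature, hdr, doubleWord_two_mul, ← ha]
  have hsig' : signature S.double b (doubleWord e w) (2 * k) = 0 := by
    simp [signature, doubleWord_two_mul, ← ha, hb, h0, h1.symm]
  have x₁ : IsLastMin (height S.double a (doubleWord e w)) (2 * k) := by
    have hE := height_double_two_mul he S w a
    have hO := height_double_two_mul_add_one he S w a
    rw [hhalf] at hE hO
    exact h.two_mul hE hO (by rw [height_succ, hE]; simpa using hsig)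
  have x₂ : IsLastMin (height S.double b (doubleWord e w)) (2 * k + 1) := by
    have hE := height_double_two_mul he S w b
    have hO := height_double_two_mul_add_one he S w b
    rw [hhalf'] at hE hO
    exact h.two_mul_add_one hE hO (by rw [height_succ, hE, hsig', add_zero])
  have hcartan : cartan a b = 0 := by
    simp [hb, cartan, add_assoc, h0, h1, h2]
  have y₂ : IsLastMin (height S.double b (lower (doubleWord e w) (2 * k))) (2 * k + 1) :=
    x₂.congr fun m => by simp [height_lower x₁, hcartan]
  rw [doubleWord_lower]
  exact .head (.of_isLastMin x₁) (.single (.of_isLastMin y₂))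

end Doubling

/-! ### Words of multipartitions -/

/-- A multipartition all of whose components have at most `L` parts. -/
structure IsMultipartition {r : ℕ} (L : ℕ) (lam : Fin r → ℕ → ℕ) : Prop where
  antitone : ∀ s, Antitone (lam s)
  eq_zero : ∀ s x, L ≤ x → lam s x = 0

/-- Words of multipartitions with `r` components of at most `L` parts: each component contributes
`L + 1` consecutive letters, the last of which stands for the empty row below the diagram. -/
def rowShape (r L : ℕ) : WordShape where
  removable k := k / (L + 1) < r ∧ k % (L + 1) < L
  addable k := k / (L + 1) < r
  addable_of_removable _ h := h.1

/-- The word of a multipartition: the letter of a row is an integer lift of the residue of its last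
node. -/
def word {e r : ℕ} (L : ℕ) (a : Fin r → ZMod e) (lam : Fin r → ℕ → ℕ) (k : ℕ) : ℤ :=
  if h : k / (L + 1) < r then
    (a ⟨_, h⟩).cast + lam ⟨_, h⟩ (k % (L + 1)) - (k % (L + 1) : ℕ) - 1 else 0

/-- The position of row `x` of component `s` in the word of a multipartition. -/
def rowIndex {r : ℕ} (L : ℕ) (s : Fin r) (x : ℕ) : ℕ := (L + 1) * s + x

section RowIndex

variable {r L k : ℕ} {s s' : Fin r} {x x' : ℕ}

lemma rowIndex_div (s : Fin r) (hx : x ≤ L) : rowIndex L s x / (L + 1) = s := by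
  rw [rowIndex, Nat.mul_add_div (by omega), Nat.div_eq_of_lt (by omega), Nat.add_zero]

lemma rowIndex_mod (s : Fin r) (hx : x ≤ L) : rowIndex L s x % (L + 1) = x := by
  rw [rowIndex, Nat.mul_add_mod, Nat.mod_eq_of_lt (by omega)]

lemma addable_rowIndex (s : Fin r) (hx : x ≤ L) : (rowShape r L).addable (rowIndex L s x) :=
  (rowIndex_div s hx).trans_lt s.2

lemma removable_rowIndex (s : Fin r) (hx : x ≤ L) :
    (rowShape r L).removable (rowIndex L s x) ↔ x < L := by
  simp [rowShape, rowIndex_div s hx, rowIndex_mod s hx]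

lemma exists_rowIndex (h : (rowShape r L).addable k) :
    ∃ s : Fin r, ∃ x ≤ L, k = rowIndex L s x :=
  ⟨⟨_, h⟩, k % (L + 1), Nat.le_of_lt_succ (Nat.mod_lt k L.succ_pos),
    (Nat.div_add_mod k (L + 1)).symm⟩

lemma rowIndex_inj (hx : x ≤ L) (hx' : x' ≤ L) (h : rowIndex L s x = rowIndex L s' x') :
    s = s' ∧ x = x' :=
  ⟨Fin.ext (by rw [← rowIndex_div s hx, ← rowIndex_div s' hx', h]),
    by rw [← rowIndex_mod s hx, ← rowIndex_mod s' hx', h]⟩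

lemma rowIndex_lt_of_lt (hx : x ≤ L) (hs : s < s') : rowIndex L s x < rowIndex L s' x' := by
  have : (L + 1) * (s + 1) ≤ (L + 1) * s' := Nat.mul_le_mul_left (L + 1) hs
  unfold rowIndex
  linarith

lemma nodeAbove_iff {C D : Node r} (hC : C.2.1 ≤ L) (hD : D.2.1 ≤ L) :
    NodeAbove C D ↔ rowIndex L C.1 C.2.1 < rowIndex L D.1 D.2.1 := by
  obtain ⟨s, x, y⟩ := C
  obtain ⟨s', x', y'⟩ := D
  rcases lt_trichotomy s s' with h | rfl | h
  · exact iff_of_true (.inl h) (rowIndex_lt_of_lt hC h)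
  · simp [NodeAbove, rowIndex]
  · exact iff_of_false (by simp [NodeAbove, h.not_gt, h.ne'])
      (rowIndex_lt_of_lt hD h).not_gt

end RowIndex

/-- The row at position `k` ends in an `i`-node with the property `P`. -/
def RowHas {e r : ℕ} (L : ℕ) (a : Fin r → ZMod e) (P : Node r → Prop) (i : ZMod e) (k : ℕ) : Prop :=
  ∃ C : Node r, P C ∧ res a C = i ∧ rowIndex L C.1 C.2.1 = k

/-- The position `k` carries an addable letter of residue `i` although the row is not addable,
because the row above it has the same length. -/
def Blocked {e r : ℕ} (L : ℕ) (a : Fin r → ZMod e) (lam : Fin r → ℕ → ℕ) (i : ZMod e) (k : ℕ) :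
    Prop :=
  (rowShape r L).addable k ∧ (word L a lam k : ZMod e) + 1 = i ∧ ¬ RowHas L a (Addable lam) i k

/-- The number of removable minus the number of addable `i`-nodes in the rows before position
`k`. -/
def nodeHeight {e r : ℕ} (L : ℕ) (a : Fin r → ZMod e) (lam : Fin r → ℕ → ℕ) (i : ZMod e) (k : ℕ) :
    ℤ :=
  ∑ m ∈ Finset.range k, ((if RowHas L a (Removable lam) i m then 1 else 0) -
    (if RowHas L a (Addable lam) i m then 1 else 0))

section Rows

variable {e r L k m : ℕ} {a : Fin r → ZMod e} {lam : Fin r → ℕ → ℕ} {i : ZMod e} {x : ℕ}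
  {A B C : Node r}

lemma IsMultipartition.row_lt (h : IsMultipartition L lam) (hC : Removable lam C) : C.2.1 < L := by
  by_contra! hL
  exact absurd hC.1 (by rw [h.eq_zero _ _ hL]; omega)

lemma IsMultipartition.row_le (h : IsMultipartition L lam) (hC : Addable lam C) : C.2.1 ≤ L := by
  by_contra! hL
  have := h.eq_zero C.1 (C.2.1 - 1) (by omega)
  rcases hC.2 with h' | h' <;> omega

lemma word_rowIndex (a : Fin r → ZMod e) (lam : Fin r → ℕ → ℕ) (s : Fin r) (hx : x ≤ L) :
    word L a lam (rowIndex L s x) = (a s).cast + lam s x - x - 1 := by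
  have hs : (⟨rowIndex L s x / (L + 1), addable_rowIndex s hx⟩ : Fin r) = s :=
    Fin.ext (rowIndex_div s hx)
  rw [word, dif_pos (show rowIndex L s x / (L + 1) < r from addable_rowIndex s hx), hs,
    rowIndex_mod s hx]

lemma cast_word_rowIndex (a : Fin r → ZMod e) (lam : Fin r → ℕ → ℕ) (s : Fin r) (hx : x ≤ L) :
    (word L a lam (rowIndex L s x) : ZMod e) = a s + lam s x - x - 1 := by
  simp [word_rowIndex a lam s hx]

lemma RowHas.addable {P : Node r → Prop} (hP : ∀ C, P C → C.2.1 ≤ L) (h : RowHas L a P i k) :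
    (rowShape r L).addable k := by
  obtain ⟨C, hC, -, rfl⟩ := h
  exact addable_rowIndex C.1 (hP C hC)

lemma rowHas_removable_iff (h : IsMultipartition L lam) (s : Fin r) (hx : x ≤ L) :
    RowHas L a (Removable lam) i (rowIndex L s x) ↔
      lam s (x + 1) < lam s x ∧ (word L a lam (rowIndex L s x) : ZMod e) = i := by
  rw [cast_word_rowIndex a lam s hx]
  constructor
  · rintro ⟨⟨s', x', y⟩, hC, rfl, hk⟩
    obtain ⟨rfl, rfl⟩ := rowIndex_inj (h.row_lt hC).le hx hk
    refine ⟨hC.2, ?_⟩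
    rw [← hC.1, res]
    push_cast
    ring
  · rintro ⟨hlt, rfl⟩
    refine ⟨(s, x, lam s x - 1), ⟨Nat.sub_add_cancel (Nat.one_le_of_lt hlt), hlt⟩, ?_, rfl⟩
    rw [res, Nat.cast_sub (by omega)]
    push_cast
    ring

lemma rowHas_addable_iff (h : IsMultipartition L lam) (s : Fin r) (hx : x ≤ L) :
    RowHas L a (Addable lam) i (rowIndex L s x) ↔
      (x = 0 ∨ lam s x < lam s (x - 1)) ∧
        (word L a lam (rowIndex L s x) : ZMod e) + 1 = i := by
  rw [cast_word_rowIndex a lam s hx]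
  constructor
  · rintro ⟨⟨s', x', y⟩, hC, rfl, hk⟩
    obtain ⟨rfl, rfl⟩ := rowIndex_inj (h.row_le hC) hx hk
    refine ⟨hC.2, ?_⟩
    rw [← hC.1, res]
    ring
  · rintro ⟨hlt, rfl⟩
    refine ⟨(s, x, lam s x), ⟨rfl, hlt⟩, ?_, rfl⟩
    rw [res]
    ring

lemma not_blocked_zero (h : IsMultipartition L lam) : ¬ Blocked L a lam i 0 := by
  rintro ⟨hk, hw, hA⟩
  have h0 : rowIndex L (⟨0, by simpa [rowShape] using hk⟩ : Fin r) 0 = 0 := by simp [rowIndex]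
  rw [← h0] at hw hA
  exact hA ((rowHas_addable_iff h _ L.zero_le).2 ⟨.inl rfl, hw⟩)

lemma blocked_succ_iff (h : IsMultipartition L lam) :
    Blocked L a lam i (k + 1) ↔ (rowShape r L).removable k ∧ (word L a lam k : ZMod e) = i ∧
      ¬ RowHas L a (Removable lam) i k := by
  by_cases hk : (rowShape r L).addable k
  swap
  · refine iff_of_false (fun hB => hk ?_) fun hR => hk hR.1.1
    exact (Nat.div_le_div_right k.le_succ).trans_lt hB.1
  obtain ⟨s, x, hx, rfl⟩ := exists_rowIndex hk
  rw [removable_rowIndex s hx]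
  rcases hx.lt_or_eq with hlt | rfl
  · have hsucc : rowIndex L s x + 1 = rowIndex L s (x + 1) := rfl
    have hle := h.antitone s x.le_succ
    rw [Blocked, hsucc, rowHas_addable_iff h s hlt, rowHas_removable_iff h s hx,
      cast_word_rowIndex a lam s hlt, cast_word_rowIndex a lam s hx]
    have hcond : (a s + lam s (x + 1) - (x + 1 : ℕ) - 1 + 1 : ZMod e) =
        a s + lam s (x + 1) - x - 1 := by push_cast; ring
    simp only [addable_rowIndex s hlt, hlt, hcond, true_and]
    rcases hle.lt_or_eq with hlt' | heq
    · simp [hlt']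
    · simp [heq]
  · refine iff_of_false ?_ fun hR => absurd hR.1 x.lt_irrefl
    rintro ⟨hadd, hw, hA⟩
    have hsucc : rowIndex x s x + 1 = (x + 1) * (s + 1) := by
      unfold rowIndex
      ring
    obtain ⟨s', x', hx', hk'⟩ := exists_rowIndex hadd
    have hx0 : x' = 0 := by rw [← rowIndex_mod s' hx', ← hk', hsucc, Nat.mul_mod_right]
    rw [hk'] at hw hA
    exact hA ((rowHas_addable_iff h s' hx').2 ⟨.inl hx0, hw⟩)

lemma nodeHeight_succ (L : ℕ) (a : Fin r → ZMod e) (lam : Fin r → ℕ → ℕ) (i : ZMod e) (k : ℕ) :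
    nodeHeight L a lam i (k + 1) = nodeHeight L a lam i k +
      ((if RowHas L a (Removable lam) i k then 1 else 0) -
        (if RowHas L a (Addable lam) i k then 1 else 0)) :=
  Finset.sum_range_succ _ _

lemma height_word (h : IsMultipartition L lam) (k : ℕ) :
    height (rowShape r L) i (word L a lam) k =
      nodeHeight L a lam i k + if Blocked L a lam i k then 1 else 0 := by
  induction k with
  | zero => simp [height, nodeHeight, not_blocked_zero h]
  | succ k ih =>
    have hR : RowHas L a (Removable lam) i k →
        (rowShape r L).removable k ∧ (word L a lam k : ZMod e) = i := by
      rintro ⟨C, hC, hi, rfl⟩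
      have hL := h.row_lt hC
      exact ⟨(removable_rowIndex _ hL.le).2 hL,
        ((rowHas_removable_iff h _ hL.le).1 ⟨C, hC, hi, rfl⟩).2⟩
    have hA : RowHas L a (Addable lam) i k →
        (rowShape r L).addable k ∧ (word L a lam k : ZMod e) + 1 = i := by
      rintro ⟨C, hC, hi, rfl⟩
      have hL := h.row_le hC
      exact ⟨addable_rowIndex _ hL, ((rowHas_addable_iff h _ hL).1 ⟨C, hC, hi, rfl⟩).2⟩
    rw [height_succ, ih, nodeHeight_succ, signature]
    simp only [blocked_succ_iff h]
    unfold Blocked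
    split_ifs <;> first | omega | (exfalso; tauto)

lemma not_rowHas_addable (he : 2 ≤ e) (h : IsMultipartition L lam)
    (hR : RowHas L a (Removable lam) i k) : ¬ RowHas L a (Addable lam) i k := by
  obtain ⟨C, hC, hi, rfl⟩ := hR
  have hL := (h.row_lt hC).le
  intro hA
  have : Fact (1 < e) := ⟨he⟩
  have h1 := ((rowHas_removable_iff h _ hL).1 ⟨C, hC, hi, rfl⟩).2
  have h2 := ((rowHas_addable_iff h _ hL).1 hA).2
  exact one_ne_zero (add_eq_left.1 (h2.trans h1.symm))

lemma nodeHeight_succ_of_removable (he : 2 ≤ e) (h : IsMultipartition L lam)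
    (hR : RowHas L a (Removable lam) i k) :
    nodeHeight L a lam i (k + 1) = nodeHeight L a lam i k + 1 := by
  rw [nodeHeight_succ, if_pos hR, if_neg (not_rowHas_addable he h hR), sub_zero]

lemma nodeHeight_sub (hkm : k ≤ m) :
    nodeHeight L a lam i m - nodeHeight L a lam i k =
      (((Finset.Ico k m).filter (RowHas L a (Removable lam) i)).card : ℤ) -
        ((Finset.Ico k m).filter (RowHas L a (Addable lam) i)).card := by
  rw [nodeHeight, nodeHeight, ← Finset.sum_Ico_eq_sub _ hkm, Finset.sum_sub_distrib,
    Finset.sum_boole, Finset.sum_boole]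

lemma ncard_between {P : Node r → Prop} (hP : ∀ C, P C → C.2.1 ≤ L)
    (hinj : ∀ C C', P C → P C' → C.1 = C'.1 → C.2.1 = C'.2.1 → C.2.2 = C'.2.2)
    (hA : A.2.1 ≤ L) (hB : B.2.1 ≤ L) :
    Set.ncard {C : Node r | P C ∧ res a C = i ∧ NodeAbove A C ∧ NodeAbove C B} =
      ((Finset.Ico (rowIndex L A.1 A.2.1 + 1) (rowIndex L B.1 B.2.1)).filter
        (RowHas L a P i)).card := by
  rw [← Set.ncard_coe_finset, ← Set.InjOn.ncard_image (f := fun C => rowIndex L C.1 C.2.1)]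
  · congr 1
    ext k
    simp only [Finset.coe_filter, Finset.mem_Ico, Set.mem_ofPred_eq, Set.mem_image]
    constructor
    · rintro ⟨C, ⟨hC, hi, hAC, hCB⟩, rfl⟩
      exact ⟨⟨(nodeAbove_iff hA (hP C hC)).1 hAC, (nodeAbove_iff (hP C hC) hB).1 hCB⟩,
        C, hC, hi, rfl⟩
    · rintro ⟨⟨hAC, hCB⟩, C, hC, hi, rfl⟩
      exact ⟨C, ⟨hC, hi, (nodeAbove_iff hA (hP C hC)).2 hAC,
        (nodeAbove_iff (hP C hC) hB).2 hCB⟩, rfl⟩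
  · rintro C ⟨hC, -⟩ C' ⟨hC', -⟩ hk
    obtain ⟨h1, h2⟩ := rowIndex_inj (hP C hC) (hP C' hC') hk
    exact Prod.ext h1 (Prod.ext h2 (hinj C C' hC hC' h1 h2))

lemma Removable.column_eq {C C' : Node r} (h : Removable lam C) (h' : Removable lam C')
    (h1 : C.1 = C'.1) (h2 : C.2.1 = C'.2.1) : C.2.2 = C'.2.2 := by
  have h3 := h.1
  rw [h1, h2, ← h'.1] at h3
  exact Nat.add_right_cancel h3

lemma Addable.column_eq {C C' : Node r} (h : Addable lam C) (h' : Addable lam C')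
    (h1 : C.1 = C'.1) (h2 : C.2.1 = C'.2.1) : C.2.2 = C'.2.2 := by
  rw [h.1, h'.1, h1, h2]

lemma ncard_addable_lt_iff (h : IsMultipartition L lam) (hA : Removable lam A)
    (hB : Addable lam B) (hAB : NodeAbove A B) :
    Set.ncard {C : Node r | Addable lam C ∧ res a C = i ∧ NodeAbove A C ∧ NodeAbove C B} <
        Set.ncard {C : Node r | Removable lam C ∧ res a C = i ∧ NodeAbove A C ∧ NodeAbove C B} ↔
      nodeHeight L a lam i (rowIndex L A.1 A.2.1 + 1) <
        nodeHeight L a lam i (rowIndex L B.1 B.2.1) := by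
  have hAL := (h.row_lt hA).le
  have hBL := h.row_le hB
  rw [ncard_between (P := Addable lam) (fun _ => h.row_le) (fun _ _ => Addable.column_eq) hAL hBL,
    ncard_between (P := Removable lam) (fun _ hC => (h.row_lt hC).le)
      (fun _ _ => Removable.column_eq) hAL hBL]
  have := nodeHeight_sub (L := L) (a := a) (lam := lam) (i := i)
    (Nat.succ_le_of_lt ((nodeAbove_iff hAL hBL).1 hAB))
  simp only [Nat.succ_eq_add_one] at this
  omega

theorem normal_iff (he : 2 ≤ e) (h : IsMultipartition L lam) :
    Normal a lam A ↔ Removable lam A ∧ ∀ m, rowIndex L A.1 A.2.1 < m →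
      nodeHeight L a lam (res a A) (rowIndex L A.1 A.2.1 + 1) ≤
        nodeHeight L a lam (res a A) m := by
  refine and_congr_right fun hA => ⟨fun hN m hm => ?_, fun hm B hB hi hAB => ?_⟩
  · induction m, hm using Nat.le_induction with
    | base => exact le_rfl
    | succ m hm ih =>
      rw [nodeHeight_succ L a lam _ m]
      by_cases hB : RowHas L a (Addable lam) (res a A) m
      · obtain ⟨B, hB', hi, rfl⟩ := id hB
        have hAB := (nodeAbove_iff (h.row_lt hA).le (h.row_le hB')).2 hm
        have hlt := (ncard_addable_lt_iff h hA hB' hAB).1 (hN B hB' hi hAB)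
        split_ifs <;> omega
      · rw [if_neg hB]
        split_ifs <;> omega
  · rw [ncard_addable_lt_iff h hA hB hAB]
    have hlt := (nodeAbove_iff (h.row_lt hA).le (h.row_le hB)).1 hAB
    have hRow : RowHas L a (Addable lam) (res a A) (rowIndex L B.1 B.2.1) := ⟨B, hB, hi, rfl⟩
    have hle := hm (rowIndex L B.1 B.2.1 + 1) (by omega)
    rw [nodeHeight_succ L a lam _ (rowIndex L B.1 B.2.1),
      if_neg fun hR => not_rowHas_addable he h hR hRow, if_pos hRow] at hle
    omega

end Rows

/-! ### Good nodes -/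

lemma isLastMin_iff_of_isolated_bumps {f g : ℕ → ℤ} {P : ℕ → Prop} {k : ℕ}
    (hf : ∀ m, f m = g m + if P m then 1 else 0)
    (hP : ∀ m, P m → ∃ p, m = p + 1 ∧ f m = f p + 1 ∧ f (m + 1) = f m - 1) :
    IsLastMin f k ↔ IsLastMin g k := by
  have hgf : ∀ m, g m ≤ f m ∧ (¬ P m → f m = g m) ∧ (P m → f m = g m + 1) := fun m => by
    rw [hf m]
    split_ifs with h <;> simp [h]
  constructor
  · intro h
    have hk : ¬ P k := fun hPk => by
      obtain ⟨p, rfl, hp, -⟩ := hP k hPk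
      have := h.le p
      omega
    refine ⟨fun m => ?_, fun m hm => ?_⟩ <;> rw [← (hgf k).2.1 hk] <;> by_cases hPm : P m
    · obtain ⟨p, rfl, hp, -⟩ := hP m hPm
      have := h.le p
      have := (hgf (p + 1)).2.2 hPm
      omega
    · exact (h.le m).trans_eq ((hgf m).2.1 hPm)
    · obtain ⟨-, -, -, hm'⟩ := hP m hPm
      have := h.lt (m + 1) (by omega)
      have := (hgf m).2.2 hPm
      omega
    · exact (h.lt m hm).trans_eq ((hgf m).2.1 hPm)
  · intro h
    have hk : ¬ P k := fun hPk => by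
      obtain ⟨-, -, -, hk'⟩ := hP k hPk
      have := h.lt (k + 1) k.lt_succ_self
      have := (hgf k).2.2 hPk
      have := (hgf (k + 1)).1
      omega
    exact ⟨fun m => ((hgf k).2.1 hk).trans_le ((h.le m).trans (hgf m).1),
      fun m hm => ((hgf k).2.1 hk).trans_lt ((h.lt m hm).trans_le (hgf m).1)⟩

section Good

variable {e r L k m : ℕ} {a : Fin r → ZMod e} {lam mu : Fin r → ℕ → ℕ} {i : ZMod e} {A B : Node r}

lemma isLastMin_height_iff (he : 2 ≤ e) (h : IsMultipartition L lam) :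
    IsLastMin (height (rowShape r L) i (word L a lam)) k ↔ IsLastMin (nodeHeight L a lam i) k := by
  have : Fact (1 < e) := ⟨he⟩
  refine isLastMin_iff_of_isolated_bumps (height_word h) fun m hm => ?_
  obtain _ | p := m
  · exact absurd hm (not_blocked_zero h)
  obtain ⟨hR, hw, -⟩ := (blocked_succ_iff h).1 hm
  obtain ⟨hA, hw', -⟩ := hm
  refine ⟨p, rfl, ?_, ?_⟩
  · rw [height_succ, signature, if_pos ⟨hR, hw⟩, if_neg (by simp [hw]), sub_zero]
  · rw [height_succ _ _ _ (p + 1), signature, if_neg (by simp [← hw']), if_pos ⟨hA, hw'⟩, zero_sub,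
      sub_eq_add_neg]

lemma exists_good_of_isLastMin (he : 2 ≤ e) (h : IsMultipartition L lam)
    (hk : IsLastMin (nodeHeight L a lam i) k) :
    ∃ A, Good a lam A ∧ res a A = i ∧ rowIndex L A.1 A.2.1 = k := by
  have hrow : RowHas L a (Removable lam) i k := by
    by_contra hrow
    have := hk.lt (k + 1) k.lt_succ_self
    rw [nodeHeight_succ, if_neg hrow] at this
    split_ifs at this <;> omega
  have hsucc := nodeHeight_succ_of_removable he h hrow
  obtain ⟨A, hA, rfl, rfl⟩ := hrow
  refine ⟨A, ⟨(normal_iff he h).2 ⟨hA, fun m hm => ?_⟩, fun B hB hi hne => ?_⟩, rfl, rfl⟩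
  · have := hk.lt m hm
    omega
  obtain ⟨hB, hmin⟩ := (normal_iff he h).1 hB
  rw [nodeAbove_iff (h.row_lt hA).le (h.row_lt hB).le]
  by_contra! hle
  rcases hle.lt_or_eq with hlt | heq
  · rw [hi, nodeHeight_succ_of_removable he h ⟨B, hB, hi, rfl⟩] at hmin
    have := hmin _ hlt
    have := hk.le (rowIndex L B.1 B.2.1)
    omega
  · obtain ⟨h1, h2⟩ := rowIndex_inj (h.row_lt hB).le (h.row_lt hA).le heq
    exact hne (Prod.ext h1 (Prod.ext h2 (hB.column_eq hA h1 h2)))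

lemma NodeAbove.asymm (hAB : NodeAbove A B) : ¬ NodeAbove B A := by
  unfold NodeAbove at *
  grind

lemma isLastMin_of_good (he : 2 ≤ e) (h : IsMultipartition L lam) (hA : Good a lam A) :
    IsLastMin (nodeHeight L a lam (res a A)) (rowIndex L A.1 A.2.1) := by
  obtain ⟨hR, hmin⟩ := (normal_iff he h).1 hA.1
  rw [nodeHeight_succ_of_removable he h ⟨A, hR, rfl, rfl⟩] at hmin
  obtain ⟨k, hk⟩ := exists_isLastMin fun m hm => Int.lt_of_add_one_le (hmin m hm)
  obtain ⟨A', hA', hi, rfl⟩ := exists_good_of_isLastMin he h hk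
  obtain rfl : A' = A := by
    by_contra hne
    exact (hA.2 A' hA'.1 hi hne).asymm (hA'.2 A hA.1 hi.symm (Ne.symm hne))
  exact hk

lemma IsMultipartition.removeNode (h : IsMultipartition L lam) (hA : Removable lam A) :
    IsMultipartition L (removeNode lam A) := by
  refine ⟨fun s => antitone_nat_of_succ_le fun x => ?_, fun s x hx => ?_⟩
  · have := h.antitone s x.le_succ
    have := hA.2
    unfold AK.removeNode
    grind
  · have := h.eq_zero s x hx
    unfold AK.removeNode
    split_ifs <;> omega

lemma word_removeNode (h : IsMultipartition L lam) (hA : Removable lam A) :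
    word L a (removeNode lam A) = lower (word L a lam) (rowIndex L A.1 A.2.1) := by
  funext k
  have hL := (h.row_lt hA).le
  rw [lower_apply]
  by_cases hk : (rowShape r L).addable k
  · obtain ⟨s, x, hx, rfl⟩ := exists_rowIndex hk
    rw [word_rowIndex _ _ _ hx, word_rowIndex _ _ _ hx]
    by_cases hp : s = A.1 ∧ x = A.2.1
    · obtain ⟨rfl, rfl⟩ := hp
      rw [if_pos rfl, removeNode, if_pos ⟨rfl, rfl⟩, ← hA.1]
      push_cast
      ring
    · rw [if_neg fun h' => hp (rowIndex_inj hx hL h'), removeNode, if_neg hp, sub_zero]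
  · rw [if_neg fun h' : k = _ => hk (h' ▸ addable_rowIndex A.1 hL), sub_zero]
    have hk' : ¬ k / (L + 1) < r := hk
    rw [word, word, dif_neg hk', dif_neg hk']

lemma isMultipartition_zero (r L : ℕ) : IsMultipartition L (0 : Fin r → ℕ → ℕ) :=
  ⟨fun _ => antitone_const, fun _ _ _ => rfl⟩

lemma word_injOn (h : IsMultipartition L lam) (h' : IsMultipartition L mu)
    (hw : word L a lam = word L a mu) : lam = mu := by
  funext s x
  rcases le_total L x with hx | hx
  · rw [h.eq_zero s x hx, h'.eq_zero s x hx]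
  · have := congrFun hw (rowIndex L s x)
    rw [word_rowIndex _ _ _ hx, word_rowIndex _ _ _ hx] at this
    omega

/-- Paths of length `m` from `lam` to the empty multipartition in the crystal of doubled words,
which is confluent because its modulus `2 * e` exceeds `2`. -/
def ReachesEmpty {e r : ℕ} (L : ℕ) (a : Fin r → ZMod e) (m : ℕ) (lam : Fin r → ℕ → ℕ) : Prop :=
  ReachesIn (CrystalStep (2 * e) (rowShape r L).double) m (doubleWord e (word L a lam))
    (doubleWord e (word L a 0))

lemma exists_good_of_crystalStep (he : 2 ≤ e) (h : IsMultipartition L lam) {u : ℕ → ℤ}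
    (hu : CrystalStep (2 * e) (rowShape r L).double (doubleWord e (word L a lam)) u) :
    ∃ A, Good a lam A := by
  obtain ⟨C, k, hk, -⟩ := hu
  obtain ⟨A, hA, -⟩ := exists_good_of_isLastMin he h
    ((isLastMin_height_iff he h).1 (isLastMin_of_double he hk))
  exact ⟨A, hA⟩

lemma reachesIn_removeNode (he : 2 ≤ e) (h : IsMultipartition L lam) (hA : Good a lam A) :
    ReachesIn (CrystalStep (2 * e) (rowShape r L).double) 2 (doubleWord e (word L a lam))
      (doubleWord e (word L a (removeNode lam A))) := by
  rw [word_removeNode h hA.1.1]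
  exact reachesIn_doubleWord_lower he ((isLastMin_height_iff he h).2 (isLastMin_of_good he h hA))

lemma ReachesEmpty.removeNode (he : 2 ≤ e) (h : IsMultipartition L lam) (hA : Good a lam A)
    (hm : ReachesEmpty L a m lam) : ∃ m' < m, ReachesEmpty L a m' (removeNode lam A) := by
  have hterminal : ∀ u, ¬ CrystalStep (2 * e) (rowShape r L).double (doubleWord e (word L a 0)) u :=
    fun u hu => by
      obtain ⟨A, hA⟩ := exists_good_of_crystalStep he (isMultipartition_zero r L) hu
      exact absurd hA.1.1.1 (Nat.succ_ne_zero _)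
  have hjoin := fun w x y => CrystalStep.exists_reachesIn (S := (rowShape r L).double) (w := w)
    (x := x) (y := y) (show 3 ≤ 2 * e by omega)
  obtain _ | ⟨hs₁, hs⟩ := reachesIn_removeNode he h hA
  obtain _ | ⟨hs₂, hs⟩ := hs
  cases hs
  obtain ⟨m₁, rfl, hm₁⟩ := hm.of_step hjoin hterminal hs₁
  obtain ⟨m₂, rfl, hm₂⟩ := hm₁.of_step hjoin hterminal hs₂
  exact ⟨m₂, by omega, hm₂⟩

lemma IsKleshchev.exists_reachesEmpty (he : 2 ≤ e) (hk : IsKleshchev a lam) :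
    IsMultipartition L lam → ∃ m, ReachesEmpty L a m lam := by
  induction hk with
  | empty => exact fun _ => ⟨0, .refl _⟩
  | step lam A hA _ ih =>
    intro h
    obtain ⟨m, hm⟩ := ih (h.removeNode hA.1.1)
    exact ⟨2 + m, (reachesIn_removeNode he h hA).trans hm⟩

lemma ReachesEmpty.isKleshchev (he : 2 ≤ e) (h : IsMultipartition L lam)
    (hm : ReachesEmpty L a m lam) : IsKleshchev a lam := by
  induction m using Nat.strong_induction_on generalizing lam with
  | _ m ih =>
    rcases m with _ | m
    · have hw : doubleWord e (word L a lam) = doubleWord e (word L a 0) := hm.eq_of_zero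
      have : word L a lam = word L a 0 := by
        funext k
        simpa only [doubleWord_two_mul] using congrFun hw (2 * k)
      rw [word_injOn h (isMultipartition_zero r L) this]
      exact .empty
    · obtain ⟨A, hA⟩ : ∃ A, Good a lam A := by
        cases hm with
        | head hs _ => exact exists_good_of_crystalStep he h hs
      obtain ⟨m', hlt, hm'⟩ := hm.removeNode he h hA
      exact .step lam A hA (ih m' hlt (h.removeNode hA.1.1) hm')

theorem isKleshchev_removeNode_iff (he : 2 ≤ e) (h : IsMultipartition L lam) (hA : Good a lam A) :
    IsKleshchev a (removeNode lam A) ↔ IsKleshchev a lam := by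
  refine ⟨.step lam A hA, fun hk => ?_⟩
  obtain ⟨m, hm⟩ := hk.exists_reachesEmpty he h
  obtain ⟨m', -, hm'⟩ := hm.removeNode he h hA
  exact hm'.isKleshchev he (h.removeNode hA.1.1)

end Good

/-! ### Removing all removable nodes of one residue -/

/-- Remove all removable `i`-nodes from `lam`. -/
def stripResidue {e r : ℕ} (a : Fin r → ZMod e) (i : ZMod e) (lam : Fin r → ℕ → ℕ) :
    Fin r → ℕ → ℕ :=
  fun s x => if ∃ y, Removable lam (s, x, y) ∧ res a (s, x, y) = i then lam s x - 1 else lam s x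

section Strip

variable {e r L : ℕ} {a : Fin r → ZMod e} {lam : Fin r → ℕ → ℕ} {i : ZMod e} {A B C : Node r}

lemma removeNode_self (hA : Removable lam A) : removeNode lam A A.1 A.2.1 = A.2.2 := by
  rw [removeNode, if_pos ⟨rfl, rfl⟩, ← hA.1, Nat.add_sub_cancel]

lemma removeNode_of_ne {s : Fin r} {x : ℕ} (h : ¬ (s = A.1 ∧ x = A.2.1)) :
    removeNode lam A s x = lam s x :=
  if_neg h

lemma removeNode_le (s : Fin r) (x : ℕ) : removeNode lam A s x ≤ lam s x := by
  unfold removeNode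
  split_ifs <;> omega

lemma Removable.eq_of_row_eq (hA : Removable lam A) (hC : Removable lam C) (h1 : C.1 = A.1)
    (h2 : C.2.1 = A.2.1) : C = A :=
  Prod.ext h1 (Prod.ext h2 (hC.column_eq hA h1 h2))

lemma Addable.of_removeNode (hA : Removable lam A) (hB : Addable (removeNode lam A) B) :
    B = A ∨ Addable lam B := by
  by_cases hrow : B.1 = A.1 ∧ B.2.1 = A.2.1
  · left
    have := hB.1
    rw [hrow.1, hrow.2, removeNode_self hA] at this
    exact Prod.ext hrow.1 (Prod.ext hrow.2 this)
  · rw [Addable, removeNode_of_ne hrow] at hB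
    exact .inr ⟨hB.1, hB.2.imp_right fun h => h.trans_le (removeNode_le _ _)⟩

lemma removable_removeNode_iff (he : 2 ≤ e) (h : IsMultipartition L lam) (hA : Removable lam A)
    (hi : res a C = res a A) :
    Removable (removeNode lam A) C ↔ Removable lam C ∧ C ≠ A := by
  have : Fact (1 < e) := ⟨he⟩
  obtain ⟨s, x, y⟩ := A
  obtain ⟨s', x', y'⟩ := C
  have hAeq := hA.1
  simp only [res] at hi
  by_cases hrow : s' = s ∧ x' = x
  · obtain ⟨rfl, rfl⟩ := hrow
    refine iff_of_false (fun hC => ?_) fun hC => hC.2 (hA.eq_of_row_eq hC.1 rfl rfl)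
    have hy : y' + 1 = y := hC.1.trans (removeNode_self hA)
    rw [← hy] at hi
    push_cast at hi
    exact one_ne_zero (α := ZMod e) (by linear_combination -hi)
  have hne : (s', x', y') ≠ (s, x, y) := fun h' => hrow (by simp_all)
  simp only [Removable, removeNode_of_ne (lam := lam) (A := (s, x, y)) hrow, hne, ne_eq,
    not_false_eq_true, and_true]
  refine and_congr_right fun hy' => ⟨fun hlt => ?_, (removeNode_le _ _).trans_lt⟩
  by_cases hnext : s' = s ∧ x' + 1 = x
  · obtain ⟨rfl, rfl⟩ := hnext
    refine lt_of_le_of_ne (h.antitone s' x'.le_succ) fun heq => ?_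
    obtain rfl : y' = y := by dsimp only at hAeq; omega
    push_cast at hi
    exact one_ne_zero (α := ZMod e) (by linear_combination hi)
  · rwa [removeNode_of_ne hnext] at hlt

lemma stripResidue_removeNode (he : 2 ≤ e) (h : IsMultipartition L lam) (hA : Removable lam A) :
    stripResidue a (res a A) (removeNode lam A) = stripResidue a (res a A) lam := by
  funext s x
  unfold stripResidue
  by_cases hrow : s = A.1 ∧ x = A.2.1
  · obtain ⟨rfl, rfl⟩ := hrow
    rw [if_neg, if_pos ⟨A.2.2, hA, rfl⟩, removeNode, if_pos ⟨rfl, rfl⟩]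
    rintro ⟨y, hC, hi⟩
    obtain ⟨hC, hne⟩ := (removable_removeNode_iff he h hA hi).1 hC
    exact hne (hA.eq_of_row_eq hC rfl rfl)
  · have hiff : (∃ y, Removable (removeNode lam A) (s, x, y) ∧ res a (s, x, y) = res a A) ↔
        ∃ y, Removable lam (s, x, y) ∧ res a (s, x, y) = res a A := by
      refine exists_congr fun y => and_congr_left fun hi => ?_
      rw [removable_removeNode_iff he h hA hi]
      exact and_iff_left fun hC => hrow ⟨congrArg (·.1) hC, congrArg (·.2.1) hC⟩
    rw [removeNode_of_ne hrow]
    simp only [hiff]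

lemma good_of_highest (hA : Removable lam A)
    (hadd : ∀ B, Addable lam B → res a B = res a A → NodeAbove B A)
    (hhigh : ∀ C, Removable lam C → res a C = res a A → C ≠ A → NodeAbove A C) : Good a lam A :=
  ⟨⟨hA, fun B hB hi hAB => absurd hAB (hadd B hB hi).asymm⟩, fun C hC => hhigh C hC.1⟩

lemma finite_setOf_removable (h : IsMultipartition L lam) : {C | Removable lam C}.Finite := by
  refine ((Finset.univ ×ˢ Finset.range L).finite_toSet.image
    fun p : Fin r × ℕ => (p.1, p.2, lam p.1 p.2 - 1)).subset fun C hC => ?_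
  refine ⟨(C.1, C.2.1), by simpa using h.row_lt hC, ?_⟩
  simp [← hC.1]

lemma exists_highest_removable (h : IsMultipartition L lam)
    (hex : ∃ C, Removable lam C ∧ res a C = i) :
    ∃ A, (Removable lam A ∧ res a A = i) ∧
      ∀ C, Removable lam C → res a C = i → C ≠ A → NodeAbove A C := by
  obtain ⟨A, hA, hmin⟩ := Set.exists_min_image _ (fun C => rowIndex L C.1 C.2.1)
    ((finite_setOf_removable h).subset fun C (hC : Removable lam C ∧ res a C = i) => hC.1) hex
  refine ⟨A, hA, fun C hC hi hne => (nodeAbove_iff (h.row_lt hA.1).le (h.row_lt hC).le).2 ?_⟩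
  refine lt_of_le_of_ne (hmin C ⟨hC, hi⟩) fun heq => hne ?_
  obtain ⟨h1, h2⟩ := rowIndex_inj (h.row_lt hA.1).le (h.row_lt hC).le heq
  exact hA.1.eq_of_row_eq hC h1.symm h2.symm

theorem isKleshchev_stripResidue_iff (he : 2 ≤ e) (h : IsMultipartition L lam)
    (hadd : ∀ B C, Addable lam B → res a B = i → Removable lam C → res a C = i → NodeAbove B C) :
    IsKleshchev a (stripResidue a i lam) ↔ IsKleshchev a lam := by
  induction hn : {C | Removable lam C ∧ res a C = i}.ncard using Nat.strong_induction_on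
    generalizing lam with
  | _ n ih =>
    by_cases hex : ∃ C, Removable lam C ∧ res a C = i
    swap
    · have : stripResidue a i lam = lam := by
        funext s x
        exact if_neg fun ⟨y, hy⟩ => hex ⟨_, hy⟩
      rw [this]
    obtain ⟨A, ⟨hA, rfl⟩, hhigh⟩ := exists_highest_removable h hex
    have hgood := good_of_highest hA (fun B hB hi => hadd B A hB hi hA rfl) hhigh
    rw [← isKleshchev_removeNode_iff he h hgood, ← stripResidue_removeNode he h hA]
    refine ih _ ?_ (h.removeNode hA) (fun B C hB hBi hC hCi => ?_) rfl
    · rw [← hn]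
      refine Set.ncard_lt_ncard (Set.ssubset_iff_of_subset ?_ |>.2 ⟨A, ⟨hA, rfl⟩, ?_⟩)
        ((finite_setOf_removable h).subset fun C hC => hC.1)
      · exact fun C hC => ⟨((removable_removeNode_iff he h hA hC.2).1 hC.1).1, hC.2⟩
      · exact fun hA' => ((removable_removeNode_iff (a := a) he h hA rfl).1 hA'.1).2 rfl
    · obtain ⟨hC', hne⟩ := (removable_removeNode_iff he h hA hCi).1 hC
      rcases hB.of_removeNode hA with hBA | hB'
      · exact hBA ▸ hhigh C hC' hCi hne
      · exact hadd B C hB' hBi hC' hCi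

end Strip

/-! ### Decreasing enumerations of β-sets -/

/-- `t` enumerates the β-set `T` decreasingly, and `T` has charge `c`: it contains as many
integers `≥ c` as it misses integers `< c`. -/
structure IsBetaEnum (T : Set ℤ) (c : ℤ) (t : ℕ → ℤ) : Prop where
  strictAnti : StrictAnti t
  range_eq : Set.range t = T
  tail : ∃ N : ℕ, ∀ x : ℕ, N ≤ x → t x = c - 1 - x

/-- The partition whose β-set of charge `c` is enumerated by `t`. -/
def betaPartition (c : ℤ) (t : ℕ → ℤ) (x : ℕ) : ℕ :=
  (t x + (x + 1) - c).toNat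

lemma add_le_add_of_strictAnti {t : ℕ → ℤ} (ht : StrictAnti t) {x y : ℕ} (hxy : x ≤ y) :
    t y + y ≤ t x + x := by
  induction y, hxy using Nat.le_induction with
  | base => exact le_rfl
  | succ y _ ih =>
    have := ht (lt_add_one y)
    push_cast
    omega

namespace IsBetaEnum

variable {T : Set ℤ} {c c' : ℤ} {t t' : ℕ → ℤ}

lemma mem (h : IsBetaEnum T c t) (x : ℕ) : t x ∈ T :=
  h.range_eq ▸ Set.mem_range_self x

lemma exists_eq (h : IsBetaEnum T c t) {z : ℤ} (hz : z ∈ T) : ∃ x, t x = z := by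
  rwa [← h.range_eq] at hz

lemma unique (h : IsBetaEnum T c t) (h' : IsBetaEnum T c' t') : t = t' ∧ c = c' := by
  have hrange : Set.range (fun x => -t x) = Set.range fun x => -t' x := by
    rw [Set.range_comp' Neg.neg t, Set.range_comp' Neg.neg t', h.range_eq, h'.range_eq]
  have ht : t = t' := neg_injective ((StrictMono.range_inj
    (fun _ _ hxy => neg_lt_neg (h.strictAnti hxy))
    fun _ _ hxy => neg_lt_neg (h'.strictAnti hxy)).1 hrange)
  obtain ⟨N, hN⟩ := h.tail
  obtain ⟨N', hN'⟩ := h'.tail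
  have := hN _ (le_max_left N N')
  have := hN' _ (le_max_right N N')
  exact ⟨ht, by rw [ht] at *; omega⟩

lemma cast_betaPartition (h : IsBetaEnum T c t) (x : ℕ) :
    (betaPartition c t x : ℤ) = t x + (x + 1) - c := by
  obtain ⟨N, hN⟩ := h.tail
  have := add_le_add_of_strictAnti h.strictAnti (le_max_right N x)
  have := hN _ (le_max_left N x)
  rw [betaPartition, Int.toNat_of_nonneg (by omega)]

lemma add_int (h : IsBetaEnum T c t) (v : ℤ) :
    IsBetaEnum {z | z - v ∈ T} (c + v) (fun x => t x + v) := by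
  obtain ⟨N, hN⟩ := h.tail
  refine ⟨fun x y hxy => by simpa using h.strictAnti hxy, ?_, N, fun x hx => by
    rw [hN x hx]; ring⟩
  ext z
  rw [← h.range_eq]
  exact exists_congr fun x => eq_sub_iff_add_eq.symm

end IsBetaEnum

lemma betaPartition_add (c v : ℤ) (t : ℕ → ℤ) :
    betaPartition (c + v) (fun x => t x + v) = betaPartition c t := by
  funext x
  rw [betaPartition, betaPartition]
  congr 1
  ring

section TEnum

variable {T : Set ℤ} {a b : ℤ}

lemma tEnum_mem (ha : ∀ z < a, z ∈ T) (hb : ∀ z ∈ T, z < b) (x : ℕ) : tEnum T x ∈ T := by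
  have hbdd : BddAbove T := ⟨b, fun z hz => (hb z hz).le⟩
  cases x with
  | zero => exact Int.csSup_mem ⟨a - 1, ha _ (by omega)⟩ hbdd
  | succ x =>
    refine (Int.csSup_mem ?_ (hbdd.mono Set.inter_subset_left)).1
    exact ⟨min a (tEnum T x) - 1, ha _ (by omega), by simp only [Set.mem_Iio]; omega⟩

lemma isGreatest_tEnum_succ (ha : ∀ z < a, z ∈ T) (hb : ∀ z ∈ T, z < b) (x : ℕ) :
    IsGreatest (T ∩ Set.Iio (tEnum T x)) (tEnum T (x + 1)) := by
  have hbdd : BddAbove (T ∩ Set.Iio (tEnum T x)) := ⟨b, fun z hz => (hb z hz.1).le⟩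
  refine ⟨Int.csSup_mem ?_ hbdd, fun z hz => le_csSup hbdd hz⟩
  exact ⟨min a (tEnum T x) - 1, ha _ (by omega), by simp only [Set.mem_Iio]; omega⟩

lemma strictAnti_tEnum (ha : ∀ z < a, z ∈ T) (hb : ∀ z ∈ T, z < b) : StrictAnti (tEnum T) :=
  strictAnti_nat_of_succ_lt fun x => (isGreatest_tEnum_succ ha hb x).1.2

lemma range_tEnum (ha : ∀ z < a, z ∈ T) (hb : ∀ z ∈ T, z < b) : Set.range (tEnum T) = T := by
  refine (Set.range_subset_iff.2 (tEnum_mem ha hb)).antisymm fun z hz => ?_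
  have hex : ∃ x, tEnum T x ≤ z := by
    refine ⟨(tEnum T 0 - z).toNat, ?_⟩
    have := add_le_add_of_strictAnti (strictAnti_tEnum ha hb) (tEnum T 0 - z).toNat.zero_le
    omega
  obtain ⟨x, hx, hmin⟩ := Nat.findX hex
  refine ⟨x, hx.antisymm ?_⟩
  cases x with
  | zero => exact le_csSup ⟨b, fun z hz => (hb z hz).le⟩ hz
  | succ x => exact (isGreatest_tEnum_succ ha hb x).2 ⟨hz, not_le.1 (hmin x x.lt_succ_self)⟩

lemma tEnum_eq_of_le (ha : ∀ z < a, z ∈ T) (hb : ∀ z ∈ T, z < b) {x₀ x : ℕ}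
    (h₀ : tEnum T x₀ = a - 1) (hx : x₀ ≤ x) : tEnum T x = a - 1 - (x - x₀) := by
  induction x, hx using Nat.le_induction with
  | base => rw [h₀]; ring
  | succ x hx ih =>
    have hnext := isGreatest_tEnum_succ ha hb x
    have hlt : tEnum T (x + 1) < tEnum T x := hnext.1.2
    have hle := hnext.2 ⟨ha (tEnum T x - 1) (by omega), sub_one_lt (tEnum T x)⟩
    push_cast
    omega

theorem isBetaEnum_tEnum (ha : ∀ z < a, z ∈ T) (hb : ∀ z ∈ T, z < b) {F : Finset ℤ}
    (hF : ∀ z, z ∈ F ↔ z ∈ T ∧ a ≤ z) : IsBetaEnum T (a + F.card) (tEnum T) := by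
  have hanti := strictAnti_tEnum ha hb
  obtain ⟨x₀, h₀⟩ : a - 1 ∈ Set.range (tEnum T) := by
    rw [range_tEnum ha hb]
    exact ha _ (by omega)
  have hFimage : F = (Finset.range x₀).image (tEnum T) := by
    ext z
    rw [hF, Finset.mem_image]
    constructor
    · rintro ⟨hz, hx⟩
      obtain ⟨x, rfl⟩ := (range_tEnum ha hb).symm ▸ hz
      exact ⟨x, Finset.mem_range.2 (hanti.lt_iff_gt.1 (by omega)), rfl⟩
    · rintro ⟨x, hx, rfl⟩
      have := hanti (Finset.mem_range.1 hx)
      exact ⟨tEnum_mem ha hb x, by omega⟩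
  have hcard : F.card = x₀ := by
    rw [hFimage, Finset.card_image_of_injective _ hanti.injective, Finset.card_range]
  refine ⟨hanti, range_tEnum ha hb, x₀, fun x hx => ?_⟩
  rw [tEnum_eq_of_le ha hb h₀ hx, hcard]
  ring

end TEnum

section Nodes

variable {e r : ℕ} {T : Fin r → Set ℤ} {c : Fin r → ℤ} {t : Fin r → ℕ → ℤ} {A : Node r}

lemma exists_isMultipartition (h : ∀ s, IsBetaEnum (T s) (c s) (t s)) :
    ∃ L, IsMultipartition L fun s => betaPartition (c s) (t s) := by
  choose N hN using fun s => (h s).tail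
  refine ⟨Finset.univ.sup N, fun s x y hxy => ?_, fun s x hx => ?_⟩
  · have := add_le_add_of_strictAnti (h s).strictAnti hxy
    zify
    rw [(h s).cast_betaPartition, (h s).cast_betaPartition]
    omega
  · zify
    rw [(h s).cast_betaPartition, hN s x ((Finset.le_sup (Finset.mem_univ s)).trans hx)]
    ring

lemma res_eq_of_add_eq {k : ℕ} {z : ℤ} (hz : (A.2.2 : ℤ) + k = z + (A.2.1 + 1) - c A.1) :
    res (fun s => (c s : ZMod e)) A = (z : ZMod e) + 1 - k := by
  have := congrArg (Int.cast : ℤ → ZMod e) hz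
  push_cast at this
  rw [res]
  linear_combination this

lemma removable_betaPartition_iff (h : ∀ s, IsBetaEnum (T s) (c s) (t s)) :
    Removable (fun s => betaPartition (c s) (t s)) A ↔
      A.2.2 + 1 = betaPartition (c A.1) (t A.1) A.2.1 ∧ t A.1 A.2.1 - 1 ∉ T A.1 := by
  obtain ⟨s, x, y⟩ := A
  refine and_congr_right fun _ => ?_
  zify
  rw [(h s).cast_betaPartition, (h s).cast_betaPartition]
  have hlt := (h s).strictAnti (lt_add_one x)
  push_cast
  constructor
  · rintro hdrop hmem
    obtain ⟨y, hy⟩ := (h s).exists_eq hmem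
    have hxy : x < y := (h s).strictAnti.lt_iff_gt.1 (by omega)
    have := (h s).strictAnti.antitone (show x + 1 ≤ y from hxy)
    omega
  · intro hmem
    have : t s (x + 1) ≠ t s x - 1 := fun heq => hmem (heq ▸ (h s).mem _)
    omega

lemma Addable.betaPartition_succ_notMem (h : ∀ s, IsBetaEnum (T s) (c s) (t s))
    (hA : Addable (fun s => betaPartition (c s) (t s)) A) : t A.1 A.2.1 + 1 ∉ T A.1 := by
  obtain ⟨s, x, y⟩ := A
  intro hmem
  obtain ⟨x', hx'⟩ := (h s).exists_eq hmem
  have hlt : x' < x := (h s).strictAnti.lt_iff_gt.1 (by dsimp only at hx'; omega)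
  obtain ⟨x, rfl⟩ := Nat.exists_eq_add_one.2 (Nat.zero_lt_of_lt hlt)
  have hle := (h s).strictAnti.antitone (Nat.le_of_lt_add_one hlt)
  have hdrop := hA.2.resolve_left x.succ_ne_zero
  dsimp only at hdrop hx'
  zify at hdrop
  rw [Nat.add_sub_cancel, (h s).cast_betaPartition, (h s).cast_betaPartition] at hdrop
  omega

end Nodes

/-- The permutation of the positions of an abacus exchanging its runners `j - 1` and `j`. -/
def runnerSwap {e : ℕ} (j : ZMod e) (z : ℤ) : ℤ :=
  if (z : ZMod e) = j then z - 1 else if (z : ZMod e) = j - 1 then z + 1 else z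

/-- The decreasing enumeration of the β-set obtained from `T` by exchanging the runners `j - 1`
and `j`, provided that no bead of `T` can move from runner `j - 1` to runner `j`. -/
def reflectEnum {e : ℕ} (j : ZMod e) (T : Set ℤ) (t : ℕ → ℤ) (x : ℕ) : ℤ :=
  if (t x : ZMod e) = j ∧ t x - 1 ∉ T then t x - 1 else t x

section Reflection

variable {e : ℕ} {j : ZMod e} {T : Set ℤ} {c : ℤ} {t : ℕ → ℤ} {z : ℤ}

lemma runnerSwap_of_cast_eq (hz : (z : ZMod e) = j) : runnerSwap j z = z - 1 :=
  if_pos hz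

lemma runnerSwap_of_cast_eq_sub_one (he : 2 ≤ e) (hz : (z : ZMod e) = j - 1) :
    runnerSwap j z = z + 1 := by
  have : Fact (1 < e) := ⟨he⟩
  rw [runnerSwap, if_neg (by rw [hz, sub_eq_self]; exact one_ne_zero), if_pos hz]

lemma runnerSwap_of_ne (hz : (z : ZMod e) ≠ j) (hz' : (z : ZMod e) ≠ j - 1) :
    runnerSwap j z = z := by
  rw [runnerSwap, if_neg hz, if_neg hz']

lemma reflectEnum_mem_preimage (he : 2 ≤ e) (h : IsBetaEnum T c t)
    (hadd : ∀ z ∈ T, (z : ZMod e) = j - 1 → z + 1 ∈ T) (x : ℕ) :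
    reflectEnum j T t x ∈ runnerSwap j ⁻¹' T := by
  rw [reflectEnum, Set.mem_preimage]
  split_ifs with hmove
  · rw [runnerSwap_of_cast_eq_sub_one he (by push_cast; rw [hmove.1]), sub_add_cancel]
    exact h.mem x
  by_cases hj : (t x : ZMod e) = j
  · rw [runnerSwap_of_cast_eq hj]
    exact not_not.1 fun hT => hmove ⟨hj, hT⟩
  by_cases hj' : (t x : ZMod e) = j - 1
  · rw [runnerSwap_of_cast_eq_sub_one he hj']
    exact hadd _ (h.mem x) hj'
  · rw [runnerSwap_of_ne hj hj']
    exact h.mem x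

lemma exists_reflectEnum_eq (he : 2 ≤ e) (h : IsBetaEnum T c t)
    (hadd : ∀ z ∈ T, (z : ZMod e) = j - 1 → z + 1 ∈ T) (hz : runnerSwap j z ∈ T) :
    ∃ x, reflectEnum j T t x = z := by
  by_cases hj : (z : ZMod e) = j
  · rw [runnerSwap_of_cast_eq hj] at hz
    obtain ⟨x, rfl⟩ := h.exists_eq (sub_add_cancel z 1 ▸ hadd _ hz (by push_cast; rw [hj]))
    exact ⟨x, if_neg fun hmove => hmove.2 hz⟩
  by_cases hzT : z ∈ T
  · obtain ⟨x, rfl⟩ := h.exists_eq hzT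
    exact ⟨x, if_neg fun hmove => hj hmove.1⟩
  by_cases hj' : (z : ZMod e) = j - 1
  · rw [runnerSwap_of_cast_eq_sub_one he hj'] at hz
    obtain ⟨x, hx⟩ := h.exists_eq hz
    refine ⟨x, ?_⟩
    rw [reflectEnum, hx, add_sub_cancel_right, if_pos ⟨by push_cast; rw [hj', sub_add_cancel], hzT⟩]
  · rw [runnerSwap_of_ne hj hj'] at hz
    exact absurd hz hzT

lemma IsBetaEnum.reflectEnum (he : 2 ≤ e) (h : IsBetaEnum T c t)
    (hadd : ∀ z ∈ T, (z : ZMod e) = j - 1 → z + 1 ∈ T) :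
    IsBetaEnum (runnerSwap j ⁻¹' T) c (reflectEnum j T t) := by
  obtain ⟨N, hN⟩ := h.tail
  refine ⟨fun x y hxy => ?_, Set.Subset.antisymm ?_ fun z => exists_reflectEnum_eq he h hadd, N,
    fun x hx => ?_⟩
  · have hlt := h.strictAnti hxy
    unfold AK.reflectEnum
    split_ifs with hy hx hx
    · omega
    · omega
    · have : t y ≠ t x - 1 := fun heq => hx.2 (heq ▸ h.mem y)
      omega
    · exact hlt
  · exact Set.range_subset_iff.2 (reflectEnum_mem_preimage he h hadd)
  · have hnext : t x - 1 ∈ T := by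
      rw [show t x - 1 = t (x + 1) by rw [hN x hx, hN _ (Nat.le_succ_of_le hx)]; push_cast; ring]
      exact h.mem _
    rw [AK.reflectEnum, if_neg fun hmove => hmove.2 hnext, hN x hx]

end Reflection

section ReflectionKleshchev

variable {e r : ℕ} {j : ZMod e} {T : Fin r → Set ℤ} {c : Fin r → ℤ} {t : Fin r → ℕ → ℤ}

lemma stripResidue_betaPartition (he : 2 ≤ e) (h : ∀ s, IsBetaEnum (T s) (c s) (t s))
    (hadd : ∀ s, ∀ z ∈ T s, (z : ZMod e) = j - 1 → z + 1 ∈ T s) :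
    stripResidue (fun s => (c s : ZMod e)) j (fun s => betaPartition (c s) (t s)) =
      fun s => betaPartition (c s) (reflectEnum j (T s) (t s)) := by
  funext s x
  have hrow := (h s).cast_betaPartition x
  have hrow' := ((h s).reflectEnum he (hadd s)).cast_betaPartition x
  have hiff : (∃ y, Removable (fun s => betaPartition (c s) (t s)) (s, x, y) ∧
      res (fun s => (c s : ZMod e)) (s, x, y) = j) ↔ (t s x : ZMod e) = j ∧ t s x - 1 ∉ T s := by
    simp only [removable_betaPartition_iff h]
    constructor
    · rintro ⟨y, ⟨hy, hmem⟩, hj⟩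
      rw [res_eq_of_add_eq (k := 1) (z := t s x) (by dsimp only at hy ⊢; omega)] at hj
      exact ⟨by simpa using hj, hmem⟩
    · rintro ⟨hj, hmem⟩
      have hlt := (h s).strictAnti (lt_add_one x)
      have hnext := (h s).cast_betaPartition (x + 1)
      have hne : t s (x + 1) ≠ t s x - 1 := fun heq => hmem (heq ▸ (h s).mem _)
      refine ⟨betaPartition (c s) (t s) x - 1, ⟨by omega, hmem⟩, ?_⟩
      rw [res_eq_of_add_eq (k := 1) (z := t s x) (by push_cast; omega)]
      simpa using hj
  simp only [stripResidue, hiff]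
  rw [reflectEnum] at hrow'
  split_ifs at hrow' ⊢ <;> omega

theorem isKleshchev_reflectEnum_iff (he : 2 ≤ e) (h : ∀ s, IsBetaEnum (T s) (c s) (t s))
    (hadd : ∀ s, ∀ z ∈ T s, (z : ZMod e) = j - 1 → z + 1 ∈ T s) :
    IsKleshchev (fun s => (c s : ZMod e))
        (fun s => betaPartition (c s) (reflectEnum j (T s) (t s))) ↔
      IsKleshchev (fun s => (c s : ZMod e)) fun s => betaPartition (c s) (t s) := by
  obtain ⟨L, hL⟩ := exists_isMultipartition h
  rw [← stripResidue_betaPartition he h hadd]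
  refine isKleshchev_stripResidue_iff he hL fun B C hB hj _ _ => ?_
  refine absurd (hadd _ _ ((h B.1).mem B.2.1) ?_) (hB.betaPartition_succ_notMem h)
  have := res_eq_of_add_eq (e := e) (k := 0) (z := t B.1 B.2.1)
    (by rw [hB.1, (h _).cast_betaPartition, Nat.cast_zero, add_zero])
  rw [← hj, this]
  push_cast
  ring

end ReflectionKleshchev

/-! ### Abacuses -/

/-- The rank of runner `i` when the runners of an abacus are ordered by the positions `Q`. -/
def runnerRank {e : ℕ} [NeZero e] (Q : ZMod e → ℤ) (i : ZMod e) : ℕ :=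
  (Finset.univ.filter fun k => Q k < Q i).card

/-- The β-set whose first empty position on runner `i` is `Q i`, or `Q i + e` if `m` holds for the
rank of `i`. -/
def abacusSet {e : ℕ} [NeZero e] (Q : ZMod e → ℤ) (m : ℕ → Prop) : Set ℤ :=
  {z | z < Q z + if m (runnerRank Q z) then (e : ℤ) else 0}

/-- The tuple of positions obtained from `Q` by exchanging the runners `j - 1` and `j`. -/
def swapRunners {e : ℕ} (j : ZMod e) (Q : ZMod e → ℤ) (i : ZMod e) : ℤ :=
  runnerSwap j (Q (Equiv.swap j (j - 1) i))

section RunnerSwap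

variable {e : ℕ} {j : ZMod e} {z w : ℤ}

lemma cast_runnerSwap (j : ZMod e) (z : ℤ) :
    (runnerSwap j z : ZMod e) = Equiv.swap j (j - 1) (z : ZMod e) := by
  rw [runnerSwap, Equiv.swap_apply_def]
  split_ifs with hj hj'
  · push_cast
    rw [hj]
  · push_cast
    rw [hj', sub_add_cancel]
  · rfl

lemma runnerSwap_sub_self_congr (h : (z : ZMod e) = w) :
    runnerSwap j z - z = runnerSwap j w - w := by
  unfold runnerSwap
  rw [h]
  split_ifs <;> ring

lemma runnerSwap_runnerSwap (he : 2 ≤ e) (z : ℤ) : runnerSwap j (runnerSwap j z) = z := by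
  by_cases hj : (z : ZMod e) = j
  · rw [runnerSwap_of_cast_eq hj,
      runnerSwap_of_cast_eq_sub_one he (by push_cast; rw [hj]), sub_add_cancel]
  by_cases hj' : (z : ZMod e) = j - 1
  · rw [runnerSwap_of_cast_eq_sub_one he hj',
      runnerSwap_of_cast_eq (by push_cast; rw [hj', sub_add_cancel]), add_sub_cancel_right]
  · rw [runnerSwap_of_ne hj hj', runnerSwap_of_ne hj hj']

lemma runnerSwap_lt_runnerSwap (he : 2 ≤ e) (hzw : z < w)
    (h : (z : ZMod e) = j - 1 → w ≠ z + 1) : runnerSwap j z < runnerSwap j w := by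
  have hne : runnerSwap j z ≠ runnerSwap j w := fun heq => hzw.ne <| by
    rw [← runnerSwap_runnerSwap he z, heq, runnerSwap_runnerSwap he]
  by_cases hw : w = z + 1
  · have hz : (z : ZMod e) ≠ j - 1 := fun hz => h hz hw
    have hwj : (w : ZMod e) ≠ j := fun hwj => hz (by rw [← hwj, hw]; push_cast; ring)
    rw [runnerSwap, runnerSwap, if_neg hz, if_neg hwj]
    split_ifs <;> omega
  · unfold runnerSwap at hne ⊢
    split_ifs at hne ⊢ <;> omega

end RunnerSwap

section Abacus

variable {e : ℕ} {Q Q' : ZMod e → ℤ} {j : ZMod e} {m : ℕ → Prop}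

lemma swapRunners_swap (i : ZMod e) :
    swapRunners j Q (Equiv.swap j (j - 1) i) = runnerSwap j (Q i) := by
  rw [swapRunners, Equiv.swap_apply_self]

lemma cast_swapRunners (hQ : ∀ i, (Q i : ZMod e) = i) (i : ZMod e) :
    (swapRunners j Q i : ZMod e) = i := by
  rw [swapRunners, cast_runnerSwap, hQ, Equiv.swap_apply_self]

lemma apply_add_natCast_le (h : ∀ j, Q j ≤ Q (j - 1) + 1) (i : ZMod e) (k : ℕ) :
    Q (i + k) ≤ Q i + k := by
  induction k with
  | zero => simp
  | succ k ih =>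
    have := h (i + (k + 1 : ℕ))
    rw [show i + ((k + 1 : ℕ) : ZMod e) - 1 = i + k by push_cast; ring] at this
    push_cast at this ⊢
    linarith

variable [NeZero e]

lemma runnerRank_congr (σ : Equiv.Perm (ZMod e))
    (h : ∀ k i, Q' (σ k) < Q' (σ i) ↔ Q k < Q i) (i : ZMod e) :
    runnerRank Q' (σ i) = runnerRank Q i :=
  (Finset.card_equiv σ fun k => by simp only [Finset.mem_filter_univ, h]).symm

lemma runnerRank_swapRunners (he : 2 ≤ e) (hQ : ∀ i, (Q i : ZMod e) = i)
    (hj : Q (j - 1) + 1 < Q j) (i : ZMod e) :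
    runnerRank (swapRunners j Q) (Equiv.swap j (j - 1) i) = runnerRank Q i := by
  have hmono : ∀ k i, Q k < Q i → runnerSwap j (Q k) < runnerSwap j (Q i) := fun k i hki =>
    runnerSwap_lt_runnerSwap he hki fun hk heq => by
      rw [hQ] at hk
      have hi : i = j := by rw [← hQ i, heq, Int.cast_add, hQ, hk]; simp
      rw [hk, hi] at heq
      omega
  refine runnerRank_congr _ (fun k i => ?_) i
  rw [swapRunners_swap, swapRunners_swap]
  refine ⟨fun h => lt_of_not_ge fun hle => ?_, hmono k i⟩
  rcases hle.lt_or_eq with hlt | heq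
  · exact (hmono i k hlt).not_gt h
  · exact h.ne (by rw [heq])

lemma abacusSet_swapRunners (he : 2 ≤ e) (hQ : ∀ i, (Q i : ZMod e) = i)
    (hj : Q (j - 1) + 1 < Q j) :
    abacusSet (swapRunners j Q) m = runnerSwap j ⁻¹' abacusSet Q m := by
  ext z
  have hrank := runnerRank_swapRunners he hQ hj (Equiv.swap j (j - 1) z)
  have hshift := runnerSwap_sub_self_congr (j := j)
    (cast_runnerSwap j z |>.trans (hQ (Equiv.swap j (j - 1) z)).symm)
  rw [runnerSwap_runnerSwap he] at hshift
  rw [Equiv.swap_apply_self] at hrank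
  simp only [abacusSet, Set.mem_preimage, Set.mem_ofPred_eq, hrank, cast_runnerSwap, swapRunners]
  constructor <;> intro h <;> linarith

lemma add_one_mem_abacusSet (hQ : ∀ i, (Q i : ZMod e) = i) (hj : Q (j - 1) + 1 < Q j) {z : ℤ}
    (hz : z ∈ abacusSet Q m) (hzj : (z : ZMod e) = j - 1) : z + 1 ∈ abacusSet Q m := by
  have hgap : (e : ℤ) ∣ Q j - (Q (j - 1) + 1) := by
    rw [← ZMod.intCast_zmod_eq_zero_iff_dvd]
    push_cast
    rw [hQ, hQ]
    ring
  have := Int.le_of_dvd (by omega) hgap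
  have hzj' : ((z + 1 : ℤ) : ZMod e) = j := by
    push_cast
    rw [hzj, sub_add_cancel]
  simp only [abacusSet, Set.mem_ofPred_eq, hzj, hzj'] at hz ⊢
  split_ifs at hz ⊢ <;> omega

lemma sum_sq_swapRunners_lt (he : 2 ≤ e) (hQ : ∀ i, (Q i : ZMod e) = i)
    (hj : Q (j - 1) + 1 < Q j) : ∑ i, swapRunners j Q i ^ 2 < ∑ i, Q i ^ 2 := by
  have : Fact (1 < e) := ⟨he⟩
  have hterm : ∀ i, runnerSwap j (Q i) ^ 2 =
      Q i ^ 2 + ((if i = j then 1 - 2 * Q j else 0) +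
        if i = j - 1 then 2 * Q (j - 1) + 1 else 0) := fun i => by
    rw [runnerSwap, hQ]
    split_ifs with h1 h2 h2
    · exact absurd (h1.symm.trans h2).symm (by simp)
    · rw [h1]; ring
    · rw [h2]; ring
    · ring
  calc ∑ i, swapRunners j Q i ^ 2 = ∑ i, runnerSwap j (Q i) ^ 2 := by
        rw [← Equiv.sum_comp (Equiv.swap j (j - 1))]
        simp only [swapRunners_swap]
    _ = ∑ i, Q i ^ 2 + (1 - 2 * Q j + (2 * Q (j - 1) + 1)) := by
        simp only [hterm, Finset.sum_add_distrib, Finset.sum_ite_eq', Finset.mem_univ, if_true]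
    _ < ∑ i, Q i ^ 2 := by linarith

lemma exists_eq_add_val (hQ : ∀ i, (Q i : ZMod e) = i) (h : ∀ j, Q j ≤ Q (j - 1) + 1) :
    ∃ N : ℤ, ∀ i, Q i = N + (i - N).val := by
  obtain ⟨i₀, -, hmin⟩ := Finset.exists_min_image Finset.univ Q Finset.univ_nonempty
  refine ⟨Q i₀, fun i => ?_⟩
  rw [hQ]
  have hle := apply_add_natCast_le h i₀ (i - i₀).val
  rw [ZMod.natCast_zmod_val, add_sub_cancel] at hle
  have hlt := ZMod.val_lt (i - i₀)
  have hdvd : (e : ℤ) ∣ Q i₀ + (i - i₀).val - Q i := by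
    rw [← ZMod.intCast_zmod_eq_zero_iff_dvd]
    push_cast
    rw [hQ, hQ, ZMod.natCast_zmod_val]
    ring
  have := hmin i (Finset.mem_univ i)
  have := Int.eq_zero_of_dvd_of_nonneg_of_lt (by omega) (by omega) hdvd
  omega

lemma abacusSet_of_translate {v : ℤ} (h : ∀ i : ZMod e, Q' (i + v) = Q i + v) :
    abacusSet Q' m = {z | z - v ∈ abacusSet Q m} := by
  ext z
  have hrank := runnerRank_congr (Q := Q) (Q' := Q') (Equiv.addRight (v : ZMod e))
    (fun k i => by simp only [Equiv.coe_addRight, h, add_lt_add_iff_right]) (z - v)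
  have hz := h (z - v)
  simp only [Equiv.coe_addRight, sub_add_cancel] at hrank
  rw [sub_add_cancel] at hz
  simp only [abacusSet, Set.mem_ofPred_eq, Int.cast_sub, hz, hrank]
  constructor <;> intro h <;> linarith

end Abacus

section AbacusKleshchev

variable {e r : ℕ} {a : Fin r → ZMod e} {m : Fin r → ℕ → Prop} {c c' : Fin r → ℤ}
  {t t' : Fin r → ℕ → ℤ}

lemma res_add (a : Fin r → ZMod e) (v : ZMod e) (A : Node r) :
    res (fun s => a s + v) A = res a A + v := by
  unfold res
  ring

lemma IsKleshchev.add_const {lam : Fin r → ℕ → ℕ} (h : IsKleshchev a lam) (v : ZMod e) :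
    IsKleshchev (fun s => a s + v) lam := by
  induction h with
  | empty => exact .empty
  | step lam A hA _ ih =>
    refine .step lam A ?_ ih
    simpa only [Good, Normal, res_add, add_left_inj] using hA

lemma isKleshchev_add_const_iff {lam : Fin r → ℕ → ℕ} (v : ZMod e) :
    IsKleshchev (fun s => a s + v) lam ↔ IsKleshchev a lam :=
  ⟨fun h => by simpa using h.add_const (-v), fun h => h.add_const v⟩

variable [NeZero e] {Q Q' : ZMod e → ℤ}

lemma exists_abacus_no_gap (he : 2 ≤ e) (hQ : ∀ i, (Q i : ZMod e) = i)
    (h : ∀ s, IsBetaEnum (abacusSet Q (m s)) (c s) (t s)) :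
    ∃ (Q₀ : ZMod e → ℤ) (t₀ : Fin r → ℕ → ℤ), (∀ i, (Q₀ i : ZMod e) = i) ∧
      (∀ j, Q₀ j ≤ Q₀ (j - 1) + 1) ∧ (∀ s, IsBetaEnum (abacusSet Q₀ (m s)) (c s) (t₀ s)) ∧
      (IsKleshchev (fun s => (c s : ZMod e)) (fun s => betaPartition (c s) (t₀ s)) ↔
        IsKleshchev (fun s => (c s : ZMod e)) fun s => betaPartition (c s) (t s)) := by
  induction hn : (∑ i, Q i ^ 2).toNat using Nat.strong_induction_on generalizing Q t with
  | _ n ih =>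
    by_cases hgap : ∃ j, Q (j - 1) + 1 < Q j
    · obtain ⟨j, hj⟩ := hgap
      have hadd : ∀ s, ∀ z ∈ abacusSet Q (m s), (z : ZMod e) = j - 1 →
          z + 1 ∈ abacusSet Q (m s) := fun s z => add_one_mem_abacusSet hQ hj
      have hlt := sum_sq_swapRunners_lt he hQ hj
      have hnonneg : 0 ≤ ∑ i, swapRunners j Q i ^ 2 := Finset.sum_nonneg fun i _ => sq_nonneg _
      obtain ⟨Q₀, t₀, hQ₀, hgap₀, h₀, hiff⟩ := ih _ (by omega) (cast_swapRunners (j := j) hQ)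
        (fun s => by
          rw [abacusSet_swapRunners he hQ hj]
          exact (h s).reflectEnum he (hadd s)) rfl
      exact ⟨Q₀, t₀, hQ₀, hgap₀, h₀, hiff.trans (isKleshchev_reflectEnum_iff he h hadd)⟩
    · push Not at hgap
      exact ⟨Q, t, hQ, hgap, h, Iff.rfl⟩

lemma isKleshchev_abacus_translate_iff {v : ℤ} (hv : ∀ i : ZMod e, Q' (i + v) = Q i + v)
    (h : ∀ s, IsBetaEnum (abacusSet Q (m s)) (c s) (t s))
    (h' : ∀ s, IsBetaEnum (abacusSet Q' (m s)) (c' s) (t' s)) :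
    IsKleshchev (fun s => (c' s : ZMod e)) (fun s => betaPartition (c' s) (t' s)) ↔
      IsKleshchev (fun s => (c s : ZMod e)) fun s => betaPartition (c s) (t s) := by
  have heq := fun s => (h' s).unique (abacusSet_of_translate hv ▸ (h s).add_int v)
  simp only [fun s => (heq s).1, fun s => (heq s).2, betaPartition_add, Int.cast_add]
  exact isKleshchev_add_const_iff _

theorem isKleshchev_abacus_iff (he : 2 ≤ e) (hQ : ∀ i, (Q i : ZMod e) = i)
    (hQ' : ∀ i, (Q' i : ZMod e) = i) (h : ∀ s, IsBetaEnum (abacusSet Q (m s)) (c s) (t s))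
    (h' : ∀ s, IsBetaEnum (abacusSet Q' (m s)) (c' s) (t' s)) :
    IsKleshchev (fun s => (c s : ZMod e)) (fun s => betaPartition (c s) (t s)) ↔
      IsKleshchev (fun s => (c' s : ZMod e)) fun s => betaPartition (c' s) (t' s) := by
  obtain ⟨Q₀, t₀, hQ₀, hgap, h₀, hiff⟩ := exists_abacus_no_gap he hQ h
  obtain ⟨Q₀', t₀', hQ₀', hgap', h₀', hiff'⟩ := exists_abacus_no_gap he hQ' h'
  obtain ⟨N, hN⟩ := exists_eq_add_val hQ₀ hgap
  obtain ⟨N', hN'⟩ := exists_eq_add_val hQ₀' hgap'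
  rw [← hiff, ← hiff']
  refine (isKleshchev_abacus_translate_iff (v := N' - N) (fun i => ?_) h₀ h₀').symm
  rw [hN, hN', Int.cast_sub, show i + (N' - N : ZMod e) - N' = i - N by ring]
  ring

end AbacusKleshchev

/-! ### The abacuses of `Pt(B, M)` -/

/-- Runners of an abacus, indexed by residues modulo `e`, correspond to the columns of a matrix,
indexed by `0, …, e - 1`. -/
def columnEquiv (e : ℕ) [NeZero e] : ZMod e ≃ Fin e where
  toFun i := ⟨i.val, i.val_lt⟩
  invFun i := (i : ℕ)
  left_inv i := by simp
  right_inv i := by simp [ZMod.val_natCast_of_lt i.2]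

/-- The first empty position on runner `i` of the abacus with `B i` beads on each runner `i`. -/
def basePosition {e : ℕ} [NeZero e] (B : Fin e → ℕ) (i : ZMod e) : ℤ :=
  (columnEquiv e i + e * B (columnEquiv e i) : ℕ)

section BaseTuple

lemma add_mul_lt_add_mul_iff {e x y a b : ℕ} (hx : x < e) (hy : y < e) :
    x + e * a < y + e * b ↔ a < b ∨ a = b ∧ x < y := by
  rcases lt_trichotomy a b with hab | rfl | hab
  · have := Nat.mul_le_mul_left e (Nat.succ_le_of_lt hab)
    rw [Nat.mul_succ] at this
    omega
  · omega
  · have := Nat.mul_le_mul_left e (Nat.succ_le_of_lt hab)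
    rw [Nat.mul_succ] at this
    omega

lemma add_mul_mem_Tset_iff {e r : ℕ} (B : Fin e → ℕ) (M : Fin r → Fin e → Bool) (s : Fin r)
    (i : Fin e) (k : ℕ) :
    ((i + e * k : ℕ) : ℤ) ∈ Tset B M s ↔ k < beads B M s i := by
  have hmod : (i + e * k) % e = i := by rw [Nat.add_mul_mod_self_left, Nat.mod_eq_of_lt i.2]
  have hdiv : (i + e * k) / e = k := by
    rw [Nat.add_mul_div_left _ _ i.pos, Nat.div_eq_of_lt i.2, zero_add]
  simp only [Tset, Set.mem_ofPred_eq, Int.toNat_natCast, (Int.natCast_nonneg _).not_gt,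
    Int.natCast_nonneg, hmod, hdiv, Fin.is_lt, Fin.eta, exists_true_left, false_or, true_and]

variable {e r : ℕ} [NeZero e] (B : Fin e → ℕ) (M : Fin r → Fin e → Bool) (s : Fin r)

lemma exists_eq_add_mul (n : ℕ) : ∃ (i : Fin e) (k : ℕ), n = i + e * k :=
  ⟨Fin.ofNat e n, n / e, (Nat.mod_add_div n e).symm⟩

lemma exists_finset_Tset :
    ∃ F : Finset ℤ, F.card = nsum B M s ∧ ∀ z, z ∈ F ↔ z ∈ Tset B M s ∧ 0 ≤ z := by
  refine ⟨(Finset.univ.sigma fun i => Finset.range (beads B M s i)).image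
    fun p => ((p.1 + e * p.2 : ℕ) : ℤ), ?_, fun z => ?_⟩
  · rw [Finset.card_image_of_injective, Finset.card_sigma]
    · simp only [Finset.card_range, nsum]
    · rintro ⟨i, k⟩ ⟨i', k'⟩ heq
      have hlt := add_mul_lt_add_mul_iff (a := k) (b := k') i.2 i'.2
      have hgt := add_mul_lt_add_mul_iff (a := k') (b := k) i'.2 i.2
      dsimp only at heq
      obtain rfl : i = i' := by ext; omega
      obtain rfl : k = k' := by omega
      rfl
  · rw [Finset.mem_image]
    constructor
    · rintro ⟨⟨i, k⟩, hk, rfl⟩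
      simp only [Finset.mem_sigma, Finset.mem_univ, Finset.mem_range, true_and] at hk
      exact ⟨(add_mul_mem_Tset_iff ..).2 hk, Nat.cast_nonneg _⟩
    · rintro ⟨hz, hz0⟩
      obtain ⟨n, rfl⟩ := Int.eq_ofNat_of_zero_le hz0
      obtain ⟨i, k, rfl⟩ := exists_eq_add_mul (e := e) n
      exact ⟨⟨i, k⟩, by simpa using (add_mul_mem_Tset_iff ..).1 hz, rfl⟩

lemma isBetaEnum_Tset : IsBetaEnum (Tset B M s) (nsum B M s) (tEnum (Tset B M s)) := by
  obtain ⟨F, hcard, hF⟩ := exists_finset_Tset B M s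
  obtain ⟨b, hb⟩ := F.bddAbove
  rw [← hcard, ← zero_add (F.card : ℤ)]
  refine isBetaEnum_tEnum (b := max b 0 + 1) (fun z hz => .inl hz) (fun z hz => ?_) hF
  rcases lt_or_ge z 0 with hz0 | hz0
  · omega
  · have := hb ((hF z).2 ⟨hz, hz0⟩)
    omega

lemma cast_basePosition (i : ZMod e) : (basePosition B i : ZMod e) = i := by
  simp [basePosition, columnEquiv]

lemma basePosition_lt_iff (k i : ZMod e) :
    basePosition B k < basePosition B i ↔ prec B (columnEquiv e k) (columnEquiv e i) := by
  rw [basePosition, basePosition, Nat.cast_lt, add_mul_lt_add_mul_iff (Fin.is_lt _) (Fin.is_lt _)]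
  rfl

lemma runnerRank_basePosition (i : ZMod e) :
    runnerRank (basePosition B) i = rank B (columnEquiv e i) := by
  change (Finset.univ.filter fun k => basePosition B k < basePosition B i).card =
    (Finset.univ.filter fun k => prec B k (columnEquiv e i)).card
  exact Finset.card_equiv (columnEquiv e) fun k => by
    simp only [Finset.mem_filter_univ, basePosition_lt_iff]

lemma Tset_eq_abacusSet :
    Tset B M s = abacusSet (basePosition B) fun n => ∃ h : n < e, M s ⟨n, h⟩ = true := by
  ext z
  simp only [abacusSet, Set.mem_ofPred_eq, runnerRank_basePosition, Fin.is_lt, exists_true_left]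
  rcases lt_or_ge z 0 with hz | hz
  · refine iff_of_true (.inl hz) (hz.trans_le (add_nonneg (Nat.cast_nonneg _) ?_))
    split_ifs <;> omega
  obtain ⟨n, rfl⟩ := Int.eq_ofNat_of_zero_le hz
  obtain ⟨i, k, rfl⟩ := exists_eq_add_mul (e := e) n
  have hcolumn : columnEquiv e (((i + e * k : ℕ) : ℤ) : ZMod e) = i := by
    rw [← Equiv.eq_symm_apply]
    simp [columnEquiv]
  have hlt := add_mul_lt_add_mul_iff (a := k) (b := beads B M s i) i.2 i.2
  simp only [add_mul_mem_Tset_iff, basePosition, hcolumn, Fin.eta]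
  rw [beads] at hlt ⊢
  split_ifs at hlt ⊢ <;> push_cast [Nat.mul_add] at hlt ⊢ <;> omega

lemma isBetaEnum_abacusSet :
    IsBetaEnum (abacusSet (basePosition B) fun n => ∃ h : n < e, M s ⟨n, h⟩ = true) (nsum B M s)
      (tEnum (Tset B M s)) := by
  rw [← Tset_eq_abacusSet]
  exact isBetaEnum_Tset B M s

end BaseTuple

theorem kleshchev_baseTuple_independent_general {e r : ℕ} (he : 2 ≤ e) (B B' : Fin e → ℕ)
    (M : Fin r → Fin e → Bool) :
    IsKleshchev (PtCharge B M) (PtPart B M) ↔ IsKleshchev (PtCharge B' M) (PtPart B' M) := by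
  have : NeZero e := ⟨by omega⟩
  have hcharge : ∀ B, PtCharge B M = fun s => ((nsum B M s : ℤ) : ZMod e) := fun B => by
    funext s
    rw [PtCharge, Int.cast_natCast]
  rw [hcharge, hcharge]
  exact isKleshchev_abacus_iff he (cast_basePosition B) (cast_basePosition B')
    (isBetaEnum_abacusSet B M) (isBetaEnum_abacusSet B' M)

/-- Kleshchevness of `Pt(B,M)` is independent of the base tuple `B`. -/
theorem kleshchev_baseTuple_independent (e r : ℕ) (he : 2 ≤ e) (hr : 1 ≤ r)
    (B : Fin e → ℕ) (hB : ∃ i, B i = 0)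
    (M : Fin r → Fin e → Bool) (hM : ∀ i : Fin e, ∃ s : Fin r, M s i = false) :
    IsKleshchev (PtCharge B M) (PtPart B M) ↔
      IsKleshchev (PtCharge (fun _ => 0) M) (PtPart (fun _ => 0) M) :=
  kleshchev_baseTuple_independent_general he B _ M


end
end AK
end

section
/- Let e ≥ 2, r = 3, with D^u as above for a fixed u ∈ {1,…,6}, and let M ∈ D^u. Then Pt(0,M) is Kleshchev (with respect to its multicharge) if and only if M belongs to the following list: for u = 1: {γ^1_{kl} : i_k < j_l and l ≠ z+1} ∪ {γ^1_{kl} : j_l < i_k and k ≠ y+1} ∪ {α^1_k : i_k < j_{z+1}} ∪ {β^1_l : j_l < i_{y+1}}; for u = 2 or u = 3: {γ^u_{kl} : j_l < i_k, or (k ≠ 1 and l ≠ z+1)} ∪ {α^u_k : k ≠ 1 and i_k < j_{z+1}} ∪ {β^u_l : i_1 < j_l}; for u = 4 or u = 5: {γ^u_{kl} : i_k < j_l, or (l ≠ 1 and k ≠ y+1)} ∪ {α^u_k : k ≠ y+1 and j_1 < i_k} ∪ {β^u_l : j_l < i_{y+1}}; for u = 6: {γ^6_{kl} : i_k < j_l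 and k ≠ 1} ∪ {γ^6_{kl} : j_l < i_k and l ≠ 1} ∪ {α^6_k : j_1 < i_k} ∪ {β^6_l : i_1 < j_l}. -/
open scoped Classical

namespace AK
noncomputable section



/-! ### The families `α^u_k`, `β^u_l`, `γ^u_{kl}` for `r = 3` -/

def xcol : Fin 6 → Fin 3 → Bool := fun _ => ![false, false, false]

def ycol : Fin 6 → Fin 3 → Bool :=
  ![![false,true,true], ![true,false,false], ![true,true,false],
    ![false,false,true], ![false,true,true], ![true,false,false]]

def zcol : Fin 6 → Fin 3 → Bool :=
  ![![false,false,true], ![true,false,true], ![false,true,false],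
    ![true,false,true], ![false,true,false], ![true,true,false]]

def oycol : Fin 6 → Fin 3 → Bool :=
  ![![true,false,true], ![false,false,true], ![false,true,true],
    ![true,false,false], ![true,true,false], ![false,true,false]]

def ozcol : Fin 6 → Fin 3 → Bool :=
  ![![false,true,false], ![true,true,false], ![true,false,false],
    ![false,true,true], ![false,false,true], ![true,false,true]]

def aacol : Fin 6 → Fin 3 → Bool :=
  ![![true,true,false], ![false,true,false], ![true,false,true],
    ![false,true,false], ![true,false,true], ![false,false,true]]

def abcol : Fin 6 → Fin 3 → Bool :=
  ![![true,false,false], ![false,true,true], ![false,false,true],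
    ![true,true,false], ![true,false,false], ![false,true,true]]

variable {e : ℕ}

/-- The matrix `α^u_k`. -/
def alphaM (Y Z : Finset (Fin e)) {y : ℕ} (hY : Y.card = y + 1) (u : Fin 6)
    (k : Fin (y + 1)) : Fin 3 → Fin e → Bool :=
  fun s c =>
    if c = Y.orderEmbOfFin hY k then aacol u s
    else if c ∈ Y then ycol u s
    else if c ∈ Z then zcol u s
    else false

/-- The matrix `β^u_l`. -/
def betaM (Y Z : Finset (Fin e)) {z : ℕ} (hZ : Z.card = z + 1) (u : Fin 6)
    (l : Fin (z + 1)) : Fin 3 → Fin e → Bool :=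
  fun s c =>
    if c = Z.orderEmbOfFin hZ l then abcol u s
    else if c ∈ Z then zcol u s
    else if c ∈ Y then ycol u s
    else false

/-- The matrix `γ^u_{kl}`. -/
def gammaM (Y Z : Finset (Fin e)) {y z : ℕ} (hY : Y.card = y + 1) (hZ : Z.card = z + 1)
    (u : Fin 6) (k : Fin (y + 1)) (l : Fin (z + 1)) : Fin 3 → Fin e → Bool :=
  fun s c =>
    if c = Y.orderEmbOfFin hY k then oycol u s
    else if c = Z.orderEmbOfFin hZ l then ozcol u s
    else if c ∈ Y then ycol u s
    else if c ∈ Z then zcol u s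
    else false

/-- The set `D^u` of matrices in the block. -/
def Duset (Y Z : Finset (Fin e)) {y z : ℕ} (hY : Y.card = y + 1) (hZ : Z.card = z + 1)
    (u : Fin 6) : Set (Fin 3 → Fin e → Bool) :=
  {A | (∃ k, A = alphaM Y Z hY u k) ∨ (∃ l, A = betaM Y Z hZ u l) ∨
       (∃ k l, A = gammaM Y Z hY hZ u k l)}

/-!
A matrix `M` encodes `Pt(0,M)` so that removing a node of residue `b` moves a bead of one row from
column `b` to column `b - 1`. Call `M` bounded if no path which visits one row in each column, with
the rows weakly descending in index, collects more beads than every single row contains. The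
signature rule for good nodes is what makes moving a good bead preserve boundedness, both of `M` and
of the matrix `dual M` obtained by reversing the columns and exchanging beads and gaps. Moving good
beads leads to a matrix without normal beads, and for at most three rows such a matrix encodes the
empty multipartition if it and its dual are bounded. Hence `Pt(0,M)` is Kleshchev if and only if
`M` and `dual M` are bounded.

A matrix in `D^u` contains two complementary columns, so that no row has a bead in every nonempty
column, but some row fails in only one of them. Boundedness therefore means that no descending path
meets a bead in every nonempty column. As the columns of type `Y` and `Z` are nested, this depends
only on which of the intervals cut out by the special columns meet `Y` and `Z`.
-/

/-! ### The signature of two adjacent columns -/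

section Signature

variable {ρ : Type*} {p q : ρ → Bool}

/-- Row `s` has a bead in the column `q` which can move to the preceding column `p`. -/
def RemovableAt (p q : ρ → Bool) (s : ρ) : Prop := p s = false ∧ q s = true

/-- Row `s` has a bead in the column `p` which can move to the following column `q`. -/
def AddableAt (p q : ρ → Bool) (s : ρ) : Prop := p s = true ∧ q s = false

lemma removableAt_not_not : RemovableAt (fun t => !q t) (fun t => !p t) = RemovableAt p q := by
  ext; simp [RemovableAt, and_comm]

lemma addableAt_not_not : AddableAt (fun t => !q t) (fun t => !p t) = AddableAt p q := by
  ext; simp [AddableAt, and_comm]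

variable [LinearOrder ρ] {s d d' : ρ}

/-- The counterpart of `Normal` for the rows of two adjacent columns `p` and `q`. -/
def NormalAt (p q : ρ → Bool) (s : ρ) : Prop :=
  RemovableAt p q s ∧ ∀ t, AddableAt p q t → s < t →
    {x | AddableAt p q x ∧ s < x ∧ x < t}.ncard < {x | RemovableAt p q x ∧ s < x ∧ x < t}.ncard

/-- The counterpart of `Good` for the rows of two adjacent columns `p` and `q`. -/
def GoodAt (p q : ρ → Bool) (s : ρ) : Prop := IsLeast {s | NormalAt p q s} s

lemma normalAt_not_not : NormalAt (fun t => !q t) (fun t => !p t) = NormalAt p q := by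
  ext; simp only [NormalAt, removableAt_not_not, addableAt_not_not]

lemma goodAt_not_not : GoodAt (fun t => !q t) (fun t => !p t) = GoodAt p q := by
  ext; simp only [GoodAt, normalAt_not_not]

lemma NormalAt.exists_removableAt_between (hs : NormalAt p q s) (hd : AddableAt p q d)
    (hsd : s < d) : ∃ t, RemovableAt p q t ∧ s < t ∧ t < d :=
  Set.nonempty_of_ncard_ne_zero (Nat.ne_zero_of_lt (hs.2 d hd hsd))

lemma GoodAt.exists_addableAt_between [Finite ρ] (hs : GoodAt p q s) (hd : RemovableAt p q d)
    (hds : d < s) : ∃ t, AddableAt p q t ∧ d < t ∧ t < s := by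
  by_contra! hnone
  have hbeyond : ∀ t, AddableAt p q t → d < t → s < t := fun t ht hdt =>
    (hnone t ht hdt).lt_of_ne (by rintro rfl; exact Bool.false_ne_true (hs.1.1.1.symm.trans ht.1))
  have hnormal : NormalAt p q d := by
    refine ⟨hd, fun t ht hdt => ?_⟩
    calc {x | AddableAt p q x ∧ d < x ∧ x < t}.ncard
        ≤ {x | AddableAt p q x ∧ s < x ∧ x < t}.ncard :=
          Set.ncard_le_ncard fun x hx => ⟨hx.1, hbeyond x hx.1 hx.2.1, hx.2.2⟩
      _ < {x | RemovableAt p q x ∧ s < x ∧ x < t}.ncard := hs.1.2 t ht (hbeyond t ht hdt)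
      _ ≤ {x | RemovableAt p q x ∧ d < x ∧ x < t}.ncard :=
          Set.ncard_le_ncard fun x hx => ⟨hx.1, hds.trans hx.2.1, hx.2.2⟩
  exact hds.not_ge (hs.2 hnormal)

lemma exists_addableAt_gt_of_not_normalAt (hd : RemovableAt p q d) (hn : ¬ NormalAt p q d) :
    ∃ t, AddableAt p q t ∧ d < t := by
  by_contra! hnone
  exact hn ⟨hd, fun t ht hdt => absurd hdt (hnone t ht).not_gt⟩

lemma exists_goodAt [Finite ρ] (hs : NormalAt p q s) : ∃ t, GoodAt p q t :=
  (Set.toFinite _).exists_minimal ⟨s, hs⟩ |>.imp fun _ ht =>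
    ⟨ht.1, fun _ hx => le_of_not_gt fun hlt => hlt.not_ge (ht.2 hx hlt.le)⟩

/-- Moving the bead of a good row from `q` to `p` does not decrease the number of beads which a
descending step through the columns `p` and `q` can collect. -/
lemma GoodAt.exists_step_after_move (hs : GoodAt p q s) (hd : d' ≤ d) :
    ∃ t t', d' ≤ t' ∧ t' ≤ t ∧ t ≤ d ∧ (p d).toNat + (q d').toNat ≤
      (Function.update p s true t).toNat + (Function.update q s false t').toNat := by
  have hp : ∀ t, (p t).toNat ≤ (Function.update p s true t).toNat := fun t => by
    obtain rfl | ht := eq_or_ne t s <;> simp [*, Bool.toNat_le]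
  obtain rfl | hne := eq_or_ne d' s
  · cases hpd : p d
    · exact ⟨d', d', le_rfl, le_rfl, hd, by simp [Bool.toNat_le]⟩
    · have hlt : d' < d := hd.lt_of_ne (by rintro rfl; simp [hs.1.1.1] at hpd)
      obtain ⟨t, hst, htd, hqt⟩ : ∃ t, d' < t ∧ t ≤ d ∧ q t = true := by
        cases hqd : q d
        · obtain ⟨t, ht, hst, htd⟩ := hs.1.exists_removableAt_between ⟨hpd, hqd⟩ hlt
          exact ⟨t, hst, htd.le, ht.2⟩
        · exact ⟨d, hlt, le_rfl, hqd⟩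
      exact ⟨d, t, hst.le, htd, le_rfl, by
        have := Bool.toNat_le (q d')
        simp only [Function.update_of_ne hlt.ne', Function.update_of_ne hst.ne', hpd, hqt,
          Bool.toNat_true]
        omega⟩
  · exact ⟨d, d', le_rfl, hd, le_rfl, by simpa [hne] using hp d⟩

lemma GoodAt.exists_step_before_move [Finite ρ] (hs : GoodAt p q s) (hd : d' ≤ d) :
    ∃ t t', d' ≤ t' ∧ t' ≤ t ∧ t ≤ d ∧
      (Function.update p s true d).toNat + (Function.update q s false d').toNat ≤
        (p t).toNat + (q t').toNat := by
  have hq : ∀ t, (Function.update q s false t).toNat ≤ (q t).toNat := fun t => by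
    obtain rfl | ht := eq_or_ne t s <;> simp [*]
  obtain rfl | hne := eq_or_ne d s
  · cases hqd : Function.update q d false d'
    · exact ⟨d, d, hd, le_rfl, le_rfl, by simp [hs.1.1.2]⟩
    · have hlt : d' < d := hd.lt_of_ne (by rintro rfl; simp at hqd)
      rw [Function.update_of_ne hlt.ne] at hqd
      obtain ⟨t, hst, htd, hpt⟩ : ∃ t, d' ≤ t ∧ t < d ∧ p t = true := by
        cases hpd : p d'
        · obtain ⟨t, ht, hst, htd⟩ := hs.exists_addableAt_between ⟨hpd, hqd⟩ hlt
          exact ⟨t, hst.le, htd, ht.1⟩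
        · exact ⟨d', le_rfl, hlt, hpd⟩
      exact ⟨t, d', le_rfl, hst, htd.le, by simp [hqd, hpt]⟩
  · exact ⟨d, d', le_rfl, hd, le_rfl, by simpa [hne] using hq d'⟩

end Signature

/-! ### Descending paths through a matrix -/

/-- The matrix with its columns in reverse order and beads and gaps exchanged. -/
def dual {ρ ι : Type*} (M : ρ → ι → Bool) : ρ → ιᵒᵈ → Bool :=
  fun s i => !M s (OrderDual.ofDual i)

/-- The number of beads on the path through `M` which visits the row `r i` in column `i`. -/
def pathCount {ρ ι : Type*} [Fintype ι] (M : ρ → ι → Bool) (r : ι → ρ) :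
    ℕ := ∑ i, (M (r i) i).toNat

section MoveBead

variable {ρ ι : Type*} [DecidableEq ρ] [DecidableEq ι] {M : ρ → ι → Bool} {s : ρ} {a b : ι}

/-- The matrix after exchanging the entries of row `s` in the columns `a` and `b`. -/
def moveBead (M : ρ → ι → Bool) (s : ρ) (a b : ι) : ρ → ι → Bool :=
  Function.update M s (M s ∘ Equiv.swap a b)

lemma dual_moveBead : dual (moveBead M s a b) =
    moveBead (dual M) s (OrderDual.toDual b) (OrderDual.toDual a) := by
  ext t i
  obtain rfl | ht := eq_or_ne t s
  · simp only [dual, moveBead, Equiv.swap_comm a b, Function.update_self, Function.comp_apply,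
      Equiv.swap_apply_def, apply_ite OrderDual.ofDual, OrderDual.ofDual_toDual]
    rfl
  · simp [dual, moveBead, ht]

lemma moveBead_apply_left (hb : M s b = true) :
    (fun t => moveBead M s a b t a) = Function.update (fun t => M t a) s true := by
  ext t; obtain rfl | ht := eq_or_ne t s <;> simp [moveBead, *]

lemma moveBead_apply_right (ha : M s a = false) :
    (fun t => moveBead M s a b t b) = Function.update (fun t => M t b) s false := by
  ext t; obtain rfl | ht := eq_or_ne t s <;> simp [moveBead, *]

lemma moveBead_apply_of_ne {i : ι} (ha : i ≠ a) (hb : i ≠ b) (t : ρ) :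
    moveBead M s a b t i = M t i := by
  obtain rfl | ht := eq_or_ne t s <;> simp [moveBead, Equiv.swap_apply_of_ne_of_ne, *]

lemma pathCount_const_moveBead [Fintype ι] (t : ρ) :
    pathCount (moveBead M s a b) (fun _ => t) = pathCount M fun _ => t := by
  obtain rfl | ht := eq_or_ne t s
  · simpa [pathCount, moveBead] using Equiv.sum_comp (Equiv.swap a b) fun i => (M t i).toNat
  · simp [pathCount, moveBead, ht]

end MoveBead

section Paths

variable {ρ ι : Type*} {M M' : ρ → ι → Bool} {r r' : ι → ρ} {s : ρ} {a b : ι}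

/-- The path `r` meets a bead in every column which has one. -/
def Saturating (M : ρ → ι → Bool) (r : ι → ρ) : Prop :=
  ∀ i t, M t i = true → M (r i) i = true

variable [Fintype ι]

lemma pathCount_le_card (M : ρ → ι → Bool) (r : ι → ρ) : pathCount M r ≤ Fintype.card ι :=
  (Finset.sum_le_sum fun i _ => Bool.toNat_le (M (r i) i)).trans_eq (by simp)

lemma Saturating.of_pathCount_le (hr : Saturating M r) (h : pathCount M r ≤ pathCount M r') :
    Saturating M r' := by
  have hle : ∀ i ∈ Finset.univ, (M (r' i) i).toNat ≤ (M (r i) i).toNat :=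
    fun i _ => Bool.toNat_le_toNat fun h => hr i _ h
  have heq := (Finset.sum_eq_sum_iff_of_le hle).1 (h.antisymm' (Finset.sum_le_sum hle))
  intro i t ht
  simpa [hr i t ht] using heq i (Finset.mem_univ i)

lemma pathCount_le_of_le_off_pair (hab : a ≠ b)
    (h : (M (r a) a).toNat + (M (r b) b).toNat ≤ (M' (r' a) a).toNat + (M' (r' b) b).toNat)
    (hoff : ∀ i, i ≠ a → i ≠ b → M (r i) i ≤ M' (r' i) i) :
    pathCount M r ≤ pathCount M' r' := by
  simp only [pathCount, Fintype.sum_eq_add_sum_compl a, ← Finset.add_sum_erase _ _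
    (Finset.mem_compl.2 (Finset.notMem_singleton.2 hab.symm)), ← add_assoc]
  refine add_le_add h (Finset.sum_le_sum fun i hi => Bool.toNat_le_toNat ?_)
  simp only [Finset.mem_erase, Finset.mem_compl, Finset.mem_singleton] at hi
  exact hoff i hi.2 hi.1

variable [LinearOrder ρ] [LinearOrder ι]

/-- Each path descending from row to row collects at most as many beads as some row contains. -/
def PathBounded (M : ρ → ι → Bool) : Prop :=
  ∀ r : ι → ρ, Antitone r → ∃ s, pathCount M r ≤ pathCount M fun _ => s

omit [Fintype ι] in
lemma antitone_update_update (hab : a ⋖ b) (hr : Antitone r) {t t' : ρ} (h' : r b ≤ t')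
    (htt : t' ≤ t) (h : t ≤ r a) : Antitone (Function.update (Function.update r a t) b t') := by
  have hbelow : ∀ i, i ≤ b → i = b ∨ i ≤ a := fun i hi =>
    hi.eq_or_lt.imp_right fun h => hab.le_of_lt h
  have habove : ∀ i, a ≤ i → i = a ∨ b ≤ i := fun i hi =>
    hi.eq_or_lt.imp Eq.symm fun h => hab.ge_of_gt h
  have hanti : ∀ i j, i ≤ j → r j ≤ r i := fun i j hij => hr hij
  have hlt := hab.lt
  intro i j hij
  simp only [Function.update_apply]
  grind

lemma PathBounded.of_step (h : PathBounded M') (hab : a ⋖ b)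
    (hrow : ∀ s, pathCount M' (fun _ => s) = pathCount M fun _ => s)
    (hoff : ∀ i, i ≠ a → i ≠ b → ∀ t, M t i = M' t i)
    (hstep : ∀ d d', d' ≤ d → ∃ t t', d' ≤ t' ∧ t' ≤ t ∧ t ≤ d ∧
      (M d a).toNat + (M d' b).toNat ≤ (M' t a).toNat + (M' t' b).toNat) : PathBounded M := by
  intro r hr
  obtain ⟨t, t', h1, h2, h3, hle⟩ := hstep (r a) (r b) (hr hab.le)
  obtain ⟨s, hs⟩ := h _ (antitone_update_update hab hr h1 h2 h3)
  refine ⟨s, le_trans ?_ (hs.trans_eq (hrow s))⟩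
  refine pathCount_le_of_le_off_pair hab.ne (by simpa [hab.ne] using hle) fun i hia hib => ?_
  simp [hia, hib, hoff i hia hib]

lemma GoodAt.pathBounded_moveBead_iff [Finite ρ] (hab : a ⋖ b)
    (hs : GoodAt (fun t => M t a) (fun t => M t b) s) :
    PathBounded (moveBead M s a b) ↔ PathBounded M := by
  have hleft := congrFun (moveBead_apply_left (a := a) hs.1.1.2)
  have hright := congrFun (moveBead_apply_right (b := b) hs.1.1.1)
  refine ⟨fun h => h.of_step hab pathCount_const_moveBead
      (fun i hia hib t => (moveBead_apply_of_ne hia hib t).symm) fun d d' hd => ?_,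
    fun h => h.of_step hab (fun s => (pathCount_const_moveBead s).symm)
      (fun i hia hib t => moveBead_apply_of_ne hia hib t) fun d d' hd => ?_⟩
  · simpa only [hleft, hright] using hs.exists_step_after_move hd
  · simpa only [hleft, hright] using hs.exists_step_before_move hd

lemma GoodAt.pathBounded_dual_moveBead_iff [Finite ρ] (hab : a ⋖ b)
    (hs : GoodAt (fun t => M t a) (fun t => M t b) s) :
    PathBounded (dual (moveBead M s a b)) ↔ PathBounded (dual M) := by
  rw [← goodAt_not_not] at hs
  rw [dual_moveBead]
  exact hs.pathBounded_moveBead_iff (M := dual M) hab.toDual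

omit [Fintype ι] [LinearOrder ρ] in
lemma le_total_of_antitone (hM : ∀ s, Antitone (M s)) (s t : ρ) : M s ≤ M t ∨ M t ≤ M s := by
  by_contra! h
  obtain ⟨⟨i, hi⟩, j, hj⟩ : (∃ i, M t i < M s i) ∧ ∃ j, M s j < M t j := by
    simpa [Pi.le_def] using h
  have no_chain : ∀ x y z : Bool, x < y → ¬ y < z := by decide
  obtain hij | hji := le_total i j
  · exact no_chain _ _ _ hj ((hM t hij).trans_lt hi)
  · exact no_chain _ _ _ hi ((hM s hji).trans_lt hj)

lemma pathBounded_of_antitone [Finite ρ] [Nonempty ρ] (hM : ∀ s, Antitone (M s)) :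
    PathBounded M := by
  have hdir : Directed (· ≤ ·) M := fun s t =>
    (le_total_of_antitone hM s t).elim (fun h => ⟨t, h, le_rfl⟩) fun h => ⟨s, le_rfl, h⟩
  obtain ⟨s, hs⟩ := hdir.finite_le id
  exact fun r _ => ⟨s, Finset.sum_le_sum fun i _ => Bool.toNat_le_toNat (hs (r i) i)⟩

lemma pathBounded_dual_of_antitone [Finite ρ] [Nonempty ρ] (hM : ∀ s, Antitone (M s)) :
    PathBounded (dual M) :=
  pathBounded_of_antitone fun s _ _ hij => compl_le_compl (hM s hij)

/-! ### Matrices without normal rows -/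

/-- No bead of `M` can be moved to the preceding column as a normal one. -/
def NoNormalRow (M : ρ → ι → Bool) : Prop :=
  ∀ a b, a ⋖ b → ∀ s, ¬ NormalAt (fun t => M t a) (fun t => M t b) s

omit [Fintype ι] in
lemma NoNormalRow.dual (hM : NoNormalRow M) : NoNormalRow (dual M) := fun a b hab s hs =>
  hM b.ofDual a.ofDual hab.ofDual s (by rwa [← normalAt_not_not])

omit [Fintype ι] in
lemma NoNormalRow.exists_antitone_saturating [LocallyFiniteOrder ι] [Finite ρ] [OrderBot ρ]
    (hM : NoNormalRow M) : ∃ r : ι → ρ, Antitone r ∧ Saturating M r := by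
  have := Fintype.ofFinite ρ
  have hle : ∀ {i t}, M t i = true → t ≤ ({t | M t i = true} : Finset ρ).sup id := fun h =>
    Finset.le_sup (f := id) ((Finset.mem_filter_univ _).2 h)
  refine ⟨fun i => ({t | M t i = true} : Finset ρ).sup id, ?_, fun i t ht => ?_⟩
  · rw [antitone_iff_forall_covBy]
    refine fun a b hab => Finset.sup_le fun t ht => ?_
    rw [Finset.mem_filter_univ] at ht
    cases hta : M t a
    · obtain ⟨t', ht', htt'⟩ := exists_addableAt_gt_of_not_normalAt
        (p := fun t => M t a) ⟨hta, ht⟩ (hM a b hab t)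
      exact htt'.le.trans (hle ht'.1)
    · exact hle hta
  · have hne : ({t | M t i = true} : Finset ρ).Nonempty := ⟨t, (Finset.mem_filter_univ _).2 ht⟩
    obtain ⟨t', ht', heq⟩ := Finset.exists_mem_eq_sup _ hne id
    simpa only [heq, id_eq] using (Finset.mem_filter_univ _).1 ht'

lemma NoNormalRow.exists_saturating_row [LocallyFiniteOrder ι] [Finite ρ] [OrderBot ρ]
    (hM : NoNormalRow M) (hbdd : PathBounded M) : ∃ s, Saturating M fun _ => s := by
  obtain ⟨r, hr, hsat⟩ := hM.exists_antitone_saturating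
  exact (hbdd r hr).imp fun s hs => hsat.of_pathCount_le hs

/-- The bead of a removable row, the gap of an addable row, and the two saturating rows give four
different patterns in two adjacent columns, which is too many for three rows. -/
lemma NoNormalRow.antitone [LocallyFiniteOrder ι] [Fintype ρ] [OrderBot ρ]
    (hρ : Fintype.card ρ ≤ 3) (hM : NoNormalRow M) (hbdd : PathBounded M)
    (hdual : PathBounded (AK.dual M)) (s : ρ) : Antitone (M s) := by
  obtain ⟨full, hfull⟩ := hM.exists_saturating_row hbdd
  obtain ⟨sparse, hsparse⟩ := hM.dual.exists_saturating_row hdual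
  rw [antitone_iff_forall_covBy]
  intro a b hab
  by_contra! hs
  obtain ⟨hsa, hsb⟩ := Bool.lt_iff.1 hs
  obtain ⟨t, ⟨hta, htb⟩, -⟩ := exists_addableAt_gt_of_not_normalAt
    (p := fun t => M t a) ⟨hsa, hsb⟩ (hM a b hab s)
  have hgap : ∀ {i t}, M t i = false → M sparse i = false := fun {i t} h =>
    Bool.not_eq_true' _ ▸ hsparse (OrderDual.toDual i) t (by simpa [AK.dual] using h)
  have hsurj : Function.Surjective fun t => (M t a, M t b)
    | (false, false) => ⟨sparse, Prod.ext (hgap hsa) (hgap htb)⟩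
    | (false, true) => ⟨s, Prod.ext hsa hsb⟩
    | (true, false) => ⟨t, Prod.ext hta htb⟩
    | (true, true) => ⟨full, Prod.ext (hfull a t hta) (hfull b s hsb)⟩
  exact absurd (Fintype.card_le_of_surjective _ hsurj) (by simpa using by omega)

end Paths

/-! ### Decreasing enumerations of sets of integers -/

section Enumeration

variable {T : Set ℤ}

lemma tEnum_mem_s4 (hT : BddAbove T) (hT' : ¬ BddBelow T) : ∀ x, tEnum T x ∈ T
  | 0 => Int.csSup_mem (nonempty_of_not_bddBelow hT') hT
  | x + 1 => (Int.csSup_mem (not_bddBelow_iff.1 hT' (tEnum T x)) (hT.mono Set.inter_subset_left)).1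

lemma strictAnti_tEnum_s4 (hT : BddAbove T) (hT' : ¬ BddBelow T) : StrictAnti (tEnum T) :=
  strictAnti_nat_of_succ_lt fun x =>
    (Int.csSup_mem (not_bddBelow_iff.1 hT' (tEnum T x)) (hT.mono Set.inter_subset_left)).2

lemma range_tEnum_s4 (hT : BddAbove T) (hT' : ¬ BddBelow T) : Set.range (tEnum T) = T := by
  refine Set.Subset.antisymm (Set.range_subset_iff.2 (tEnum_mem_s4 hT hT')) fun z hz => ?_
  have hex : ∃ x, tEnum T x ≤ z := by
    obtain ⟨_, ⟨x, rfl⟩, hx⟩ := not_bddBelow_iff.1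
      (StrictAnti.not_bddBelow_range_of_isPredArchimedean (strictAnti_tEnum_s4 hT hT')) z
    exact ⟨x, hx.le⟩
  refine ⟨Nat.find hex, (Nat.find_spec hex).antisymm ?_⟩
  rcases hx : Nat.find hex with - | x
  · exact le_csSup hT hz
  · exact le_csSup (hT.mono Set.inter_subset_left)
      ⟨hz, not_le.1 (Nat.find_min hex (hx ▸ Nat.lt_succ_self x))⟩

lemma sub_one_notMem_range_iff {f : ℕ → ℤ} (hf : StrictAnti f) (x : ℕ) :
    f x - 1 ∉ Set.range f ↔ f (x + 1) < f x - 1 := by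
  have hlt := hf x.lt_succ_self
  refine ⟨fun h => lt_of_le_of_ne (Int.le_sub_one_of_lt hlt) fun he => h ⟨_, he⟩, ?_⟩
  rintro h ⟨x', hx'⟩
  have h₁ : x < x' := hf.lt_iff_gt.1 (by omega)
  have h₂ : x' < x + 1 := hf.lt_iff_gt.1 (by omega)
  omega

lemma add_one_notMem_range_iff {f : ℕ → ℤ} (hf : StrictAnti f) (x : ℕ) :
    f x + 1 ∉ Set.range f ↔ x = 0 ∨ f x + 1 < f (x - 1) := by
  refine ⟨fun h => x.eq_zero_or_pos.imp_right fun hx => ?_, ?_⟩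
  · have hlt := hf (Nat.sub_lt hx one_pos)
    exact lt_of_le_of_ne hlt fun he => h ⟨_, he.symm⟩
  · rintro h ⟨x', hx'⟩
    have h₁ : x' < x := hf.lt_iff_gt.1 (by omega)
    have h₂ : x - 1 < x' := hf.lt_iff_gt.1 (by omega)
    omega

lemma strictAnti_update_sub_one {f : ℕ → ℤ} (hf : StrictAnti f) {x : ℕ}
    (hx : f (x + 1) < f x - 1) : StrictAnti (Function.update f x (f x - 1)) := by
  refine strictAnti_nat_of_succ_lt fun x' => ?_
  have hlt := hf x'.lt_succ_self
  simp only [Function.update_apply]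
  grind

lemma range_update_of_injective {α β : Type*} [DecidableEq α] {f : α → β}
    (hf : Function.Injective f) (x : α) (y : β) :
    Set.range (Function.update f x y) = insert y (Set.range f \ {f x}) := by
  ext z
  simp only [Set.mem_range, Set.mem_insert_iff, Set.mem_sdiff, Set.mem_singleton_iff]
  constructor
  · rintro ⟨x', rfl⟩
    obtain rfl | hne := eq_or_ne x' x
    · simp
    · simp [hne, hf.ne hne]
  · rintro (rfl | ⟨⟨x', rfl⟩, hne⟩)
    · exact ⟨x, by simp⟩
    · exact ⟨x', Function.update_of_ne (fun h => hne (congrArg f h)) _ _⟩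

end Enumeration

/-! ### The multipartition of a matrix -/

section Multipartition

variable {r : ℕ} (M : Fin r → Fin e → Bool) (s : Fin r)

/-- The multipartition `Pt(0,M)`. -/
abbrev pt : Fin r → ℕ → ℕ := PtPart (fun _ => 0) M

/-- The multicharge of `Pt(0,M)`. -/
abbrev ptCharge : Fin r → ZMod e := PtCharge (fun _ => 0) M

/-- The β-set of the component `s` of `Pt(0,M)`. -/
abbrev betaSet : Set ℤ := Tset (fun _ => 0) M s

/-- The β-number of the part `x + 1` of the component `s` of `Pt(0,M)`. -/
def betaNumber (x : ℕ) : ℤ := pt M s x + pathCount M (fun _ => s) - (x + 1)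

lemma rank_zero (i : Fin e) : rank (fun _ => 0) i = i := by
  ext; simp [rank, prec, Finset.filter_gt_eq_Iio]

lemma beads_zero (i : Fin e) : beads (fun _ => 0) M s i = (M s i).toNat := by
  simp [beads, rank_zero, Bool.toNat, Bool.cond_eq_ite]

lemma nsum_zero : nsum (fun _ => 0) M s = pathCount M fun _ => s := by
  simp [nsum, beads_zero, pathCount]

variable {M s}

lemma mem_betaSet_iff {z : ℤ} :
    z ∈ betaSet M s ↔ z < 0 ∨ ∃ i : Fin e, (i : ℤ) = z ∧ M s i = true := by
  refine or_congr_right ?_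
  constructor
  · rintro ⟨hz, hlt, h⟩
    rw [beads_zero] at h
    have hdiv : z.toNat / e = 0 := Nat.lt_one_iff.1 (h.trans_le (Bool.toNat_le _))
    have hmod : z.toNat % e = z.toNat :=
      Nat.mod_eq_of_lt ((Nat.div_eq_zero_iff_lt (by omega)).1 hdiv)
    exact ⟨⟨_, hlt⟩, by simp [hmod, hz], by simpa [hdiv, Nat.pos_iff_ne_zero] using h⟩
  · rintro ⟨i, rfl, hi⟩
    simp [beads_zero, Nat.mod_eq_of_lt, hi]

lemma coe_mem_betaSet_iff {i : Fin e} : (i : ℤ) ∈ betaSet M s ↔ M s i = true := by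
  simp [mem_betaSet_iff, ← Fin.ext_iff]

lemma bddAbove_betaSet : BddAbove (betaSet M s) := by
  refine ⟨e, fun z hz => ?_⟩
  obtain hz | ⟨i, rfl, -⟩ := mem_betaSet_iff.1 hz <;> omega

lemma not_bddBelow_betaSet : ¬ BddBelow (betaSet M s) :=
  not_bddBelow_iff.2 fun z => ⟨min z 0 - 1, mem_betaSet_iff.2 (Or.inl (by omega)), by omega⟩

lemma pathCount_le_tEnum (x : ℕ) :
    (pathCount M (fun _ => s) : ℤ) ≤ tEnum (betaSet M s) x + (x + 1) := by
  let t := tEnum (betaSet M s)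
  let B : Finset ℤ := (Finset.univ.filter fun i => M s i = true).image fun i : Fin e => (i : ℤ)
  have hB : B.card = pathCount M fun _ => s := by
    rw [Finset.card_image_of_injective _ fun i j h => Fin.ext (by simpa using h),
      Finset.card_filter]
    simp only [pathCount, Bool.toNat, Bool.cond_eq_ite]
  have hdisj : Disjoint B (Finset.Ico (t x) 0) :=
    Finset.disjoint_left.2 fun z hz hz' => by
      simp only [B, Finset.mem_image, Finset.mem_Ico] at hz hz'
      omega
  have hsub : B ∪ Finset.Ico (t x) 0 ⊆
      (Finset.range (x + 1)).image t ∪ Finset.Ico 0 (t x) := by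
    intro z hz
    have hmem : z ∈ betaSet M s := by
      refine mem_betaSet_iff.2 ((Finset.mem_union.1 hz).symm.imp (fun h => ?_) fun h => ?_)
      · exact (Finset.mem_Ico.1 h).2
      · simpa [B, and_comm] using h
    obtain ⟨x', rfl⟩ := (range_tEnum_s4 bddAbove_betaSet not_bddBelow_betaSet).ge hmem
    obtain hx | hx := le_or_gt x' x
    · exact Finset.mem_union_left _
        (Finset.mem_image_of_mem _ (Finset.mem_range.2 (Nat.lt_succ_of_le hx)))
    · have hlt : t x' < t x := strictAnti_tEnum_s4 bddAbove_betaSet not_bddBelow_betaSet hx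
      refine Finset.mem_union_right _ (Finset.mem_Ico.2 ⟨?_, hlt⟩)
      simp only [B, t, Finset.mem_union, Finset.mem_image, Finset.mem_Ico] at hz hlt ⊢
      omega
  have hcard := (Finset.card_le_card hsub).trans (Finset.card_union_le _ _)
  have himage := Finset.card_image_le (s := Finset.range (x + 1)) (f := t)
  rw [Finset.card_union_of_disjoint hdisj, hB, Int.card_Ico, Int.card_Ico] at hcard
  rw [Finset.card_range] at himage
  change _ ≤ t x + (x + 1)
  omega

lemma betaNumber_eq_tEnum : betaNumber M s = tEnum (betaSet M s) := by
  ext x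
  have := pathCount_le_tEnum (M := M) (s := s) x
  simp only [betaNumber, PtPart, nsum_zero, betaSet] at *
  omega

lemma strictAnti_betaNumber : StrictAnti (betaNumber M s) :=
  betaNumber_eq_tEnum ▸ strictAnti_tEnum_s4 bddAbove_betaSet not_bddBelow_betaSet

lemma range_betaNumber : Set.range (betaNumber M s) = betaSet M s :=
  betaNumber_eq_tEnum ▸ range_tEnum_s4 bddAbove_betaSet not_bddBelow_betaSet

lemma eq_pt_of_range_eq {l : ℕ → ℕ}
    (hl : StrictAnti fun x : ℕ => (l x + pathCount M (fun _ => s) - (x + 1) : ℤ))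
    (hrange : Set.range (fun x : ℕ => (l x + pathCount M (fun _ => s) - (x + 1) : ℤ)) =
      betaSet M s) : l = pt M s := by
  have h := (StrictMono.range_inj (γ := ℤᵒᵈ) hl.dual_right strictAnti_betaNumber.dual_right).1
    (hrange.trans range_betaNumber.symm)
  ext x
  have hx : (l x + pathCount M (fun _ => s) - (x + 1) : ℤ) = betaNumber M s x := congrFun h x
  rw [betaNumber] at hx
  omega

/-! ### Nodes and beads -/

/-- The integer `n_s - x + y` of the node `(s, x, y)`, whose class modulo `e` is the residue. -/
def content (M : Fin r → Fin e → Bool) (A : Node r) : ℤ :=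
  pathCount M (fun _ => A.1) - A.2.1 + A.2.2

lemma res_ptCharge (A : Node r) : res (ptCharge M) A = (content M A : ZMod e) := by
  simp [res, PtCharge, nsum_zero, content]

lemma removable_pt_iff {A : Node r} : Removable (pt M) A ↔
    betaNumber M A.1 A.2.1 = content M A ∧ content M A - 1 ∉ betaSet M A.1 := by
  have hx : betaNumber M A.1 A.2.1 = content M A ↔ A.2.2 + 1 = pt M A.1 A.2.1 := by
    rw [betaNumber, content]; omega
  rw [Removable, hx]
  refine and_congr_right fun h => ?_
  rw [← hx.2 h, ← range_betaNumber, sub_one_notMem_range_iff strictAnti_betaNumber,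
    betaNumber, betaNumber]
  push_cast
  omega

lemma addable_pt_iff {A : Node r} : Addable (pt M) A ↔
    betaNumber M A.1 A.2.1 = content M A - 1 ∧ content M A ∉ betaSet M A.1 := by
  have hx : betaNumber M A.1 A.2.1 = content M A - 1 ↔ A.2.2 = pt M A.1 A.2.1 := by
    rw [betaNumber, content]; omega
  rw [Addable, hx]
  refine and_congr_right fun h => ?_
  rw [← sub_add_cancel (content M A) 1, ← hx.2 h, ← range_betaNumber,
    add_one_notMem_range_iff strictAnti_betaNumber, betaNumber, betaNumber]
  omega

lemma exists_removable_iff {c : ℤ} : (∃ A : Node r, A.1 = s ∧ Removable (pt M) A ∧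
    content M A = c) ↔ c - 1 ∉ betaSet M s ∧ c ∈ betaSet M s := by
  simp only [removable_pt_iff]
  constructor
  · rintro ⟨A, rfl, ⟨hA, hgap⟩, rfl⟩
    exact ⟨hgap, range_betaNumber.le ⟨_, hA⟩⟩
  · rintro ⟨hgap, hbead⟩
    obtain ⟨x, rfl⟩ := range_betaNumber.ge hbead
    have hlt : betaNumber M s (x + 1) < betaNumber M s x - 1 :=
      (sub_one_notMem_range_iff strictAnti_betaNumber x).1 (range_betaNumber ▸ hgap)
    have hc : content M (s, x, pt M s x - 1) = betaNumber M s x := by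
      simp only [betaNumber, content] at hlt ⊢; omega
    exact ⟨(s, x, pt M s x - 1), rfl, by simp [hc, hgap], hc⟩

lemma exists_addable_iff {c : ℤ} : (∃ A : Node r, A.1 = s ∧ Addable (pt M) A ∧
    content M A = c) ↔ c - 1 ∈ betaSet M s ∧ c ∉ betaSet M s := by
  simp only [addable_pt_iff]
  constructor
  · rintro ⟨A, rfl, ⟨hA, hgap⟩, rfl⟩
    exact ⟨range_betaNumber.le ⟨_, hA⟩, hgap⟩
  · rintro ⟨hbead, hgap⟩
    obtain ⟨x, hx⟩ := range_betaNumber.ge hbead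
    have hc : content M (s, x, pt M s x) = c := by rw [betaNumber] at hx; simp only [content]; omega
    exact ⟨(s, x, pt M s x), rfl, by simp [hc, hx, hgap], hc⟩

variable {a b : Fin e} {A B C : Node r}

lemma Removable.exists_content_eq (hA : Removable (pt M) A) :
    ∃ a b : Fin e, a ⋖ b ∧ content M A = b := by
  obtain ⟨hgap, hbead⟩ := exists_removable_iff.1 ⟨A, rfl, hA, rfl⟩
  have hpos : ¬ content M A - 1 < 0 := fun h => hgap (mem_betaSet_iff.2 (Or.inl h))
  obtain ⟨b, hb, -⟩ := (mem_betaSet_iff.1 hbead).resolve_left (by omega)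
  refine ⟨⟨b - 1, by omega⟩, b, Fin.covBy_iff.2 (Nat.covBy_iff_add_one_eq.2 ?_), hb.symm⟩
  simp only
  omega

/-- A node which is removable or addable. -/
def IsBoundary (M : Fin r → Fin e → Bool) (A : Node r) : Prop :=
  Removable (pt M) A ∨ Addable (pt M) A

lemma IsBoundary.content_mem_Icc (hA : IsBoundary M A) : content M A ∈ Set.Icc (0 : ℤ) e := by
  have hlow : ∀ {z s}, z ∉ betaSet M s → 0 ≤ z := fun h =>
    not_lt.1 fun hz => h (mem_betaSet_iff.2 (Or.inl hz))
  have hhigh : ∀ {z s}, z ∈ betaSet M s → z < e := fun h => by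
    obtain hz | ⟨i, rfl, -⟩ := mem_betaSet_iff.1 h <;> omega
  obtain hA | hA := hA
  · obtain ⟨hgap, hbead⟩ := exists_removable_iff.1 ⟨A, rfl, hA, rfl⟩
    constructor <;> linarith [hlow hgap, hhigh hbead]
  · obtain ⟨hbead, hgap⟩ := exists_addable_iff.1 ⟨A, rfl, hA, rfl⟩
    constructor <;> linarith [hlow hgap, hhigh hbead]

/-- The boundary contents lie between `0` and `e`, so that only `0` and `e` share a residue. -/
lemma IsBoundary.res_eq_iff (hab : a ⋖ b) (hA : IsBoundary M A) :
    res (ptCharge M) A = (b : ℕ) ↔ content M A = b := by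
  have hpos : (0 : ℕ) < b := a.1.zero_le.trans_lt hab.lt
  obtain ⟨hlow, hhigh⟩ := hA.content_mem_Icc
  rw [res_ptCharge, ← Int.cast_natCast, ZMod.intCast_eq_intCast_iff]
  refine ⟨fun h => ?_, fun h => h ▸ rfl⟩
  obtain ⟨m, hm⟩ := h.dvd
  have hm₁ : m < 1 := by by_contra! h; nlinarith [b.2]
  have hm₂ : -1 < m := by by_contra! h; nlinarith [b.2]
  obtain rfl : m = 0 := by omega
  omega

lemma intCast_eq_of_covBy (hab : a ⋖ b) : (a : ℤ) = b - 1 := by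
  have := Nat.covBy_iff_add_one_eq.1 (Fin.covBy_iff.1 hab)
  omega

lemma removableAt_iff (hab : a ⋖ b) : RemovableAt (fun t => M t a) (fun t => M t b) s ↔
    ∃ A, A.1 = s ∧ Removable (pt M) A ∧ res (ptCharge M) A = (b : ℕ) := by
  rw [RemovableAt, ← Bool.not_eq_true, ← coe_mem_betaSet_iff, ← coe_mem_betaSet_iff,
    intCast_eq_of_covBy hab, ← exists_removable_iff]
  exact exists_congr fun A => and_congr_right fun _ => and_congr_right fun h =>
    (IsBoundary.res_eq_iff hab (Or.inl h)).symm

lemma addableAt_iff (hab : a ⋖ b) : AddableAt (fun t => M t a) (fun t => M t b) s ↔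
    ∃ A, A.1 = s ∧ Addable (pt M) A ∧ res (ptCharge M) A = (b : ℕ) := by
  rw [AddableAt, ← Bool.not_eq_true, ← coe_mem_betaSet_iff, ← coe_mem_betaSet_iff,
    intCast_eq_of_covBy hab, ← exists_addable_iff]
  exact exists_congr fun A => and_congr_right fun _ => and_congr_right fun h =>
    (IsBoundary.res_eq_iff hab (Or.inr h)).symm

lemma IsBoundary.eq_of_content_eq (hA : IsBoundary M A) (hB : IsBoundary M B) (hrow : A.1 = B.1)
    (hc : content M A = content M B) : A = B := by
  obtain ⟨s, x, y⟩ := A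
  obtain ⟨_, x', y'⟩ := B
  obtain rfl : s = _ := hrow
  simp only [IsBoundary, removable_pt_iff, addable_pt_iff, hc, ← range_betaNumber] at hA hB
  have hx : betaNumber M s x = betaNumber M s x' := by
    obtain ⟨hx, -⟩ | ⟨hx, hgap⟩ := hA <;> obtain ⟨hx', -⟩ | ⟨hx', hgap'⟩ := hB
    · exact hx.trans hx'.symm
    · exact absurd ⟨x, hx⟩ hgap'
    · exact absurd ⟨x', hx'⟩ hgap
    · exact hx.trans hx'.symm
  obtain rfl : x = x' := strictAnti_betaNumber.injective hx
  simp only [content] at hc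
  obtain rfl : y = y' := by omega
  rfl

lemma IsBoundary.eq_of_res_eq (hab : a ⋖ b) (hA : IsBoundary M A) (hB : IsBoundary M B)
    (hrA : res (ptCharge M) A = (b : ℕ)) (hrB : res (ptCharge M) B = (b : ℕ)) (hrow : A.1 = B.1) :
    A = B :=
  hA.eq_of_content_eq hB hrow
    (((hA.res_eq_iff hab).1 hrA).trans ((hB.res_eq_iff hab).1 hrB).symm)

lemma IsBoundary.nodeAbove_iff (hab : a ⋖ b) (hA : IsBoundary M A) (hB : IsBoundary M B)
    (hrA : res (ptCharge M) A = (b : ℕ)) (hrB : res (ptCharge M) B = (b : ℕ)) :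
    NodeAbove A B ↔ A.1 < B.1 := by
  refine or_iff_left ?_
  rintro ⟨hrow, hlt⟩
  rw [hA.eq_of_res_eq hab hB hrA hrB hrow] at hlt
  exact lt_irrefl _ hlt

lemma IsBoundary.ncard_between (hab : a ⋖ b) (hA : IsBoundary M A) (hB : IsBoundary M B)
    (hrA : res (ptCharge M) A = (b : ℕ)) (hrB : res (ptCharge M) B = (b : ℕ))
    {P : Node r → Prop} {Q : Fin r → Prop} (hP : ∀ C, P C → IsBoundary M C)
    (hQ : ∀ t, Q t ↔ ∃ C : Node r, C.1 = t ∧ P C ∧ res (ptCharge M) C = (b : ℕ)) :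
    {C | P C ∧ res (ptCharge M) C = (b : ℕ) ∧ NodeAbove A C ∧ NodeAbove C B}.ncard =
      {t | Q t ∧ A.1 < t ∧ t < B.1}.ncard := by
  rw [← Set.InjOn.ncard_image (f := Prod.fst) fun C hC D hD h =>
    (hP C hC.1).eq_of_res_eq hab (hP D hD.1) hC.2.1 hD.2.1 h]
  congr 1
  ext t
  simp only [Set.mem_image, Set.mem_ofPred_eq, hQ]
  constructor
  · rintro ⟨C, ⟨hC, hr, hAC, hCB⟩, rfl⟩
    exact ⟨⟨C, rfl, hC, hr⟩, (hA.nodeAbove_iff hab (hP C hC) hrA hr).1 hAC,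
      ((hP C hC).nodeAbove_iff hab hB hr hrB).1 hCB⟩
  · rintro ⟨⟨C, rfl, hC, hr⟩, hAC, hCB⟩
    exact ⟨C, ⟨hC, hr, Or.inl hAC, Or.inl hCB⟩, rfl⟩

lemma normal_iff_normalAt (hab : a ⋖ b) (hA : Removable (pt M) A)
    (hr : res (ptCharge M) A = (b : ℕ)) :
    Normal (ptCharge M) (pt M) A ↔ NormalAt (fun t => M t a) (fun t => M t b) A.1 := by
  have hA' : IsBoundary M A := Or.inl hA
  have hncard : ∀ {B}, Addable (pt M) B → res (ptCharge M) B = (b : ℕ) →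
      ({C | Addable (pt M) C ∧ res (ptCharge M) C = res (ptCharge M) A ∧
          NodeAbove A C ∧ NodeAbove C B}.ncard <
        {C | Removable (pt M) C ∧ res (ptCharge M) C = res (ptCharge M) A ∧
          NodeAbove A C ∧ NodeAbove C B}.ncard ↔
        {t | AddableAt (fun t => M t a) (fun t => M t b) t ∧ A.1 < t ∧ t < B.1}.ncard <
          {t | RemovableAt (fun t => M t a) (fun t => M t b) t ∧ A.1 < t ∧ t < B.1}.ncard) := by
    intro B hB hrB
    rw [hr, hA'.ncard_between hab (Or.inr hB) hr hrB (fun _ => Or.inr) fun _ => addableAt_iff hab,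
      hA'.ncard_between hab (Or.inr hB) hr hrB (fun _ => Or.inl) fun _ => removableAt_iff hab]
  refine and_congr (iff_of_true hA ((removableAt_iff hab).2 ⟨A, rfl, hA, hr⟩)) ⟨?_, ?_⟩
  · intro h t ht hlt
    obtain ⟨B, rfl, hB, hrB⟩ := (addableAt_iff hab).1 ht
    exact (hncard hB hrB).1 (h B hB (hrB.trans hr.symm) (Or.inl hlt))
  · intro h B hB hrB hAB
    rw [hr] at hrB
    exact (hncard hB hrB).2 (h B.1 ((addableAt_iff hab).2 ⟨B, rfl, hB, hrB⟩)
      ((hA'.nodeAbove_iff hab (Or.inr hB) hr hrB).1 hAB))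

lemma good_iff_goodAt (hab : a ⋖ b) (hA : Removable (pt M) A)
    (hr : res (ptCharge M) A = (b : ℕ)) :
    Good (ptCharge M) (pt M) A ↔ GoodAt (fun t => M t a) (fun t => M t b) A.1 := by
  refine and_congr (normal_iff_normalAt hab hA hr) ⟨?_, ?_⟩
  · intro h t ht
    obtain ⟨B, rfl, hB, hrB⟩ := (removableAt_iff hab).1 ht.1
    obtain rfl | hne := eq_or_ne B A
    · exact le_rfl
    · have habove := h B ((normal_iff_normalAt hab hB hrB).2 ht) (hrB.trans hr.symm) hne
      exact ((IsBoundary.nodeAbove_iff hab (Or.inl hA) (Or.inl hB) hr hrB).1 habove).le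
  · intro h B hB hrB hne
    rw [hr] at hrB
    refine Or.inl ((h ((normal_iff_normalAt hab hB.1 hrB).1 hB)).lt_of_ne fun hrow => hne ?_)
    exact IsBoundary.eq_of_res_eq hab (Or.inl hB.1) (Or.inl hA) hrB hr hrow.symm

lemma betaSet_moveBead_of_ne {t : Fin r} (ht : t ≠ s) :
    betaSet (moveBead M s a b) t = betaSet M t := by
  ext z; simp [mem_betaSet_iff, moveBead, ht]

lemma betaSet_moveBead_self (ha : M s a = false) (hb : M s b = true) :
    betaSet (moveBead M s a b) s = insert (a : ℤ) (betaSet M s \ {(b : ℤ)}) := by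
  ext z
  simp only [mem_betaSet_iff, moveBead, Function.update_self, Function.comp_apply,
    Equiv.swap_apply_def, Set.mem_insert_iff, Set.mem_sdiff, Set.mem_singleton_iff]
  grind

lemma betaNumber_removeNode (hA : Removable (pt M) A) :
    (fun x : ℕ => (removeNode (pt M) A A.1 x + pathCount M (fun _ => A.1) - (x + 1) : ℤ)) =
      Function.update (betaNumber M A.1) A.2.1 (betaNumber M A.1 A.2.1 - 1) := by
  have hpos : 0 < pt M A.1 A.2.1 := by have := hA.1; omega
  ext x
  obtain rfl | hx := eq_or_ne x A.2.1
  · simp only [removeNode, betaNumber, and_self, if_true, Function.update_self]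
    omega
  · simp [removeNode, betaNumber, hx]

lemma removeNode_pt (hab : a ⋖ b) (hA : Removable (pt M) A)
    (hr : res (ptCharge M) A = (b : ℕ)) :
    removeNode (pt M) A = pt (moveBead M A.1 a b) := by
  obtain ⟨ha, hb⟩ := (removableAt_iff hab).2 ⟨A, rfl, hA, hr⟩
  ext1 t
  obtain rfl | ht := eq_or_ne t A.1
  · have hbeta : betaNumber M A.1 A.2.1 = b :=
      (removable_pt_iff.1 hA).1.trans ((IsBoundary.res_eq_iff hab (Or.inl hA)).1 hr)
    apply eq_pt_of_range_eq <;> rw [pathCount_const_moveBead, betaNumber_removeNode hA]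
    · refine strictAnti_update_sub_one strictAnti_betaNumber ?_
      rw [← sub_one_notMem_range_iff strictAnti_betaNumber, range_betaNumber]
      rwa [hbeta, ← intCast_eq_of_covBy hab, coe_mem_betaSet_iff, Bool.not_eq_true]
    · rw [range_update_of_injective strictAnti_betaNumber.injective, range_betaNumber, hbeta,
        ← intCast_eq_of_covBy hab, betaSet_moveBead_self ha hb]
  · have hrow : removeNode (pt M) A t = pt M t := by ext x; simp [removeNode, ht]
    apply eq_pt_of_range_eq <;> rw [pathCount_const_moveBead, hrow]
    · exact strictAnti_betaNumber
    · exact range_betaNumber.trans (betaSet_moveBead_of_ne ht).symm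

lemma ptCharge_moveBead : ptCharge (moveBead M s a b) = ptCharge M := by
  ext t; simp only [PtCharge, nsum_zero, pathCount_const_moveBead]

lemma lt_pathCount_iff_of_antitone (hM : Antitone (M s)) (i : Fin e) :
    M s i = true ↔ (i : ℕ) < pathCount M fun _ => s := by
  have hcount : pathCount M (fun _ => s) = ({j | M s j = true} : Finset (Fin e)).card := by
    simp only [pathCount, Bool.toNat, Bool.cond_eq_ite, Finset.card_filter]
  rw [hcount]
  constructor
  · intro hi
    rw [Nat.lt_iff_add_one_le, ← Fin.card_Iic i]
    exact Finset.card_le_card fun j hj => (Finset.mem_filter_univ _).2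
      (hM (Finset.mem_Iic.1 hj) hi)
  · contrapose!
    intro hi
    rw [← Fin.card_Iio i]
    refine Finset.card_le_card fun j hj => Finset.mem_Iio.2 (not_le.1 fun hij => hi ?_)
    exact hM hij (Finset.mem_filter.1 hj).2

lemma pt_eq_zero_iff : pt M = 0 ↔ ∀ s, Antitone (M s) := by
  constructor
  · intro h s i j hij hj
    have hzero : ∀ x, betaNumber M s x = pathCount M (fun _ => s) - (x + 1) := fun x => by
      simp only [betaNumber, h, Pi.zero_apply, Nat.cast_zero, zero_add]
    obtain ⟨x, hx⟩ := range_betaNumber.ge (coe_mem_betaSet_iff.2 hj)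
    refine coe_mem_betaSet_iff.1 (range_betaNumber.le ⟨x + (j - i), ?_⟩)
    have : (i : ℕ) ≤ j := hij
    rw [hzero] at hx ⊢
    omega
  · intro h
    ext s x
    refine (congrFun (eq_pt_of_range_eq (l := 0) (strictAnti_nat_of_succ_lt fun x => ?_) ?_) x).symm
    · simp
    · ext z
      simp only [mem_betaSet_iff, lt_pathCount_iff_of_antitone (h s), Set.mem_range]
      constructor
      · rintro ⟨x, rfl⟩
        refine or_iff_not_imp_left.2 fun hz => ⟨⟨pathCount M (fun _ => s) - (x + 1), ?_⟩, ?_, ?_⟩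
        · have := pathCount_le_card M fun _ => s
          simp only [Fintype.card_fin, Pi.zero_apply, Nat.cast_zero] at this hz
          omega
        all_goals
          simp only [Pi.zero_apply, Nat.cast_zero] at hz ⊢
          omega
      · intro hz
        refine ⟨(pathCount M (fun _ => s) - 1 - z).toNat, ?_⟩
        obtain hz | ⟨i, rfl, hi⟩ := hz <;>
          simp only [Pi.zero_apply, Nat.cast_zero] <;> omega

/-- The sum of the column indices of all beads. -/
def beadSum (M : Fin r → Fin e → Bool) : ℕ := ∑ s, ∑ i : Fin e, (M s i).toNat * i

lemma beadSum_moveBead_lt (hab : a < b) (ha : M s a = false) (hb : M s b = true) :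
    beadSum (moveBead M s a b) < beadSum M := by
  have hrow : ∑ i : Fin e, (M s (Equiv.swap a b i)).toNat * (i : ℕ) <
      ∑ i : Fin e, (M s i).toNat * (i : ℕ) := by
    rw [← Equiv.sum_comp (Equiv.swap a b)]
    simp only [Equiv.swap_apply_self]
    refine Finset.sum_lt_sum (fun i _ => ?_) ⟨b, Finset.mem_univ b, by simpa [hb] using hab⟩
    obtain rfl | hia := eq_or_ne i a
    · simp [ha]
    · obtain rfl | hib := eq_or_ne i b
      · simpa [hb] using hab.le
      · simp [Equiv.swap_apply_of_ne_of_ne hia hib]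
  refine Finset.sum_lt_sum (fun t _ => ?_) ⟨s, Finset.mem_univ s, by simpa [moveBead] using hrow⟩
  obtain rfl | ht := eq_or_ne t s
  · simpa [moveBead] using hrow.le
  · simp [moveBead, ht]

/-! ### The path criterion -/

lemma IsKleshchev.pathBounded_and_dual [NeZero r] {l : Fin r → ℕ → ℕ} {c : Fin r → ZMod e}
    (h : IsKleshchev c l) : ∀ M : Fin r → Fin e → Bool, ptCharge M = c → pt M = l →
    PathBounded M ∧ PathBounded (dual M) := by
  induction h with
  | empty =>
    intro M _ hl
    have hM := pt_eq_zero_iff.1 hl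
    exact ⟨pathBounded_of_antitone hM, pathBounded_dual_of_antitone hM⟩
  | step l A hA _ ih =>
    rintro M rfl rfl
    obtain ⟨a, b, hab, hb⟩ := hA.1.1.exists_content_eq
    have hr := (IsBoundary.res_eq_iff hab (Or.inl hA.1.1)).2 hb
    have hgood := (good_iff_goodAt hab hA.1.1 hr).1 hA
    rw [← hgood.pathBounded_moveBead_iff hab, ← hgood.pathBounded_dual_moveBead_iff hab]
    exact ih _ ptCharge_moveBead (removeNode_pt hab hA.1.1 hr).symm

lemma isKleshchev_of_pathBounded [NeZero r] (hr : r ≤ 3) (M : Fin r → Fin e → Bool)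
    (h : PathBounded M) (hdual : PathBounded (dual M)) : IsKleshchev (ptCharge M) (pt M) := by
  by_cases hM : NoNormalRow M
  · have hzero : pt M = 0 := pt_eq_zero_iff.2 (hM.antitone (by simpa using hr) h hdual)
    exact hzero ▸ IsKleshchev.empty
  · obtain ⟨a, b, hab, s, hs⟩ : ∃ a b, a ⋖ b ∧ ∃ s,
        NormalAt (fun t => M t a) (fun t => M t b) s := by
      simpa [NoNormalRow] using hM
    obtain ⟨s, hgood⟩ := exists_goodAt hs
    obtain ⟨A, rfl, hA, hres⟩ := (removableAt_iff hab).1 hgood.1.1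
    refine .step _ A ((good_iff_goodAt hab hA hres).2 hgood) ?_
    rw [removeNode_pt hab hA hres, ← ptCharge_moveBead (s := A.1) (a := a) (b := b)]
    exact isKleshchev_of_pathBounded hr _ ((hgood.pathBounded_moveBead_iff hab).2 h)
      ((hgood.pathBounded_dual_moveBead_iff hab).2 hdual)
termination_by beadSum M
decreasing_by exact beadSum_moveBead_lt hab.lt hgood.1.1.1 hgood.1.1.2

/-- Boundedness of `dual M` says that each ascending path through `M` has at least as many beads as
some row. -/
theorem isKleshchev_pt_iff [NeZero r] (hr : r ≤ 3) (M : Fin r → Fin e → Bool) :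
    IsKleshchev (ptCharge M) (pt M) ↔ PathBounded M ∧ PathBounded (dual M) :=
  ⟨fun h => h.pathBounded_and_dual M rfl rfl, fun h => isKleshchev_of_pathBounded hr M h.1 h.2⟩

end Multipartition

/-! ### Saturating descending paths -/

section Saturation

variable {ρ ι : Type*} {M : ρ → ι → Bool}

/-- The row `w` has a bead in the column `c`, unless `c` is empty. -/
def Hits (c : ρ → Bool) (w : ρ) : Prop := ∀ t, c t = true → c w = true

lemma hits_of_const {c : ρ → Bool} (hc : ∀ s t, c s = c t) (w : ρ) : Hits c w :=
  fun t ht => hc w t ▸ ht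

lemma hits_iff_of_exists {c : ρ → Bool} (hc : ∃ t, c t = true) {w : ρ} :
    Hits c w ↔ c w = true :=
  ⟨fun h => h _ hc.choose_spec, fun h _ _ => h⟩

lemma Hits.mono {c c' : ρ → Bool} (h : c ≤ c') (hc : ∃ t, c t = true) : Hits c ≤ Hits c' :=
  fun w hw _ _ => h w ((hits_iff_of_exists hc).1 hw)

lemma hits_le_total {c c' : ρ → Bool} (h : c ≤ c' ∨ c' ≤ c) :
    Hits c ≤ Hits c' ∨ Hits c' ≤ Hits c := by
  by_cases hc : ∃ t, c t = true
  · by_cases hc' : ∃ t, c' t = true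
    · exact h.imp (Hits.mono · hc) (Hits.mono · hc')
    · exact Or.inl fun w _ t ht => absurd ⟨t, ht⟩ hc'
  · exact Or.inr fun w _ t ht => absurd ⟨t, ht⟩ hc

/-- Among nested sets of admissible rows the smallest one serves all columns at once. -/
lemma exists_common_of_total [Finite ι] {U : ι → ρ → Prop} {S : Set ι} {I : Set ρ}
    (hI : I.Nonempty) (htotal : ∀ i ∈ S, ∀ j ∈ S, U i ≤ U j ∨ U j ≤ U i)
    (hU : ∀ i ∈ S, ∃ w ∈ I, U i w) : ∃ w ∈ I, ∀ i ∈ S, U i w := by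
  obtain rfl | hS := S.eq_empty_or_nonempty
  · exact hI.imp fun w hw => ⟨hw, by simp⟩
  · obtain ⟨i, hi, hmin⟩ := S.toFinite.exists_minimalFor U S hS
    refine (hU i hi).imp fun w hw => ⟨hw.1, fun j hj => ?_⟩
    exact (htotal i hi j hj).elim (fun h => h w hw.2) fun h => hmin hj h w hw.2

variable [LinearOrder ρ] [LinearOrder ι]

lemma exists_antitone_saturating_iff [Finite ι] {p q : ι} (hpq : p ≤ q)
    (htotal : ∀ i ∉ ({p, q} : Set ι), ∀ j ∉ ({p, q} : Set ι),
      (fun t => M t i) ≤ (fun t => M t j) ∨ (fun t => M t j) ≤ fun t => M t i) :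
    (∃ r : ι → ρ, Antitone r ∧ Saturating M r) ↔
      ∃ d d', d' ≤ d ∧ Hits (fun t => M t p) d ∧ Hits (fun t => M t q) d' ∧
        (∀ i ∈ Set.Iio p, ∃ w ∈ Set.Ici d, Hits (fun t => M t i) w) ∧
        (∀ i ∈ Set.Ioo p q, ∃ w ∈ Set.Icc d' d, Hits (fun t => M t i) w) ∧
        ∀ i ∈ Set.Ioi q, ∃ w ∈ Set.Iic d', Hits (fun t => M t i) w := by
  constructor
  · rintro ⟨r, hr, hsat⟩
    exact ⟨r p, r q, hr hpq, hsat p, hsat q, fun i hi => ⟨r i, hr (le_of_lt hi), hsat i⟩,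
      fun i hi => ⟨r i, ⟨hr hi.2.le, hr hi.1.le⟩, hsat i⟩,
      fun i hi => ⟨r i, hr (le_of_lt hi), hsat i⟩⟩
  · rintro ⟨d, d', hd, hp, hq, hbefore, hbetween, hafter⟩
    have hcommon : ∀ {S : Set ι} {I : Set ρ}, I.Nonempty → (∀ i ∈ S, i ∉ ({p, q} : Set ι)) →
        (∀ i ∈ S, ∃ w ∈ I, Hits (fun t => M t i) w) →
        ∃ w ∈ I, ∀ i ∈ S, Hits (fun t => M t i) w := fun hI hS =>
      exists_common_of_total hI fun i hi j hj => hits_le_total (htotal i (hS i hi) j (hS j hj))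
    obtain ⟨w₁, hw₁, hbefore⟩ := hcommon (S := Set.Iio p) (I := Set.Ici d) ⟨d, le_rfl⟩
      (fun i (hi : i < p) => by simp [hi.ne, (hi.trans_le hpq).ne]) hbefore
    obtain ⟨w₂, hw₂, hbetween⟩ := hcommon (S := Set.Ioo p q) (I := Set.Icc d' d) ⟨d, hd, le_rfl⟩
      (fun i hi => by simp [hi.1.ne', hi.2.ne]) hbetween
    obtain ⟨w₃, hw₃, hafter⟩ := hcommon (S := Set.Ioi q) (I := Set.Iic d') ⟨d', le_rfl⟩
      (fun i (hi : q < i) => by simp [hi.ne', (hpq.trans_lt hi).ne']) hafter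
    simp only [Set.mem_Ici, Set.mem_Icc, Set.mem_Iic] at hw₁ hw₂ hw₃
    refine ⟨fun i => if i < p then w₁ else if i = p then d else if i < q then w₂ else
      if i = q then d' else w₃, fun i j hij => ?_, fun i => ?_⟩
    · grind
    · change Hits (fun t => M t i) (ite _ _ _)
      split_ifs with h₁ h₂ h₃ h₄
      · exact hbefore i h₁
      · rwa [h₂]
      · exact hbetween i ⟨lt_of_le_of_ne (not_lt.1 h₁) (Ne.symm h₂), h₃⟩
      · rwa [h₄]
      · exact hafter i (lt_of_le_of_ne (not_lt.1 h₃) (Ne.symm h₄))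

/-- A row which misses a single column is only beaten by saturating paths. -/
lemma pathBounded_iff_not_exists_saturating [Fintype ι] {s : ρ} {j : ι}
    (hnone : ∀ s, ¬ Saturating M fun _ => s)
    (hs : ∀ i, i ≠ j → Hits (fun t => M t i) s) :
    PathBounded M ↔ ¬ ∃ r : ι → ρ, Antitone r ∧ Saturating M r := by
  constructor
  · rintro h ⟨r, hr, hsat⟩
    obtain ⟨s, hs⟩ := h r hr
    exact hnone s (hsat.of_pathCount_le hs)
  · intro h r hr
    obtain ⟨i, t, ht, hri⟩ : ∃ i t, M t i = true ∧ M (r i) i = false := by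
      have hsat : ¬ Saturating M r := fun hsat => h ⟨r, hr, hsat⟩
      simpa [Saturating] using hsat
    have hle : ∀ i, i ≠ j → M (r i) i ≤ M s i := fun i hi => hs i hi (r i)
    refine ⟨s, ?_⟩
    obtain rfl | hij := eq_or_ne i j
    · refine Finset.sum_le_sum fun i' _ => Bool.toNat_le_toNat ?_
      obtain rfl | hi' := eq_or_ne i' i
      · simp [hri]
      · exact hle i' hi'
    · refine pathCount_le_of_le_off_pair hij ?_ fun i' _ hj => hle i' hj
      simp [hri, hs i hij t ht, Bool.toNat_le, Nat.le_add_right_of_le]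

end Saturation

/-! ### Matrices with few different columns -/

section Columns

variable {ρ ι : Type*} {M : ρ → ι → Bool} {Y Z : Set ι} {p q : ι} {cP cQ cY cZ : ρ → Bool}

/-- The matrix `M` has the columns `cP` and `cQ` in the places `p` and `q`; elsewhere it has the
column `cY` on `Y`, the column `cZ` on `Z`, and a constant column in each remaining place. -/
structure HasColumns (M : ρ → ι → Bool) (Y Z : Set ι) (p q : ι) (cP cQ cY cZ : ρ → Bool) :
    Prop where
  left : (fun t => M t p) = cP
  right : (fun t => M t q) = cQ
  of_mem_Y : ∀ i ∈ Y, i ≠ p → i ≠ q → (fun t => M t i) = cY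
  of_mem_Z : ∀ i ∈ Z, i ≠ p → i ≠ q → (fun t => M t i) = cZ
  const : ∀ i, i ≠ p → i ≠ q → i ∉ Y → i ∉ Z → ∀ s t, M s i = M t i

/-- Two columns of `M` are complementary to each other and not constant. -/
def HasComplementaryColumns (M : ρ → ι → Bool) : Prop :=
  ∃ i j, (∃ t, M t i = true) ∧ (∃ t, M t i = false) ∧ ∀ t, M t j = !M t i

/-- The conditions on the columns in `HasColumns` under which the existence of a saturating
descending path depends only on the sets `Y` and `Z` meeting the intervals cut out by `p`, `q`. -/
structure IsNested (cP cQ cY cZ : ρ → Bool) : Prop where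
  le_or_le : cY ≤ cZ ∨ cZ ≤ cY
  exists_true : ∃ s, cY s = true ∧ cZ s = true
  exists_false : ∃ s, cY s = false ∧ cZ s = false
  left_true : ∃ s, cP s = true
  left_false : ∃ s, cP s = false
  right_true : ∃ s, cQ s = true
  right_false : ∃ s, cQ s = false

lemma HasColumns.dual (h : HasColumns M Y Z p q cP cQ cY cZ) :
    HasColumns (dual M) (OrderDual.ofDual ⁻¹' Y) (OrderDual.ofDual ⁻¹' Z) (OrderDual.toDual q)
      (OrderDual.toDual p) cQᶜ cPᶜ cYᶜ cZᶜ where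
  left := congrArg compl h.right
  right := congrArg compl h.left
  of_mem_Y i hi hq hp := congrArg compl (h.of_mem_Y i hi hp hq)
  of_mem_Z i hi hq hp := congrArg compl (h.of_mem_Z i hi hp hq)
  const i hq hp hY hZ s t := congrArg not (h.const i hp hq hY hZ s t)

lemma HasColumns.swap (h : HasColumns M Y Z p q cP cQ cY cZ) :
    HasColumns M Y Z q p cQ cP cY cZ where
  left := h.right
  right := h.left
  of_mem_Y i hi hq hp := h.of_mem_Y i hi hp hq
  of_mem_Z i hi hq hp := h.of_mem_Z i hi hp hq
  const i hq hp := h.const i hp hq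

lemma HasComplementaryColumns.dual (h : HasComplementaryColumns M) :
    HasComplementaryColumns (dual M) := by
  obtain ⟨i, j, ⟨s, hs⟩, ⟨t, ht⟩, hij⟩ := h
  exact ⟨OrderDual.toDual i, OrderDual.toDual j, ⟨t, by simp [AK.dual, ht]⟩,
    ⟨s, by simp [AK.dual, hs]⟩, fun x => congrArg not (hij x)⟩

lemma IsNested.compl (h : IsNested cP cQ cY cZ) : IsNested cQᶜ cPᶜ cYᶜ cZᶜ where
  le_or_le := h.le_or_le.symm.imp compl_le_compl compl_le_compl
  exists_true := by simpa using h.exists_false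
  exists_false := by simpa using h.exists_true
  left_true := by simpa using h.right_false
  left_false := by simpa using h.right_true
  right_true := by simpa using h.left_false
  right_false := by simpa using h.left_true

lemma HasComplementaryColumns.not_saturating (h : HasComplementaryColumns M) (s : ρ) :
    ¬ Saturating M fun _ => s := by
  obtain ⟨i, j, ⟨t, ht⟩, ⟨t', ht'⟩, hij⟩ := h
  intro hs
  have hi := hs i t ht
  have hj := hs j t' (by simp [hij, ht'])
  simp [hij, hi] at hj

lemma HasColumns.hasComplementaryColumns (h : HasColumns M Y Z p q cP cQ cY cZ)
    (hc : IsNested cP cQ cY cZ) {j : ι} (hj : (fun t => M t j) = cPᶜ) :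
    HasComplementaryColumns M :=
  ⟨p, j, by simpa only [← h.left] using hc.left_true, by simpa only [← h.left] using hc.left_false,
    fun t => by simp only [congrFun hj t, ← h.left, Pi.compl_apply, Bool.compl_eq_bnot]⟩

lemma HasColumns.column_cases (h : HasColumns M Y Z p q cP cQ cY cZ) {i : ι} (hp : i ≠ p)
    (hq : i ≠ q) : (∀ s t, M s i = M t i) ∨ (i ∈ Y ∧ (fun t => M t i) = cY) ∨
      i ∈ Z ∧ (fun t => M t i) = cZ := by
  by_cases hY : i ∈ Y
  · exact Or.inr (Or.inl ⟨hY, h.of_mem_Y i hY hp hq⟩)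
  · by_cases hZ : i ∈ Z
    · exact Or.inr (Or.inr ⟨hZ, h.of_mem_Z i hZ hp hq⟩)
    · exact Or.inl (h.const i hp hq hY hZ)

lemma HasColumns.le_or_le (h : HasColumns M Y Z p q cP cQ cY cZ) (hc : IsNested cP cQ cY cZ) :
    ∀ i ∉ ({p, q} : Set ι), ∀ j ∉ ({p, q} : Set ι),
      (fun t => M t i) ≤ (fun t => M t j) ∨ (fun t => M t j) ≤ fun t => M t i := by
  have hconst : ∀ {c c' : ρ → Bool}, (∀ s t, c s = c t) → c ≤ c' ∨ c' ≤ c := by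
    intro c c' hc
    by_cases hx : ∃ s, c s = true
    · exact Or.inr fun t => by simp [hc t hx.choose, hx.choose_spec, Bool.le_true]
    · exact Or.inl fun t => by simp [Bool.not_eq_true _ ▸ not_exists.1 hx t]
  intro i hi j hj
  simp only [Set.mem_insert_iff, Set.mem_singleton_iff, not_or] at hi hj
  obtain hi | ⟨-, hi⟩ | ⟨-, hi⟩ := h.column_cases hi.1 hi.2
  · exact hconst hi
  all_goals
    obtain hj | ⟨-, hj⟩ | ⟨-, hj⟩ := h.column_cases hj.1 hj.2
    · exact (hconst hj).symm
    all_goals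
      rw [hi, hj]
      first | exact Or.inl le_rfl | exact hc.le_or_le | exact hc.le_or_le.symm

lemma HasColumns.forall_exists_hits_iff (h : HasColumns M Y Z p q cP cQ cY cZ)
    (hc : IsNested cP cQ cY cZ) {S : Set ι} (hp : p ∉ S) (hq : q ∉ S) {I : Set ρ}
    (hI : I.Nonempty) : (∀ i ∈ S, ∃ w ∈ I, Hits (fun t => M t i) w) ↔
      ((S ∩ Y).Nonempty → ∃ w ∈ I, cY w = true) ∧ ((S ∩ Z).Nonempty → ∃ w ∈ I, cZ w = true) := by
  have hYw : ∀ w, Hits cY w ↔ cY w = true := fun w =>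
    hits_iff_of_exists (hc.exists_true.imp fun _ h => h.1)
  have hZw : ∀ w, Hits cZ w ↔ cZ w = true := fun w =>
    hits_iff_of_exists (hc.exists_true.imp fun _ h => h.2)
  have hne : ∀ i ∈ S, i ≠ p ∧ i ≠ q := fun i hi =>
    ⟨ne_of_mem_of_not_mem hi hp, ne_of_mem_of_not_mem hi hq⟩
  constructor
  · refine fun hS => ⟨?_, ?_⟩ <;> rintro ⟨i, hi, hiY⟩
    · simpa only [h.of_mem_Y i hiY (hne i hi).1 (hne i hi).2, hYw] using hS i hi
    · simpa only [h.of_mem_Z i hiY (hne i hi).1 (hne i hi).2, hZw] using hS i hi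
  · rintro ⟨hY, hZ⟩ i hi
    obtain hcol | ⟨hiY, hcol⟩ | ⟨hiZ, hcol⟩ := h.column_cases (hne i hi).1 (hne i hi).2
    · exact hI.imp fun w hw => ⟨hw, hits_of_const hcol w⟩
    · simpa only [hcol, hYw] using hY ⟨i, hi, hiY⟩
    · simpa only [hcol, hZw] using hZ ⟨i, hi, hiZ⟩

variable [LinearOrder ρ] [LinearOrder ι]

/-- Which of the intervals before `p`, between `p` and `q`, and after `q` meet the set `S`. -/
def meets (S : Set ι) (p q : ι) : Fin 3 → Bool :=
  ![decide (Set.Iio p ∩ S).Nonempty, decide (Set.Ioo p q ∩ S).Nonempty,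
    decide (Set.Ioi q ∩ S).Nonempty]

lemma meets_toDual (S : Set ι) : meets (OrderDual.ofDual ⁻¹' S) (OrderDual.toDual q)
    (OrderDual.toDual p) = meets S p q ∘ Fin.rev := by
  ext n
  fin_cases n <;> simp [meets, Set.Nonempty]

/-- The column `c`, occurring on the intervals `f` as in `meets`, has a bead in a suitable row for
each of them when a descending path passes through `p` in row `d` and through `q` in row `d'`. -/
def Covers (f : Fin 3 → Bool) (c : ρ → Bool) (d d' : ρ) : Prop :=
  (f 0 = true → ∃ w, d ≤ w ∧ c w = true) ∧ (f 1 = true → ∃ w, (d' ≤ w ∧ w ≤ d) ∧ c w = true) ∧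
    (f 2 = true → ∃ w, w ≤ d' ∧ c w = true)

/-- A matrix as in `HasColumns` has a saturating descending path if the sets `Y` and `Z` occur on
the intervals `fY` and `fZ` as in `meets`. -/
def Selectable (cP cQ cY cZ : ρ → Bool) (fY fZ : Fin 3 → Bool) : Prop :=
  ∃ d d', d' ≤ d ∧ cP d = true ∧ cQ d' = true ∧ Covers fY cY d d' ∧ Covers fZ cZ d d'

lemma HasColumns.exists_antitone_saturating_iff [Finite ι]
    (h : HasColumns M Y Z p q cP cQ cY cZ) (hc : IsNested cP cQ cY cZ) (hpq : p ≤ q) :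
    (∃ r : ι → ρ, Antitone r ∧ Saturating M r) ↔
      Selectable cP cQ cY cZ (meets Y p q) (meets Z p q) := by
  rw [AK.exists_antitone_saturating_iff hpq (h.le_or_le hc), h.left, h.right]
  refine exists_congr fun d => exists_congr fun d' => and_congr_right fun hd => ?_
  rw [hits_iff_of_exists hc.left_true, hits_iff_of_exists hc.right_true,
    h.forall_exists_hits_iff hc (S := Set.Iio p) (I := Set.Ici d) (by simp) (by simp [hpq])
      ⟨d, le_rfl⟩,
    h.forall_exists_hits_iff hc (S := Set.Ioo p q) (I := Set.Icc d' d) (by simp) (by simp)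
      ⟨d, hd, le_rfl⟩,
    h.forall_exists_hits_iff hc (S := Set.Ioi q) (I := Set.Iic d') (by simp [hpq]) (by simp)
      ⟨d', le_rfl⟩]
  simp only [Covers, meets, Matrix.cons_val, decide_eq_true_eq, Set.mem_Ici, Set.mem_Icc,
    Set.mem_Iic]
  tauto

lemma HasColumns.pathBounded_iff [Fintype ι] (h : HasColumns M Y Z p q cP cQ cY cZ)
    (hc : IsNested cP cQ cY cZ) (hpq : p ≤ q) (hpair : p = q ∨ cQ = cPᶜ)
    (hcompl : HasComplementaryColumns M) :
    PathBounded M ↔ ¬ Selectable cP cQ cY cZ (meets Y p q) (meets Z p q) := by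
  rw [← h.exists_antitone_saturating_iff hc hpq]
  obtain ⟨s, hsY, hsZ⟩ := hc.exists_true
  have hs : ∀ i, i ≠ p → i ≠ q → Hits (fun t => M t i) s := by
    intro i hp hq
    obtain hcol | ⟨-, hcol⟩ | ⟨-, hcol⟩ := h.column_cases hp hq
    · exact hits_of_const hcol s
    · exact fun _ _ => (congrFun hcol s).trans hsY
    · exact fun _ _ => (congrFun hcol s).trans hsZ
  obtain rfl | hQ := hpair
  · exact pathBounded_iff_not_exists_saturating (s := s) (j := p) hcompl.not_saturating
      fun i hi => hs i hi hi
  · cases hP : cP s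
    · refine pathBounded_iff_not_exists_saturating (s := s) (j := p)
        hcompl.not_saturating fun i hi => ?_
      obtain rfl | hq := eq_or_ne i q
      · exact fun _ _ => (congrFun h.right s).trans (by simp [hQ, hP])
      · exact hs i hi hq
    · refine pathBounded_iff_not_exists_saturating (s := s) (j := q)
        hcompl.not_saturating fun i hi => ?_
      obtain rfl | hp := eq_or_ne i p
      · exact fun _ _ => (congrFun h.left s).trans hP
      · exact hs i hp hi

end Columns

/-! ### The matrices in `D^u` -/

section Duset

lemma HasColumns.isKleshchev_iff {r : ℕ} [NeZero r] (hr : r ≤ 3) {M : Fin r → Fin e → Bool}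
    {Y Z : Set (Fin e)} {p q : Fin e} {cP cQ cY cZ : Fin r → Bool}
    (h : HasColumns M Y Z p q cP cQ cY cZ) (hc : IsNested cP cQ cY cZ) (hpq : p ≤ q)
    (hpair : p = q ∨ cQ = cPᶜ) (hcompl : HasComplementaryColumns M) :
    IsKleshchev (ptCharge M) (pt M) ↔
      ¬ Selectable cP cQ cY cZ (meets Y p q) (meets Z p q) ∧
      ¬ Selectable cQᶜ cPᶜ cYᶜ cZᶜ (meets Y p q ∘ Fin.rev) (meets Z p q ∘ Fin.rev) := by
  have hpair' : OrderDual.toDual q = OrderDual.toDual p ∨ cPᶜ = cQᶜᶜ :=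
    hpair.imp (congrArg _ ·.symm) fun hQ => by rw [hQ, compl_compl]
  rw [isKleshchev_pt_iff hr, h.pathBounded_iff hc hpq hpair hcompl,
    h.dual.pathBounded_iff hc.compl hpq hpair' hcompl.dual, meets_toDual, meets_toDual]

instance (f : Fin 3 → Bool) (c : Fin 3 → Bool) (d d' : Fin 3) : Decidable (Covers f c d d') := by
  unfold Covers; infer_instance

instance (cP cQ cY cZ : Fin 3 → Bool) (fY fZ : Fin 3 → Bool) :
    Decidable (Selectable cP cQ cY cZ fY fZ) := by
  unfold Selectable; infer_instance

lemma isNested_of_mem {u : Fin 6} {cP cQ : Fin 3 → Bool}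
    (hP : cP ∈ [oycol u, ozcol u, aacol u, abcol u])
    (hQ : cQ ∈ [oycol u, ozcol u, aacol u, abcol u]) : IsNested cP cQ (ycol u) (zcol u) := by
  have hnonconst : ∀ u, ∀ c ∈ [oycol u, ozcol u, aacol u, abcol u],
      (∃ s, c s = true) ∧ ∃ s, c s = false := by decide
  have hle : ∀ u, ycol u ≤ zcol u ∨ zcol u ≤ ycol u := by simp only [Pi.le_def]; decide
  have htrue : ∀ u, ∃ s, ycol u s = true ∧ zcol u s = true := by decide
  have hfalse : ∀ u, ∃ s, ycol u s = false ∧ zcol u s = false := by decide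
  exact ⟨hle u, htrue u, hfalse u, (hnonconst u cP hP).1, (hnonconst u cP hP).2,
    (hnonconst u cQ hQ).1, (hnonconst u cQ hQ).2⟩

lemma ozcol_eq_compl (u : Fin 6) : ozcol u = (oycol u)ᶜ := by revert u; decide

lemma zcol_eq_compl (u : Fin 6) : zcol u = (aacol u)ᶜ := by revert u; decide

lemma ycol_eq_compl (u : Fin 6) : ycol u = (abcol u)ᶜ := by revert u; decide

lemma not_selectable_oy_oz_iff : ∀ (u : Fin 6) (fY fZ : Fin 3 → Bool),
    (¬ Selectable (oycol u) (ozcol u) (ycol u) (zcol u) fY fZ ∧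
      ¬ Selectable (ozcol u)ᶜ (oycol u)ᶜ (ycol u)ᶜ (zcol u)ᶜ (fY ∘ Fin.rev) (fZ ∘ Fin.rev)) ↔
    ![fZ 2, fY 0 && fZ 2, fY 0 && fZ 2, true, true, fY 0] u = true := by
  decide +kernel

lemma not_selectable_oz_oy_iff : ∀ (u : Fin 6) (fY fZ : Fin 3 → Bool),
    (¬ Selectable (ozcol u) (oycol u) (ycol u) (zcol u) fY fZ ∧
      ¬ Selectable (oycol u)ᶜ (ozcol u)ᶜ (ycol u)ᶜ (zcol u)ᶜ (fY ∘ Fin.rev) (fZ ∘ Fin.rev)) ↔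
    ![fY 2, true, true, fY 2 && fZ 0, fY 2 && fZ 0, fZ 0] u = true := by
  decide +kernel

lemma not_selectable_aa_iff : ∀ (u : Fin 6) (fY fZ : Fin 3 → Bool), fY 1 = false →
    fZ 1 = false →
    ((¬ Selectable (aacol u) (aacol u) (ycol u) (zcol u) fY fZ ∧
      ¬ Selectable (aacol u)ᶜ (aacol u)ᶜ (ycol u)ᶜ (zcol u)ᶜ (fY ∘ Fin.rev) (fZ ∘ Fin.rev)) ↔
    ![fZ 2, fY 0 && fZ 2, fY 0 && fZ 2, fY 2 && fZ 0, fY 2 && fZ 0, fZ 0] u = true) := by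
  decide +kernel

lemma not_selectable_ab_iff : ∀ (u : Fin 6) (fY fZ : Fin 3 → Bool), fY 1 = false →
    fZ 1 = false →
    ((¬ Selectable (abcol u) (abcol u) (ycol u) (zcol u) fY fZ ∧
      ¬ Selectable (abcol u)ᶜ (abcol u)ᶜ (ycol u)ᶜ (zcol u)ᶜ (fY ∘ Fin.rev) (fZ ∘ Fin.rev)) ↔
    ![fY 2, fY 0, fY 0, fY 2, fY 2, fY 0] u = true) := by
  decide +kernel

variable {Y Z : Finset (Fin e)} {y z : ℕ} {hY : Y.card = y + 1} {hZ : Z.card = z + 1}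

lemma meets_zero_iff {A : Finset (Fin e)} {n : ℕ} (hA : A.card = n + 1) {p q : Fin e} :
    meets (A : Set (Fin e)) p q 0 = true ↔ A.orderEmbOfFin hA 0 < p := by
  simp only [meets, Matrix.cons_val, decide_eq_true_eq]
  constructor
  · rintro ⟨i, hi, hiA⟩
    rw [← Finset.range_orderEmbOfFin A hA] at hiA
    obtain ⟨k, rfl⟩ := hiA
    exact ((A.orderEmbOfFin hA).monotone (Fin.zero_le k)).trans_lt hi
  · exact fun h => ⟨_, h, Finset.orderEmbOfFin_mem A hA 0⟩

lemma meets_two_iff {A : Finset (Fin e)} {n : ℕ} (hA : A.card = n + 1) {p q : Fin e} :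
    meets (A : Set (Fin e)) p q 2 = true ↔ q < A.orderEmbOfFin hA (Fin.last n) := by
  simp only [meets, Matrix.cons_val, decide_eq_true_eq]
  constructor
  · rintro ⟨i, hi, hiA⟩
    rw [← Finset.range_orderEmbOfFin A hA] at hiA
    obtain ⟨k, rfl⟩ := hiA
    exact lt_of_lt_of_le hi ((A.orderEmbOfFin hA).monotone (Fin.le_last k))
  · exact fun h => ⟨_, h, Finset.orderEmbOfFin_mem A hA (Fin.last n)⟩

lemma meets_self_one {S : Set (Fin e)} {p : Fin e} : meets S p p 1 = false := by
  simp [meets]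

lemma hasColumns_alphaM (hYZ : Disjoint Y Z) (u : Fin 6) (k : Fin (y + 1)) :
    HasColumns (alphaM Y Z hY u k) Y Z (Y.orderEmbOfFin hY k) (Y.orderEmbOfFin hY k)
      (aacol u) (aacol u) (ycol u) (zcol u) where
  left := by simp [alphaM]
  right := by simp [alphaM]
  of_mem_Y i hi hp _ := by simp [alphaM, hp, Finset.mem_coe.1 hi]
  of_mem_Z i hi hp _ := by
    simp [alphaM, hp, Finset.disjoint_right.1 hYZ hi, Finset.mem_coe.1 hi]
  const i hp _ hiY hiZ s t := by
    simp [alphaM, hp, mt Finset.mem_coe.2 hiY, mt Finset.mem_coe.2 hiZ]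

lemma hasColumns_betaM (hYZ : Disjoint Y Z) (u : Fin 6) (l : Fin (z + 1)) :
    HasColumns (betaM Y Z hZ u l) Y Z (Z.orderEmbOfFin hZ l) (Z.orderEmbOfFin hZ l)
      (abcol u) (abcol u) (ycol u) (zcol u) where
  left := by simp [betaM]
  right := by simp [betaM]
  of_mem_Y i hi hp _ := by
    simp [betaM, hp, Finset.disjoint_left.1 hYZ hi, Finset.mem_coe.1 hi]
  of_mem_Z i hi hp _ := by simp [betaM, hp, Finset.mem_coe.1 hi]
  const i hp _ hiY hiZ s t := by
    simp [betaM, hp, mt Finset.mem_coe.2 hiY, mt Finset.mem_coe.2 hiZ]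

lemma orderEmbOfFin_ne_of_disjoint (hYZ : Disjoint Y Z) (k : Fin (y + 1)) (l : Fin (z + 1)) :
    Y.orderEmbOfFin hY k ≠ Z.orderEmbOfFin hZ l :=
  hYZ.forall_ne_finset (Y.orderEmbOfFin_mem hY k) (Z.orderEmbOfFin_mem hZ l)

lemma hasColumns_gammaM (hYZ : Disjoint Y Z) (u : Fin 6) (k : Fin (y + 1)) (l : Fin (z + 1)) :
    HasColumns (gammaM Y Z hY hZ u k l) Y Z (Y.orderEmbOfFin hY k) (Z.orderEmbOfFin hZ l)
      (oycol u) (ozcol u) (ycol u) (zcol u) where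
  left := by simp [gammaM]
  right := by simp [gammaM, (orderEmbOfFin_ne_of_disjoint hYZ k l).symm]
  of_mem_Y i hi hp hq := by simp [gammaM, hp, hq, Finset.mem_coe.1 hi]
  of_mem_Z i hi hp hq := by
    simp [gammaM, hp, hq, Finset.disjoint_right.1 hYZ hi, Finset.mem_coe.1 hi]
  const i hp hq hiY hiZ s t := by
    simp [gammaM, hp, hq, mt Finset.mem_coe.2 hiY, mt Finset.mem_coe.2 hiZ]

theorem isKleshchev_alphaM_iff (hYZ : Disjoint Y Z) (u : Fin 6) (k : Fin (y + 1)) :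
    IsKleshchev (ptCharge (alphaM Y Z hY u k)) (pt (alphaM Y Z hY u k)) ↔
      ![Y.orderEmbOfFin hY k < Z.orderEmbOfFin hZ (Fin.last z),
        k ≠ 0 ∧ Y.orderEmbOfFin hY k < Z.orderEmbOfFin hZ (Fin.last z),
        k ≠ 0 ∧ Y.orderEmbOfFin hY k < Z.orderEmbOfFin hZ (Fin.last z),
        k ≠ Fin.last y ∧ Z.orderEmbOfFin hZ 0 < Y.orderEmbOfFin hY k,
        k ≠ Fin.last y ∧ Z.orderEmbOfFin hZ 0 < Y.orderEmbOfFin hY k,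
        Z.orderEmbOfFin hZ 0 < Y.orderEmbOfFin hY k] u := by
  have h := hasColumns_alphaM (hY := hY) hYZ u k
  have hc : IsNested (aacol u) (aacol u) (ycol u) (zcol u) :=
    isNested_of_mem (by simp) (by simp)
  have hz := Z.orderEmbOfFin_mem hZ 0
  have hne := (orderEmbOfFin_ne_of_disjoint (hY := hY) (hZ := hZ) hYZ k 0).symm
  have hcompl := h.hasComplementaryColumns hc ((h.of_mem_Z _ hz hne hne).trans (zcol_eq_compl u))
  rw [h.isKleshchev_iff le_rfl hc le_rfl (.inl rfl) hcompl,
    not_selectable_aa_iff u _ _ meets_self_one meets_self_one]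
  fin_cases u <;> simp [meets_zero_iff hY, meets_zero_iff hZ, meets_two_iff hY, meets_two_iff hZ,
    Fin.pos_iff_ne_zero, Fin.lt_last_iff_ne_last]

theorem isKleshchev_betaM_iff (hYZ : Disjoint Y Z) (u : Fin 6) (l : Fin (z + 1)) :
    IsKleshchev (ptCharge (betaM Y Z hZ u l)) (pt (betaM Y Z hZ u l)) ↔
      ![Z.orderEmbOfFin hZ l < Y.orderEmbOfFin hY (Fin.last y),
        Y.orderEmbOfFin hY 0 < Z.orderEmbOfFin hZ l,
        Y.orderEmbOfFin hY 0 < Z.orderEmbOfFin hZ l,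
        Z.orderEmbOfFin hZ l < Y.orderEmbOfFin hY (Fin.last y),
        Z.orderEmbOfFin hZ l < Y.orderEmbOfFin hY (Fin.last y),
        Y.orderEmbOfFin hY 0 < Z.orderEmbOfFin hZ l] u := by
  have h := hasColumns_betaM (hZ := hZ) hYZ u l
  have hc : IsNested (abcol u) (abcol u) (ycol u) (zcol u) :=
    isNested_of_mem (by simp) (by simp)
  have hy := Y.orderEmbOfFin_mem hY 0
  have hne := orderEmbOfFin_ne_of_disjoint (hY := hY) (hZ := hZ) hYZ 0 l
  have hcompl := h.hasComplementaryColumns hc ((h.of_mem_Y _ hy hne hne).trans (ycol_eq_compl u))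
  rw [h.isKleshchev_iff le_rfl hc le_rfl (.inl rfl) hcompl,
    not_selectable_ab_iff u _ _ meets_self_one meets_self_one]
  fin_cases u <;> simp [meets_zero_iff hY, meets_two_iff hY]

theorem isKleshchev_gammaM_iff (hYZ : Disjoint Y Z) (u : Fin 6) (k : Fin (y + 1))
    (l : Fin (z + 1)) :
    IsKleshchev (ptCharge (gammaM Y Z hY hZ u k l)) (pt (gammaM Y Z hY hZ u k l)) ↔
      (let i := Y.orderEmbOfFin hY k
      let j := Z.orderEmbOfFin hZ l
      ![(i < j ∧ l ≠ Fin.last z) ∨ (j < i ∧ k ≠ Fin.last y),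
        j < i ∨ (k ≠ 0 ∧ l ≠ Fin.last z),
        j < i ∨ (k ≠ 0 ∧ l ≠ Fin.last z),
        i < j ∨ (l ≠ 0 ∧ k ≠ Fin.last y),
        i < j ∨ (l ≠ 0 ∧ k ≠ Fin.last y),
        (i < j ∧ k ≠ 0) ∨ (j < i ∧ l ≠ 0)] u) := by
  have h := hasColumns_gammaM (hY := hY) (hZ := hZ) hYZ u k l
  have hc : IsNested (oycol u) (ozcol u) (ycol u) (zcol u) :=
    isNested_of_mem (by simp) (by simp)
  have hcompl := h.hasComplementaryColumns hc (h.right.trans (ozcol_eq_compl u))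
  obtain hlt | hlt := lt_or_gt_of_ne (orderEmbOfFin_ne_of_disjoint (hY := hY) (hZ := hZ) hYZ k l)
  · rw [h.isKleshchev_iff le_rfl hc hlt.le (.inr (ozcol_eq_compl u)) hcompl,
      not_selectable_oy_oz_iff]
    fin_cases u <;> simp [meets_zero_iff hY, meets_two_iff hZ, hlt, hlt.not_gt,
      Fin.pos_iff_ne_zero, Fin.lt_last_iff_ne_last]
  · have hc' : IsNested (ozcol u) (oycol u) (ycol u) (zcol u) :=
      isNested_of_mem (by simp) (by simp)
    have hpair : oycol u = (ozcol u)ᶜ := by rw [ozcol_eq_compl, compl_compl]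
    rw [h.swap.isKleshchev_iff le_rfl hc' hlt.le (.inr hpair) hcompl, not_selectable_oz_oy_iff]
    fin_cases u <;> simp [meets_zero_iff hZ, meets_two_iff hY, hlt, hlt.not_gt,
      Fin.pos_iff_ne_zero, Fin.lt_last_iff_ne_last, and_comm]

lemma iff_exists_of_mem_Duset {u : Fin 6} {M : Fin 3 → Fin e → Bool}
    (hM : M ∈ Duset Y Z hY hZ u) (P : (Fin 3 → Fin e → Bool) → Prop) :
    P M ↔ (∃ k l, M = gammaM Y Z hY hZ u k l ∧ P (gammaM Y Z hY hZ u k l)) ∨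
      (∃ k, M = alphaM Y Z hY u k ∧ P (alphaM Y Z hY u k)) ∨
      ∃ l, M = betaM Y Z hZ u l ∧ P (betaM Y Z hZ u l) := by
  constructor
  · intro h
    obtain ⟨k, rfl⟩ | ⟨l, rfl⟩ | ⟨k, l, rfl⟩ := hM
    · exact .inr (.inl ⟨k, rfl, h⟩)
    · exact .inr (.inr ⟨l, rfl, h⟩)
    · exact .inl ⟨k, l, rfl, h⟩
  · rintro (⟨k, l, rfl, h⟩ | ⟨k, rfl, h⟩ | ⟨l, rfl, h⟩) <;> exact h

end Duset

/-- Classification of the Kleshchev multipartitions in `D^u`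
(`u : Fin 6` corresponds to the paper's `u ∈ {1,…,6}`). -/
theorem Duset_kleshchev_classification (e : ℕ) (he : 2 ≤ e)
    (X Y Z : Finset (Fin e)) {y z : ℕ} (hY : Y.card = y + 1) (hZ : Z.card = z + 1)
    (hXY : Disjoint X Y) (hXZ : Disjoint X Z) (hYZ : Disjoint Y Z)
    (hcover : X ∪ Y ∪ Z = Finset.univ)
    (u : Fin 6) (M : Fin 3 → Fin e → Bool) (hM : M ∈ Duset Y Z hY hZ u) :
    IsKleshchev (PtCharge (fun _ => 0) M) (PtPart (fun _ => 0) M) ↔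
      ((u = 0 ∧ (
        (∃ k l, M = gammaM Y Z hY hZ u k l ∧
          Y.orderEmbOfFin hY k < Z.orderEmbOfFin hZ l ∧ l ≠ Fin.last z) ∨
        (∃ k l, M = gammaM Y Z hY hZ u k l ∧
          Z.orderEmbOfFin hZ l < Y.orderEmbOfFin hY k ∧ k ≠ Fin.last y) ∨
        (∃ k, M = alphaM Y Z hY u k ∧
          Y.orderEmbOfFin hY k < Z.orderEmbOfFin hZ (Fin.last z)) ∨
        (∃ l, M = betaM Y Z hZ u l ∧
          Z.orderEmbOfFin hZ l < Y.orderEmbOfFin hY (Fin.last y)))) ∨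
      ((u = 1 ∨ u = 2) ∧ (
        (∃ k l, M = gammaM Y Z hY hZ u k l ∧
          (Z.orderEmbOfFin hZ l < Y.orderEmbOfFin hY k ∨ (k ≠ 0 ∧ l ≠ Fin.last z))) ∨
        (∃ k, M = alphaM Y Z hY u k ∧ k ≠ 0 ∧
          Y.orderEmbOfFin hY k < Z.orderEmbOfFin hZ (Fin.last z)) ∨
        (∃ l, M = betaM Y Z hZ u l ∧
          Y.orderEmbOfFin hY 0 < Z.orderEmbOfFin hZ l))) ∨
      ((u = 3 ∨ u = 4) ∧ (
        (∃ k l, M = gammaM Y Z hY hZ u k l ∧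
          (Y.orderEmbOfFin hY k < Z.orderEmbOfFin hZ l ∨ (l ≠ 0 ∧ k ≠ Fin.last y))) ∨
        (∃ k, M = alphaM Y Z hY u k ∧ k ≠ Fin.last y ∧
          Z.orderEmbOfFin hZ 0 < Y.orderEmbOfFin hY k) ∨
        (∃ l, M = betaM Y Z hZ u l ∧
          Z.orderEmbOfFin hZ l < Y.orderEmbOfFin hY (Fin.last y)))) ∨
      (u = 5 ∧ (
        (∃ k l, M = gammaM Y Z hY hZ u k l ∧
          Y.orderEmbOfFin hY k < Z.orderEmbOfFin hZ l ∧ k ≠ 0) ∨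
        (∃ k l, M = gammaM Y Z hY hZ u k l ∧
          Z.orderEmbOfFin hZ l < Y.orderEmbOfFin hY k ∧ l ≠ 0) ∨
        (∃ k, M = alphaM Y Z hY u k ∧
          Z.orderEmbOfFin hZ 0 < Y.orderEmbOfFin hY k) ∨
        (∃ l, M = betaM Y Z hZ u l ∧
          Y.orderEmbOfFin hY 0 < Z.orderEmbOfFin hZ l)))) := by
  rw [iff_exists_of_mem_Duset hM fun M => IsKleshchev (ptCharge M) (pt M)]
  simp only [isKleshchev_alphaM_iff (hZ := hZ) hYZ, isKleshchev_betaM_iff (hY := hY) hYZ,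
    isKleshchev_gammaM_iff hYZ]
  fin_cases u <;> simp [and_or_left, exists_or, or_assoc]


end
end AK
end
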